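/- arXiv:1410.3997 — 3 statements merged into one kernel-verified Lean document; each statement's English description precedes it below -/
import Mathlib

section
/- Let f : A → A be an area preserving reversible homeomorphism of the closed annulus A which is isotopic to the identity. If f has an odd-periodic point (some z ∈ A and odd integer k ≥ 1 with f^k(z) = z, not necessarily symmetric nor interior), then the set of interior symmetric odd-periodic points of f (points z in the interior Å with f^k(z) = z for some odd k ≥ 1 and f^ℓ(z) = I(z) for some integer ℓ ≥ 1) is infinite. -/
open MeasureTheory Set

noncomputable section

/-- The reflection `I(x,y) = (-x,y)` on the plane. -/
def refl2 : ℝ × ℝ → ℝ × ℝ := fun p => (-p.1, p.2)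

/-- The Euclidean norm `|z| = √(x² + y²)` on `ℝ²`. -/
def enorm2 (p : ℝ × ℝ) : ℝ := Real.sqrt (p.1 ^ 2 + p.2 ^ 2)

/-- The closed annulus `A = {z : 1 ≤ |z| ≤ 2}`. -/
def annulus : Set (ℝ × ℝ) := {p | 1 ≤ enorm2 p ∧ enorm2 p ≤ 2}

/-- The open annulus `Å = {z : 1 < |z| < 2}`, the interior of `A`. -/
def annulusInt : Set (ℝ × ℝ) := {p | 1 < enorm2 p ∧ enorm2 p < 2}

lemma enorm2_refl2 (p : ℝ × ℝ) : enorm2 (refl2 p) = enorm2 p := by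
  simp [enorm2, refl2, neg_sq]

lemma refl2_mem_annulus {p : ℝ × ℝ} (h : p ∈ annulus) : refl2 p ∈ annulus := by
  simpa [annulus, enorm2_refl2] using h

/-- The restriction `I_A` of the reflection to the closed annulus. -/
def IA : annulus → annulus := fun z => ⟨refl2 z, refl2_mem_annulus z.2⟩

/-- A self-homeomorphism `f` of a set `Ω ⊆ ℝ²` is isotopic to the identity:
there is a continuous `H : [0,1] × Ω → Ω` such that each `H(s,·)` is a
homeomorphism of `Ω`, `H(0,·) = id` and `H(1,·) = f`. -/
def IsotopicToId {Ω : Set (ℝ × ℝ)} (f : Ω ≃ₜ Ω) : Prop :=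
  ∃ H : (Set.Icc (0:ℝ) 1) × Ω → Ω, Continuous H ∧
    (∀ s, ∃ e : Ω ≃ₜ Ω, ∀ z, H (s, z) = e z) ∧
    (∀ z, H (⟨0, by norm_num⟩, z) = z) ∧
    (∀ z, H (⟨1, by norm_num⟩, z) = f z)

/-!
The isotopy lifts `f` to a homeomorphism `F` of the strip `ℝ × [0, 1]` which commutes with the
deck transformations and is conjugate to its inverse by the reflection `R (x, t) = (-x, t)`; it
also determines continuously the angle by which `F` turns the vector joining two distinct points.
A point of the axis `{x = 0}` which `F` maps to another point of the axis is exchanged with it by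
`F`, as the axis is fixed by `R`, and the turning angle then yields a fixed point between the two.
So if `F` has no fixed point on the open axis, the image of the axis lies on one side of it, and
the flux of `F` (its mean displacement) is not zero.

After replacing `f` by an odd iterate, `F` can be chosen with a fixed point.

If the flux is positive, then for large `n` the `n`-th iterate of `F` has flux larger than one
turn, and yet fixes a point. Followed by the translation by `-1` it must have a fixed point on the
open axis, whose rotation number is `1 / n`. Odd `n` give infinitely many symmetric odd-periodic
points. A negative flux is reduced to this case by conjugation with `R`.

If the flux is zero and some odd iterate moves a point by more than two turns, the same comparison
again gives points of rotation number `1 / n` for all large odd `n`.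

In the remaining case, suppose that there are only finitely many symmetric odd-periodic points on
the axis, and pass to an odd iterate that fixes all those of rotation number zero. Winding numbers
around the lowest of these fixed points all have the same sign and are at most `1` in absolute
value, for every odd iterate of `F`. They add up along orbits, whereas by Poincaré recurrence some
orbit meets infinitely often an open set on which the winding number of `F` is not zero: a
contradiction.
-/

open Filter Topology
open Complex (arg)
open Real (pi_pos two_pi_pos)

/-- The universal cover of the closed annulus. The first coordinate is the angle in *turns*,
measured clockwise from the positive `y`-axis so that `IA` lifts to `x ↦ -x`; the second is the
radius minus `1`. -/
abbrev Strip : Type := ℝ × unitInterval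

namespace Strip

/-- The deck transformations of the universal cover. -/
def deck (k : ℤ) (p : Strip) : Strip := (p.1 + k, p.2)

/-- The lift of `IA` that fixes the axis `{0} × [0, 1]`. -/
def reflect (p : Strip) : Strip := (-p.1, p.2)

section Coordinates

variable (k l : ℤ) (p : Strip)

@[simp] lemma deck_fst : (deck k p).1 = p.1 + k := rfl
@[simp] lemma deck_snd : (deck k p).2 = p.2 := rfl
@[simp] lemma reflect_fst : (reflect p).1 = -p.1 := rfl
@[simp] lemma reflect_snd : (reflect p).2 = p.2 := rfl

@[simp] lemma deck_zero : deck 0 p = p := by simp [deck]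

@[simp] lemma deck_deck : deck k (deck l p) = deck (k + l) p := by
  simp [deck, add_assoc, add_comm (k : ℝ)]

@[simp] lemma reflect_reflect : reflect (reflect p) = p := by simp [reflect]

lemma reflect_deck : reflect (deck k p) = deck (-k) (reflect p) := by
  simp [deck, reflect, add_comm]

@[simp] lemma reflect_axis (t : unitInterval) : reflect (0, t) = (0, t) := by simp [reflect]

variable {k l p}

lemma deck_injective_left : Function.Injective fun k : ℤ => deck k p :=
  fun k l h => by simpa [deck] using h

lemma deck_injective : Function.Injective (deck k) :=
  Function.LeftInverse.injective (g := deck (-k)) fun p => by simp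

lemma reflect_injective : Function.Injective reflect :=
  Function.LeftInverse.injective reflect_reflect

@[fun_prop] lemma continuous_deck : Continuous (deck k) := by unfold deck; fun_prop

@[fun_prop] lemma continuous_reflect : Continuous reflect := by unfold reflect; fun_prop

end Coordinates

/-! ### Polar coordinates and the covering map -/

lemma enorm2_polar {r : ℝ} (hr : 0 ≤ r) (θ : Real.Angle) :
    enorm2 (r * θ.sin, r * θ.cos) = r := by
  rw [enorm2, show (r * θ.sin) ^ 2 + (r * θ.cos) ^ 2 = r ^ 2 by
    linear_combination r ^ 2 * θ.cos_sq_add_sin_sq, Real.sqrt_sq hr]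

@[fun_prop] lemma continuous_enorm2 : Continuous enorm2 := by unfold enorm2; fun_prop

/-- The point `(x, y)` as the complex number `y + ix`, whose argument is the angle measured
clockwise from the positive `y`-axis. -/
def planeComplex (z : ℝ × ℝ) : ℂ := ⟨z.2, z.1⟩

lemma norm_planeComplex (z : ℝ × ℝ) : ‖planeComplex z‖ = enorm2 z := by
  rw [enorm2, planeComplex, Complex.norm_def, Complex.normSq_mk, add_comm, sq, sq]

@[fun_prop] lemma continuous_planeComplex : Continuous planeComplex :=
  Complex.equivRealProdCLM.symm.continuous.comp continuous_swap

lemma planeComplex_ne_zero (z : annulus) : planeComplex z ≠ 0 := by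
  rw [← norm_pos_iff, norm_planeComplex]
  exact one_pos.trans_le z.2.1

lemma polar_mem_annulus (θ : Real.Angle) (t : unitInterval) :
    ((1 + t : ℝ) * θ.sin, (1 + t : ℝ) * θ.cos) ∈ annulus := by
  rw [annulus, mem_ofPred_eq, enorm2_polar (by linarith [t.2.1])]
  constructor <;> linarith [t.2.1, t.2.2]

/-- Polar coordinates on the closed annulus, with the conventions of `Strip`. -/
def polar : Real.Angle × unitInterval ≃ₜ annulus where
  toFun p := ⟨_, polar_mem_annulus p.1 p.2⟩
  invFun z := (arg (planeComplex z), ⟨enorm2 z - 1, by linarith [z.2.1], by linarith [z.2.2]⟩)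
  left_inv := by
    rintro ⟨θ, t⟩
    have ht : (0 : ℝ) < 1 + t := by linarith [t.2.1]
    ext
    · convert Complex.arg_mul_cos_add_sin_mul_I_coe_angle ht θ using 3
      apply Complex.ext <;> simp [planeComplex]
    · simp [enorm2_polar ht.le]
  right_inv z := by
    ext <;> simp only [add_sub_cancel, Real.Angle.sin_coe, Real.Angle.cos_coe, ← norm_planeComplex]
    · exact Complex.norm_mul_sin_arg _
    · exact Complex.norm_mul_cos_arg _
  continuous_toFun := by
    have := Real.Angle.continuous_sin
    have := Real.Angle.continuous_cos
    fun_prop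
  continuous_invFun := by
    refine .prodMk (continuous_iff_continuousAt.2 fun z => ?_) (by fun_prop)
    exact (Complex.continuousAt_arg_coe_angle (planeComplex_ne_zero z)).comp
      (f := fun z : annulus => planeComplex z) (by fun_prop)

/-- The universal covering map of the closed annulus. -/
def cover (p : Strip) : annulus := polar (((2 * Real.pi * p.1 : ℝ) : Real.Angle), p.2)

lemma cover_eq_cover_iff {p q : Strip} : cover p = cover q ↔ ∃ k : ℤ, p = deck k q := by
  rw [cover, cover, polar.injective.eq_iff, Prod.mk_inj, Real.Angle.angle_eq_iff_two_pi_dvd_sub]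
  constructor
  · rintro ⟨⟨k, hk⟩, h⟩
    rw [← mul_sub] at hk
    refine ⟨k, Prod.ext ?_ h⟩
    rw [deck_fst, ← mul_left_cancel₀ two_pi_pos.ne' hk]
    ring
  · rintro ⟨k, rfl⟩
    exact ⟨⟨k, by simp; ring⟩, rfl⟩

@[simp] lemma cover_deck (k : ℤ) (p : Strip) : cover (deck k p) = cover p :=
  cover_eq_cover_iff.2 ⟨k, rfl⟩

lemma cover_reflect (p : Strip) : cover (reflect p) = IA (cover p) := by
  ext <;> simp [cover, polar, IA, refl2]

lemma IA_IA (z : annulus) : IA (IA z) = z := by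
  ext <;> simp [IA, refl2]

lemma cover_mem_annulusInt {p : Strip} (hp : p.2 ∈ Ioo 0 1) : (cover p : ℝ × ℝ) ∈ annulusInt := by
  have h0 : (0 : ℝ) < p.2 := hp.1
  have h1 : (p.2 : ℝ) < 1 := hp.2
  change 1 < enorm2 (_ * _, _ * _) ∧ enorm2 (_ * _, _ * _) < 2
  rw [enorm2_polar (by linarith)]
  constructor <;> linarith

@[fun_prop] lemma continuous_cover : Continuous cover := by
  have := Real.Angle.continuous_coe
  unfold cover
  fun_prop

lemma isOpenMap_cover : IsOpenMap cover :=
  polar.isOpenMap.comp <| IsOpenMap.prodMap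
    (QuotientAddGroup.isOpenMap_coe.comp (Homeomorph.mulLeft₀ _ two_pi_pos.ne').isOpenMap) .id

/-- A measurable section of the covering map. -/
def lift (z : annulus) : Strip := (arg (planeComplex z) / (2 * Real.pi), (polar.symm z).2)

@[simp] lemma cover_lift (z : annulus) : cover (lift z) = z := by
  rw [cover, lift, mul_div_cancel₀ _ two_pi_pos.ne']
  exact polar.apply_symm_apply z

lemma measurable_lift : Measurable lift := by
  have : Measurable fun z : annulus => (polar.symm z).2 :=
    (continuous_snd.comp polar.symm.continuous).measurable
  unfold lift
  fun_prop

instance : CompactSpace annulus :=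
  have : CompactSpace Real.Angle :=
    have := Fact.mk two_pi_pos
    inferInstanceAs (CompactSpace (AddCircle (2 * Real.pi)))
  polar.compactSpace

/-- Lebesgue measure on the closed annulus. -/
abbrev area : Measure annulus := (volume : Measure (ℝ × ℝ)).comap Subtype.val

lemma area_apply (s : Set annulus) : area s = volume (Subtype.val '' s) :=
  comap_subtype_coe_apply
    (isCompact_iff_compactSpace.2 inferInstance : IsCompact annulus).measurableSet _ s

instance : IsFiniteMeasure area where
  measure_univ_lt_top := by
    rw [area_apply, image_univ, Subtype.range_coe]
    exact (isCompact_iff_compactSpace.2 inferInstance).measure_lt_top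

lemma exists_cover_mem_annulusInt {U : Set annulus} (hU : IsOpen U) (hne : U.Nonempty) :
    ∃ z ∈ U, (z : ℝ × ℝ) ∈ annulusInt := by
  have hdense : Dense (univ ×ˢ Ioo 0 1 : Set Strip) := by
    refine dense_univ.prod (dense_iff_closure_eq.2 ?_)
    rw [closure_Ioo zero_ne_one]
    exact Icc_bot_top
  obtain ⟨z, hz⟩ := hne
  obtain ⟨p, hpU, hp⟩ := hdense.inter_open_nonempty _ (hU.preimage continuous_cover)
    ⟨lift z, by simpa using hz⟩
  exact ⟨cover p, hpU, cover_mem_annulusInt hp.2⟩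

instance : area.IsOpenPosMeasure where
  open_pos U hU hne := by
    obtain ⟨z, hzU, hz⟩ := exists_cover_mem_annulusInt hU hne
    obtain ⟨V, hV, rfl⟩ := isOpen_induced_iff.1 hU
    have hopen : IsOpen (V ∩ annulusInt) := hV.inter <|
      (isOpen_lt continuous_const continuous_enorm2).inter
        (isOpen_lt continuous_enorm2 continuous_const)
    rw [area_apply, Subtype.image_preimage_coe]
    refine ((hopen.measure_pos volume ⟨z, hzU, hz⟩).trans_le (measure_mono ?_)).ne'
    exact fun w hw => ⟨⟨hw.2.1.le, hw.2.2.le⟩, hw.1⟩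

lemma area_axis : area {z : annulus | (z : ℝ × ℝ).1 = 0} = 0 := by
  rw [area_apply]
  refine measure_mono_null (t := {0} ×ˢ univ) (by rintro _ ⟨z, hz, rfl⟩; simpa using hz) ?_
  rw [Measure.volume_eq_prod, Measure.prod_prod, Real.volume_singleton, zero_mul]

/-! ### Turning angles -/

/-- The vector from `q` to `p` as a complex number. -/
def offset (p q : Strip) : ℂ := ⟨p.1 - q.1, p.2 - q.2⟩

/-- The direction from `q` to `p`. -/
def bearing (p q : Strip) : ℝ := arg (offset p q)

section Bearing

variable {p q : Strip}

lemma offset_ne_zero (h : p ≠ q) : offset p q ≠ 0 := by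
  contrapose! h
  simpa [offset, Complex.ext_iff, sub_eq_zero, Prod.ext_iff, Subtype.ext_iff] using h

lemma offset_swap (p q : Strip) : offset q p = -offset p q := by
  apply Complex.ext <;> simp [offset]

lemma offset_deck (k : ℤ) (p q : Strip) : offset (deck k p) (deck k q) = offset p q := by
  simp [offset]

lemma offset_reflect (p q : Strip) :
    offset (reflect p) (reflect q) = (starRingEnd ℂ) (offset q p) := by
  apply Complex.ext <;> simp [offset]; ring

@[fun_prop] lemma continuous_offset : Continuous fun p : Strip × Strip => offset p.1 p.2 :=
  Complex.equivRealProdCLM.symm.continuous.comp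
    (f := fun p : Strip × Strip => (p.1.1 - p.2.1, (p.1.2 - p.2.2 : ℝ))) (by fun_prop)

lemma bearing_deck (k : ℤ) (p q : Strip) : bearing (deck k p) (deck k q) = bearing p q := by
  rw [bearing, offset_deck, bearing]

lemma coe_bearing_swap (h : p ≠ q) :
    (bearing q p : Real.Angle) = bearing p q + (Real.pi : Real.Angle) := by
  rw [bearing, offset_swap, Complex.arg_neg_coe_angle (offset_ne_zero h), bearing]

lemma coe_bearing_reflect (p q : Strip) :
    (bearing (reflect p) (reflect q) : Real.Angle) = -(bearing q p : Real.Angle) := by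
  rw [bearing, offset_reflect, Complex.arg_conj_coe_angle, bearing]

lemma abs_bearing_lt (h : q.1 < p.1) : |bearing p q| < Real.pi / 2 :=
  Complex.abs_arg_lt_pi_div_two_iff.2 <| .inl <| sub_pos.2 h

lemma bearing_reflect_of_lt (h : q.1 < p.1) :
    bearing (reflect q) (reflect p) = -bearing p q := by
  have := (abs_lt.1 (abs_bearing_lt h)).2
  rw [bearing, offset_reflect, Complex.arg_conj, if_neg (by rw [← bearing]; linarith [pi_pos]),
    bearing]

lemma continuousOn_coe_bearing :
    ContinuousOn (fun p : Strip × Strip => (bearing p.1 p.2 : Real.Angle)) (diagonal Strip)ᶜ :=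
  fun _ hp => ((Complex.continuousAt_arg_coe_angle (offset_ne_zero hp)).comp
    (f := fun p : Strip × Strip => offset p.1 p.2)
    continuous_offset.continuousAt).continuousWithinAt

end Bearing

/-- `Λ` is a continuous determination of the angle by which `F` turns the vector between two
distinct points. The last field normalises it: for horizontally distant points, whose directions
lie in `(-π/2, π/2)`, it is the difference of the principal arguments. -/
structure IsTurning (F : Strip → Strip) (Λ : Strip × Strip → ℝ) : Prop where
  continuousOn : ContinuousOn Λ (diagonal Strip)ᶜ
  symm : ∀ p q, Λ (q, p) = Λ (p, q)
  coe_bearing : ∀ p q, p ≠ q →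
    (bearing (F p) (F q) : Real.Angle) = bearing p q + (Λ (p, q) : Real.Angle)
  bearing_of_far : ∃ C, ∀ p q : Strip, C < p.1 - q.1 → bearing (F p) (F q) = bearing p q + Λ (p, q)

/-- The conjugate of `F` by the reflection. -/
def mirror (F : Strip → Strip) : Strip → Strip := reflect ∘ F ∘ reflect

/-- The reflection conjugates `F` to its inverse. -/
def IsReversible (F : Strip → Strip) : Prop := ∀ p, F (mirror F p) = p

section Mirror

variable {F : Strip → Strip}

@[simp] lemma mirror_apply (F : Strip → Strip) (p : Strip) :
    mirror F p = reflect (F (reflect p)) := rfl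

@[simp] lemma mirror_mirror (F : Strip → Strip) : mirror (mirror F) = F := by
  ext <;> simp

lemma mirror_iterate (F : Strip → Strip) (n : ℕ) : (mirror F)^[n] = mirror F^[n] := by
  have h : Function.Semiconj reflect F (mirror F) := fun p => by simp
  ext1 p
  simpa using ((h.iterate_right n) (reflect p)).symm

lemma IsReversible.mirror_apply_apply (h : IsReversible F) (p : Strip) : mirror F (F p) = p := by
  have := h (reflect p)
  simp only [mirror_apply, reflect_reflect] at this
  simp [this]

protected lemma IsReversible.mirror (h : IsReversible F) : IsReversible (mirror F) := by
  rw [IsReversible, mirror_mirror]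
  exact h.mirror_apply_apply

lemma IsReversible.injective (h : IsReversible F) : Function.Injective F :=
  Function.LeftInverse.injective h.mirror_apply_apply

end Mirror

namespace IsTurning

variable {F G : Strip → Strip} {Λ M : Strip × Strip → ℝ}

protected lemma id : IsTurning id 0 where
  continuousOn := continuousOn_const
  symm _ _ := rfl
  coe_bearing p q _ := by simp
  bearing_of_far := ⟨0, by simp⟩

protected lemma comp (hF : IsTurning F Λ) (hG : IsTurning G M) (hGc : Continuous G)
    (hGi : Function.Injective G) (hGD : ∃ D, ∀ p, |(G p).1 - p.1| ≤ D) :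
    IsTurning (F ∘ G) (M + Λ ∘ Prod.map G G) where
  continuousOn := hG.continuousOn.add <|
    hF.continuousOn.comp (by fun_prop) fun _ hp => hGi.ne hp
  symm p q := by simp [hF.symm (G p), hG.symm p]
  coe_bearing p q hpq := by
    simp [hF.coe_bearing _ _ (hGi.ne hpq), hG.coe_bearing _ _ hpq, add_assoc]
  bearing_of_far := by
    obtain ⟨⟨C, hC⟩, ⟨C', hC'⟩, D, hD⟩ := hF.bearing_of_far, hG.bearing_of_far, hGD
    refine ⟨max C' (C + 2 * D), fun p q hpq => ?_⟩
    obtain ⟨h1, h2⟩ := max_lt_iff.1 hpq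
    have hp := abs_le.1 (hD p)
    have hq := abs_le.1 (hD q)
    simp [hC (G p) (G q) (by linarith), hC' p q h1, add_assoc]

protected lemma iterate (hF : IsTurning F Λ) (hFc : Continuous F) (hFi : Function.Injective F)
    (hFD : ∃ D, ∀ p, |(F p).1 - p.1| ≤ D) (n : ℕ) :
    IsTurning F^[n] (birkhoffSum (Prod.map F F) Λ n) := by
  induction n with
  | zero => simpa using .id
  | succ n ih =>
    have h : birkhoffSum (Prod.map F F) Λ (n + 1) =
        Λ + birkhoffSum (Prod.map F F) Λ n ∘ Prod.map F F :=
      funext (birkhoffSum_succ' _ _ n)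
    rw [Function.iterate_succ, h]
    exact ih.comp hF hFc hFi hFD

lemma deck_comp (hF : IsTurning F Λ) (k : ℤ) : IsTurning (deck k ∘ F) Λ where
  __ := hF
  coe_bearing := by simpa [bearing_deck] using hF.coe_bearing
  bearing_of_far := by simpa [bearing_deck] using hF.bearing_of_far

protected lemma mirror (hF : IsTurning F Λ) (hFD : ∃ D, ∀ p, |(F p).1 - p.1| ≤ D) :
    IsTurning (mirror F) (-Λ ∘ Prod.map reflect reflect) where
  continuousOn := (hF.continuousOn.comp (by fun_prop) fun _ hp => reflect_injective.ne hp).neg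
  symm p q := by simp [hF.symm (reflect p)]
  coe_bearing p q hpq := by
    have h := hF.coe_bearing _ _ (reflect_injective.ne hpq.symm)
    rw [coe_bearing_reflect] at h
    simp only [mirror_apply, Pi.neg_apply, Function.comp_apply, Prod.map, coe_bearing_reflect, h,
      hF.symm (reflect p), Real.Angle.coe_neg]
    abel
  bearing_of_far := by
    obtain ⟨⟨C, hC⟩, D, hD⟩ := hF.bearing_of_far, hFD
    refine ⟨max C (max (2 * D) 0), fun p q hpq => ?_⟩
    obtain ⟨hpqC, hpqD, hpq⟩ : C < p.1 - q.1 ∧ 2 * D < p.1 - q.1 ∧ 0 < p.1 - q.1 := by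
      simpa only [max_lt_iff] using hpq
    have hp := abs_le.1 (hD (reflect p))
    have hq := abs_le.1 (hD (reflect q))
    have h := hC (reflect q) (reflect p) (by simp; linarith)
    rw [bearing_reflect_of_lt (by linarith)] at h
    simp only [reflect_fst] at hp hq
    simp only [mirror_apply, Pi.neg_apply, Function.comp_apply, Prod.map]
    rw [bearing_reflect_of_lt (by linarith), h, hF.symm (reflect q)]
    ring

end IsTurning

/-! ### Fixed points on the axis -/

lemma eqOn_of_two_nsmul_eq_zero {α : Type*} [TopologicalSpace α] {s : Set α} (hs : IsPreconnected s)
    {g : α → Real.Angle} (hg : ContinuousOn g s) (h2 : ∀ u ∈ s, (2 : ℕ) • g u = 0) {a b : α}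
    (ha : a ∈ s) (hb : b ∈ s) : g a = g b :=
  hs.constant_of_mapsTo (T := {0, (Real.pi : Real.Angle)}) (toFinite _).isDiscrete hg
    (fun u hu => Real.Angle.two_nsmul_eq_zero_iff.1 (h2 u hu)) ha hb

lemma two_nsmul_coe_bearing_axis {F : Strip → Strip} {Λ : Strip × Strip → ℝ}
    (hrev : IsReversible F) (hΛ : IsTurning F Λ) {u : unitInterval} (hu : F (0, u) ≠ (0, u)) :
    (2 : ℕ) • (bearing (F (0, u)) (0, u) : Real.Angle) = Λ ((0, u), reflect (F (0, u))) := by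
  have hne : ((0, u) : Strip) ≠ reflect (F (0, u)) := fun h =>
    hu (by simpa using congrArg reflect h.symm)
  have hpre : F (reflect (F (0, u))) = (0, u) := by simpa using hrev (0, u)
  have hturn := hΛ.coe_bearing _ _ hne
  have hrefl := coe_bearing_reflect (0, u) (F (0, u))
  rw [hpre] at hturn
  rw [reflect_axis] at hrefl
  rw [hrefl] at hturn
  rw [two_nsmul]
  nth_rewrite 1 [hturn]
  abel

/-- The direction from `(0, u)` to its image is determined up to `π` by half of the turning angle
between `(0, u)` and its preimage, the reflection of its image. Without fixed points the difference
of the two would be constant, but it takes values differing by `π` at `a` and at `b`. -/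
lemma exists_fixed_mem_uIoo {F : Strip → Strip} {Λ : Strip × Strip → ℝ} (hFc : Continuous F)
    (hrev : IsReversible F) (hΛ : IsTurning F Λ) {a b : unitInterval} (hab : F (0, a) = (0, b))
    (hne : a ≠ b) : ∃ c ∈ uIoo a b, F (0, c) = (0, c) := by
  have hba : F (0, b) = (0, a) := by simpa [hab] using hrev (0, a)
  by_contra! hno
  have hfix : ∀ u ∈ uIcc a b, F (0, u) ≠ (0, u) := by
    intro u hu
    rcases eq_or_ne u a with rfl | hua
    · simpa [hab] using hne.symm
    rcases eq_or_ne u b with rfl | hub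
    · simpa [hba] using hne
    · exact hno u ⟨hu.1.lt_of_ne (by grind), hu.2.lt_of_ne (by grind)⟩
  have hpair : MapsTo (fun u : unitInterval => (((0, u) : Strip), reflect (F (0, u))))
      (uIcc a b) (diagonal Strip)ᶜ := by
    intro u hu h
    exact hfix u hu (by simpa using congrArg reflect (mem_diagonal_iff.1 h).symm)
  set L : unitInterval → ℝ := fun u => Λ ((0, u), reflect (F (0, u)))
  set θ : unitInterval → Real.Angle := fun u => bearing (F (0, u)) (0, u)
  have hLc : ContinuousOn (fun u => ((L u / 2 : ℝ) : Real.Angle)) (uIcc a b) :=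
    Real.Angle.continuous_coe.comp_continuousOn
      ((hΛ.continuousOn.comp (by fun_prop) hpair).div_const 2)
  have hθc : ContinuousOn θ (uIcc a b) :=
    continuousOn_coe_bearing.comp (f := fun u : unitInterval => (F (0, u), ((0, u) : Strip)))
      (by fun_prop) hfix
  have htwice : ∀ u ∈ uIcc a b, (2 : ℕ) • (θ u - (L u / 2 : ℝ)) = 0 := by
    intro u hu
    rw [nsmul_sub, two_nsmul_coe_bearing_axis hrev hΛ (hfix u hu), two_nsmul,
      ← Real.Angle.coe_add, add_halves, sub_self]
  have heq := eqOn_of_two_nsmul_eq_zero isPreconnected_uIcc (hθc.sub hLc) htwice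
    left_mem_uIcc right_mem_uIcc
  have hswap : θ b = θ a + (Real.pi : Real.Angle) := by
    simpa [θ, hab, hba] using coe_bearing_swap (p := (0, b)) (q := (0, a)) (by simpa using hne.symm)
  simp [L, hswap, hab, hba, hΛ.symm (0, a), Real.Angle.pi_ne_zero] at heq

/-! ### Lifts and their flux -/

/-- `F` is a lift of `f` to the universal cover which commutes with the deck transformations, that
is, a lift of a map homotopic to the identity. -/
structure IsLift (f : annulus → annulus) (F : Strip → Strip) : Prop where
  continuous : Continuous F
  semiconj : Function.Semiconj cover F f
  commute : ∀ k, Function.Commute F (deck k)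

/-- The index of the fundamental domain containing a point of the strip. -/
def sheet (p : Strip) : ℤ := ⌊p.1⌋

/-- The number of fundamental domains by which a lift displaces a point of the annulus. -/
def disp (F : Strip → Strip) (z : annulus) : ℤ := sheet (F (lift z)) - sheet (lift z)

/-- The total displacement of a lift, `area.real univ` times its mean rotation number. -/
def flux (F : Strip → Strip) : ℝ := ∫ z, (disp F z : ℝ) ∂area

@[simp] lemma sheet_deck (k : ℤ) (p : Strip) : sheet (deck k p) = sheet p + k := by simp [sheet]

lemma measurable_sheet : Measurable sheet := measurable_fst.floor

namespace IsLift

variable {f g : annulus → annulus} {F G : Strip → Strip}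

protected lemma comp (hF : IsLift f F) (hG : IsLift g G) : IsLift (f ∘ g) (F ∘ G) where
  continuous := hF.continuous.comp hG.continuous
  semiconj p := by simp [hF.semiconj.eq, hG.semiconj.eq]
  commute k := (hF.commute k).comp_left (hG.commute k)

protected lemma iterate (hF : IsLift f F) (n : ℕ) : IsLift f^[n] F^[n] where
  continuous := hF.continuous.iterate n
  semiconj := hF.semiconj.iterate_right n
  commute k := (hF.commute k).iterate_left n

lemma deck_comp (hF : IsLift f F) (k : ℤ) : IsLift f (deck k ∘ F) where
  continuous := continuous_deck.comp hF.continuous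
  semiconj p := by simpa using hF.semiconj p
  commute l p := by simp [(hF.commute l).eq p, add_comm]

protected lemma mirror (hF : IsLift f F) : IsLift (IA ∘ f ∘ IA) (mirror F) where
  continuous := continuous_reflect.comp (hF.continuous.comp continuous_reflect)
  semiconj p := by simp [cover_reflect, hF.semiconj.eq]
  commute k p := by simp [reflect_deck, (hF.commute _).eq]

lemma exists_displacement_bound (hF : IsLift f F) : ∃ D, ∀ p, |(F p).1 - p.1| ≤ D := by
  have hFc := hF.continuous
  obtain ⟨D, hD⟩ := ((isCompact_Icc.prod isCompact_univ).image_of_continuousOn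
    (s := Icc (0 : ℝ) 1 ×ˢ (univ : Set unitInterval)) (f := fun p => |(F p).1 - p.1|)
    (by fun_prop)).bddAbove
  refine ⟨D, fun p => ?_⟩
  have h := hD ⟨deck (-sheet p) p, ⟨⟨?_, ?_⟩, mem_univ _⟩, rfl⟩
  · simpa [(hF.commute _).eq] using h
  · simpa [sheet] using Int.floor_le p.1
  · simpa [sheet, ← sub_eq_add_neg] using (Int.fract_lt_one p.1).le

lemma eq_deck (hF : IsLift id F) : ∃ m : ℤ, ∀ p, F p = deck m p := by
  have hm (p : Strip) : ∃ m : ℤ, F p = deck m p := cover_eq_cover_iff.1 (hF.semiconj p)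
  choose m hm using hm
  have hcont : Continuous fun p => ((m p : ℤ) : ℝ) := by
    have := hF.continuous
    refine (show Continuous fun p => (F p).1 - p.1 by fun_prop).congr fun p => ?_
    rw [hm p, deck_fst, add_sub_cancel_left]
  refine ⟨m 0, fun p => ?_⟩
  rw [hm p, PreconnectedSpace.constant inferInstance
    (Int.isClosedEmbedding_coe_real.isInducing.continuous_iff.2 hcont) (x := p) (y := 0)]

lemma disp_cover (hF : IsLift f F) (p : Strip) : disp F (cover p) = sheet (F p) - sheet p := by
  obtain ⟨k, hk⟩ := cover_eq_cover_iff.1 (cover_lift (cover p))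
  simp [disp, hk, (hF.commute k).eq]

lemma integrable_disp (hF : IsLift f F) : Integrable (fun z => (disp F z : ℝ)) area := by
  have hm : Measurable (disp F) :=
    (measurable_sheet.comp (hF.continuous.measurable.comp measurable_lift)).sub
      (measurable_sheet.comp measurable_lift)
  obtain ⟨D, hD⟩ := hF.exists_displacement_bound
  refine .of_bound (C := D + 1) (measurable_from_top.comp hm).aestronglyMeasurable
    (.of_forall fun z => ?_)
  have h := abs_le.1 (hD (lift z))
  rw [disp, Int.cast_sub, Real.norm_eq_abs, abs_le, sheet, sheet]
  constructor <;> linarith [Int.floor_le (F (lift z)).1, Int.lt_floor_add_one (F (lift z)).1,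
    Int.floor_le (lift z).1, Int.lt_floor_add_one (lift z).1]

lemma flux_comp (hF : IsLift f F) (hG : IsLift g G) (hg : MeasurePreserving g area area) :
    flux (F ∘ G) = flux F + flux G := by
  have hdisp (z : annulus) : (disp (F ∘ G) z : ℝ) = disp F (g z) + disp G z := by
    have hgz : g z = cover (G (lift z)) := by rw [hG.semiconj.eq, cover_lift]
    rw [hgz, hF.disp_cover]
    simp [disp]
  have hint : ∫ z, (disp F (g z) : ℝ) ∂area = flux F := by
    rw [flux, ← integral_map hg.aemeasurable (f := fun z => (disp F z : ℝ)), hg.map_eq]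
    rw [hg.map_eq]
    exact hF.integrable_disp.aestronglyMeasurable
  have hFg : Integrable (fun z => (disp F (g z) : ℝ)) area :=
    hg.integrable_comp_of_integrable hF.integrable_disp
  simp_rw [flux, hdisp]
  rw [integral_add hFg hG.integrable_disp, hint, flux]

lemma flux_iterate (hF : IsLift f F) (hf : MeasurePreserving f area area) (n : ℕ) :
    flux F^[n] = n * flux F := by
  induction n with
  | zero => simp [flux, disp]
  | succ n ih =>
    rw [Function.iterate_succ, (hF.iterate n).flux_comp hF hf, ih]
    push_cast
    ring

lemma flux_deck_comp (hF : IsLift f F) (k : ℤ) :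
    flux (deck k ∘ F) = k * area.real univ + flux F := by
  have h (z : annulus) : (disp (deck k ∘ F) z : ℝ) = k + disp F z := by
    simp [disp]
    ring
  simp_rw [flux, h]
  rw [integral_add (integrable_const _) hF.integrable_disp, integral_const, smul_eq_mul, mul_comm]

lemma flux_mirror (hF : IsLift f F) (hrev : IsReversible F) (hf : MeasurePreserving f area area) :
    flux (mirror F) = -flux F := by
  have h := hF.mirror.flux_comp hF hf
  have hid : mirror F ∘ F = id := funext hrev.mirror_apply_apply
  have h0 : flux id = 0 := by simp [flux, disp]
  rw [hid, h0] at h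
  linarith

lemma measurePreserving_mirror (hF : IsLift f F) (hrev : IsReversible F)
    (hf : MeasurePreserving f area area) : MeasurePreserving (IA ∘ f ∘ IA) area area := by
  have hcont : Continuous (IA ∘ f ∘ IA) :=
    isOpenMap_cover.isQuotientMap continuous_cover (fun z => ⟨lift z, cover_lift z⟩)
      |>.continuous_iff.2 <| (continuous_cover.comp hF.mirror.continuous).congr hF.mirror.semiconj
  have hinv : (IA ∘ f ∘ IA) ∘ f = id := by
    ext1 z
    rw [← cover_lift z, Function.comp_apply, ← hF.semiconj.eq, ← hF.mirror.semiconj.eq,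
      hrev.mirror_apply_apply, id_eq]
  refine ⟨hcont.measurable, ?_⟩
  conv_lhs => rw [← hf.map_eq]
  rw [Measure.map_map hcont.measurable hf.measurable, hinv, Measure.map_id]

end IsLift

/-! ### Lifts without interior fixed points on the axis -/

lemma fst_neg_of_fst_ne_zero {G : Strip → Strip} (hGc : Continuous G)
    (hGD : ∃ D, ∀ p, |(G p).1 - p.1| ≤ D) (hG : ∀ p : Strip, p.1 < 0 → (G p).1 ≠ 0) {p : Strip}
    (hp : p.1 < 0) : (G p).1 < 0 := by
  have hpre : IsPreconnected (Iio 0 ×ˢ univ : Set Strip) :=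
    isPreconnected_Iio.prod isPreconnected_univ
  obtain ⟨D, hD⟩ := hGD
  rcases hpre.subset_or_subset (u := {p | (G p).1 < 0}) (v := {p | 0 < (G p).1})
    (isOpen_lt (by fun_prop) (by fun_prop)) (isOpen_lt (by fun_prop) (by fun_prop))
    (disjoint_left.2 fun p (h : (G p).1 < 0) h' => lt_asymm h h')
    (fun p hp => lt_or_gt_of_ne (hG p hp.1)) with h | h
  · exact h ⟨hp, mem_univ _⟩
  · have hD0 : 0 ≤ D := (abs_nonneg _).trans (hD p)
    have hpos : 0 < (G (-(D + 1), p.2)).1 := h ⟨by simp; linarith, mem_univ _⟩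
    have := (abs_le.1 (hD (-(D + 1), p.2))).2
    simp only at this
    linarith

namespace IsLift

variable {f : annulus → annulus} {F : Strip → Strip}

lemma sheet_apply_le (hF : IsLift f F) (h : ∀ p : Strip, p.1 < 0 → (F p).1 < 0) (p : Strip) :
    sheet (F p) ≤ sheet p := by
  have hp := h (deck (-(sheet p + 1)) p) (by
    have := Int.lt_floor_add_one p.1
    simp [sheet]
    linarith)
  rw [(hF.commute _).eq, deck_fst] at hp
  rw [← Int.lt_add_one_iff, sheet, Int.floor_lt]
  push_cast at hp ⊢
  linarith

lemma sheet_le_of_axis_nonneg (hF : IsLift f F) (hrev : IsReversible F)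
    (h0 : ∀ t, 0 ≤ (F (0, t)).1) (p : Strip) : sheet p ≤ sheet (F p) := by
  have hne : ∀ p : Strip, p.1 < 0 → (mirror F p).1 ≠ 0 := by
    intro p hp h
    have h0p := h0 (mirror F p).2
    rw [show (0, (mirror F p).2) = mirror F p from Prod.ext h.symm rfl, hrev p] at h0p
    exact hp.not_ge h0p
  have := hF.mirror.sheet_apply_le (fun p => fst_neg_of_fst_ne_zero hF.mirror.continuous
    hF.mirror.exists_displacement_bound hne) (F p)
  rwa [hrev.mirror_apply_apply] at this

lemma flux_pos_of_sheet_le (hF : IsLift f F) (hle : ∀ p, sheet p ≤ sheet (F p)) {t : unitInterval}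
    (ht : 0 < (F (0, t)).1) : 0 < flux F := by
  have hFc := hF.continuous
  have hnn : 0 ≤ fun z => (disp F z : ℝ) := fun z => by
    simpa [disp] using hle (lift z)
  obtain ⟨x, hx, hx0⟩ : ∃ x : ℝ, 0 < (F (x, t)).1 ∧ x < 0 := by
    have hopen : IsOpen {x : ℝ | 0 < (F (x, t)).1} := isOpen_lt (by fun_prop) (by fun_prop)
    exact mem_closure_iff.1 (show (0 : ℝ) ∈ closure (Iio 0) by simp) _ hopen ht
  have hU : IsOpen ({p | p.1 < 0} ∩ {p | 0 < (F p).1}) :=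
    (isOpen_lt (by fun_prop) (by fun_prop)).inter (isOpen_lt (by fun_prop) (by fun_prop))
  rw [flux, integral_pos_iff_support_of_nonneg hnn hF.integrable_disp]
  refine ((isOpenMap_cover _ hU).measure_pos area ⟨_, (x, t), ⟨hx0, hx⟩, rfl⟩).trans_le
    (measure_mono ?_)
  rintro _ ⟨p, ⟨hp, hFp⟩, rfl⟩
  have h1 : sheet p < 0 := Int.floor_lt.2 (by simpa using hp)
  have h2 : 0 ≤ sheet (F p) := Int.le_floor.2 (by simpa using hFp.le)
  rw [Function.mem_support, hF.disp_cover]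
  exact_mod_cast (by lia : sheet (F p) - sheet p ≠ 0)

lemma sheet_le_and_flux_pos (hF : IsLift f F) (hrev : IsReversible F)
    (h : ∀ t ∈ Ioo (0 : unitInterval) 1, 0 < (F (0, t)).1) :
    (∀ p, sheet p ≤ sheet (F p)) ∧ 0 < flux F := by
  have hFc := hF.continuous
  have hclosure : closure (Ioo (0 : unitInterval) 1) ⊆ {t | 0 ≤ (F (0, t)).1} :=
    closure_minimal (fun t ht => (h t ht).le) (isClosed_le (by fun_prop) (by fun_prop))
  rw [closure_Ioo zero_ne_one] at hclosure
  have hle := hF.sheet_le_of_axis_nonneg hrev fun t => hclosure ⟨t.2.1, t.2.2⟩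
  obtain ⟨t, ht⟩ := nonempty_Ioo.2 (zero_lt_one' unitInterval)
  exact ⟨hle, hF.flux_pos_of_sheet_le hle (h t ht)⟩

end IsLift

/-- `F` is a reversible lift of the area preserving map `f`, with a turning angle. -/
structure IsRevLift (f : annulus → annulus) (F : Strip → Strip) : Prop extends IsLift f F where
  measurePreserving : MeasurePreserving f area area
  isReversible : IsReversible F
  exists_isTurning : ∃ Λ, IsTurning F Λ

namespace IsRevLift

variable {f : annulus → annulus} {F : Strip → Strip}

lemma deck_comp (hF : IsRevLift f F) (k : ℤ) : IsRevLift f (deck k ∘ F) where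
  toIsLift := hF.toIsLift.deck_comp k
  measurePreserving := hF.measurePreserving
  isReversible p := by
    simpa [reflect_deck, (hF.commute _).eq] using hF.isReversible p
  exists_isTurning := hF.exists_isTurning.imp fun _ hΛ => hΛ.deck_comp k

protected lemma mirror (hF : IsRevLift f F) : IsRevLift (IA ∘ f ∘ IA) (mirror F) where
  toIsLift := hF.toIsLift.mirror
  measurePreserving := hF.measurePreserving_mirror hF.isReversible hF.measurePreserving
  isReversible := hF.isReversible.mirror
  exists_isTurning :=
    hF.exists_isTurning.elim fun _ hΛ => ⟨_, hΛ.mirror hF.exists_displacement_bound⟩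

protected lemma iterate (hF : IsRevLift f F) (n : ℕ) : IsRevLift f^[n] F^[n] where
  toIsLift := hF.toIsLift.iterate n
  measurePreserving := hF.measurePreserving.iterate n
  isReversible p := by
    rw [← mirror_iterate]
    exact Function.LeftInverse.iterate hF.isReversible n p
  exists_isTurning := hF.exists_isTurning.elim fun _ hΛ =>
    ⟨_, hΛ.iterate hF.continuous hF.isReversible.injective hF.exists_displacement_bound n⟩

lemma axis_fst_ne_zero (hF : IsRevLift f F) (hno : ∀ t ∈ Ioo 0 1, F (0, t) ≠ (0, t))
    {t : unitInterval} (ht : t ∈ Ioo 0 1) : (F (0, t)).1 ≠ 0 := by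
  intro h
  obtain ⟨Λ, hΛ⟩ := hF.exists_isTurning
  have hb : F (0, t) = (0, (F (0, t)).2) := Prod.ext h rfl
  obtain ⟨c, hc, hfix⟩ := exists_fixed_mem_uIoo hF.continuous hF.isReversible hΛ hb
    fun h => hno t ht (hb.trans (by rw [← h]))
  exact hno c ⟨(le_inf ht.1.le bot_le).trans_lt hc.1, hc.2.trans_le (sup_le ht.2.le le_top)⟩ hfix

lemma sheet_le_and_flux_pos_or (hF : IsRevLift f F) (hno : ∀ t ∈ Ioo 0 1, F (0, t) ≠ (0, t)) :
    ((∀ p, sheet p ≤ sheet (F p)) ∧ 0 < flux F) ∨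
      (∀ p, sheet (F p) ≤ sheet p) ∧ flux F < 0 := by
  have hFc := hF.continuous
  rcases isPreconnected_Ioo.subset_or_subset (s := Ioo (0 : unitInterval) 1)
    (u := {t | 0 < (F (0, t)).1}) (v := {t | (F (0, t)).1 < 0})
    (isOpen_lt (by fun_prop) (by fun_prop)) (isOpen_lt (by fun_prop) (by fun_prop))
    (disjoint_left.2 fun t (h : 0 < (F (0, t)).1) h' => lt_asymm h h')
    (fun t ht => (hF.axis_fst_ne_zero hno ht).lt_or_gt.symm) with h | h
  · exact .inl (hF.sheet_le_and_flux_pos hF.isReversible h)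
  · right
    obtain ⟨hle, hpos⟩ := hF.mirror.sheet_le_and_flux_pos hF.mirror.isReversible
      fun t ht => by simpa using h ht
    rw [hF.flux_mirror hF.isReversible hF.measurePreserving] at hpos
    exact ⟨fun p => (hle (F p)).trans_eq (congrArg sheet (hF.isReversible.mirror_apply_apply p)),
      by linarith⟩

end IsRevLift

/-! ### Winding around a fixed point on the axis -/

/-- The angle at which `z` is seen from `(0, q)`, measured anticlockwise from the upward vertical
direction. It is continuous on `slit q` and jumps on the rest of the axis. -/
def azimuth (q : unitInterval) (z : Strip) : ℝ := arg (-Complex.I * offset z (0, q))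

/-- The complement of the part of the axis below `(0, q)`, including this point. -/
def slit (q : unitInterval) : Set Strip := {z | z.1 ≠ 0 ∨ q < z.2}

/-- The continuous determination on `slit q`, starting from `azimuth q z`, of the angle at which
`F z` is seen from the fixed point `(0, q)` of a map `F` with turning angle `Λ`. -/
def liftedAzimuth (Λ : Strip × Strip → ℝ) (q : unitInterval) (z : Strip) : ℝ :=
  azimuth q z + Λ (z, (0, q))

/-- The signed number of times that the part of the axis below `(0, q)` is crossed while the
azimuth turns by the angle `Λ`. -/
def winding (Λ : Strip × Strip → ℝ) (q : unitInterval) (z : Strip) : ℤ :=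
  toIocDiv two_pi_pos (-Real.pi) (liftedAzimuth Λ q z)

section Azimuth

variable {q : unitInterval} {z : Strip}

lemma re_neg_I_mul_offset : (-Complex.I * offset z (0, q)).re = z.2 - q := by simp [offset]

lemma im_neg_I_mul_offset : (-Complex.I * offset z (0, q)).im = -z.1 := by simp [offset]

lemma isOpen_slit : IsOpen (slit q) :=
  (isOpen_ne_fun continuous_fst continuous_const).union
    (isOpen_lt (by fun_prop) (by fun_prop))

lemma ne_of_mem_slit (hz : z ∈ slit q) : z ≠ (0, q) := by
  rintro rfl
  simp [slit] at hz

lemma isPreconnected_slit (hq : q < 1) : IsPreconnected (slit q) := by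
  have hleft : IsPreconnected (Iio 0 ×ˢ univ : Set Strip) :=
    isPreconnected_Iio.prod isPreconnected_univ
  have hright : IsPreconnected (Ioi 0 ×ˢ univ : Set Strip) :=
    isPreconnected_Ioi.prod isPreconnected_univ
  have hup : IsPreconnected (univ ×ˢ Ioi q : Set Strip) :=
    isPreconnected_univ.prod isPreconnected_Ioi
  convert (hleft.union (-1, 1) (by simp) (by simpa) hup).union (1, 1) (by simp [hq]) (by simp)
    hright using 1
  ext z
  simp only [slit, mem_ofPred_eq, mem_union, mem_prod, mem_Iio, mem_Ioi, mem_univ, ne_iff_lt_or_gt]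
  tauto

lemma continuousOn_azimuth : ContinuousOn (azimuth q) (slit q) := by
  refine Complex.continuousOn_arg.comp (f := fun z => -Complex.I * offset z (0, q))
    (by fun_prop) fun z hz => ?_
  rw [Complex.mem_slitPlane_iff, re_neg_I_mul_offset, im_neg_I_mul_offset, sub_pos, neg_ne_zero]
  exact hz.symm

lemma coe_azimuth (hz : z ≠ (0, q)) :
    (azimuth q z : Real.Angle) = arg (-Complex.I) + bearing z (0, q) :=
  Complex.arg_mul_coe_angle (neg_ne_zero.2 Complex.I_ne_zero) (offset_ne_zero hz)

lemma abs_azimuth_le : |azimuth q z| ≤ Real.pi := Complex.abs_arg_le_pi _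

lemma azimuth_neg_iff : azimuth q z < 0 ↔ 0 < z.1 := by
  rw [azimuth, Complex.arg_neg_iff, im_neg_I_mul_offset, neg_neg_iff_pos]

lemma azimuth_pos (hz : z.1 < 0) : 0 < azimuth q z := by
  refine lt_of_le_of_ne (not_lt.1 fun h => hz.not_gt (azimuth_neg_iff.1 h)) fun h => ?_
  have := (Complex.arg_eq_zero_iff.1 h.symm).2
  rw [im_neg_I_mul_offset, neg_eq_zero] at this
  exact hz.ne this

lemma coe_azimuth_eq_pi_iff : (azimuth q z : Real.Angle) = Real.pi ↔ z.2 < q ∧ z.1 = 0 := by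
  rw [azimuth, Complex.arg_coe_angle_eq_iff_eq_toReal, Real.Angle.toReal_pi,
    Complex.arg_eq_pi_iff, re_neg_I_mul_offset, im_neg_I_mul_offset, sub_neg,
    neg_eq_zero, Subtype.coe_lt_coe]

lemma azimuth_of_pos {x : ℝ} (hx : 0 < x) : azimuth q (x, q) = -(Real.pi / 2) := by
  have h : -Complex.I * offset (x, q) (0, q) = x * -Complex.I := by
    apply Complex.ext <;> simp [offset]
  rw [azimuth, h, Complex.arg_real_mul _ hx, Complex.arg_neg_I]

end Azimuth

namespace IsTurning

variable {F : Strip → Strip} {Λ : Strip × Strip → ℝ} {q : unitInterval} {z : Strip}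

lemma continuousOn_liftedAzimuth (hΛ : IsTurning F Λ) :
    ContinuousOn (liftedAzimuth Λ q) (slit q) :=
  continuousOn_azimuth.add <| hΛ.continuousOn.comp (f := fun z : Strip => (z, ((0, q) : Strip)))
    (by fun_prop) fun _ hz => ne_of_mem_slit hz

lemma coe_liftedAzimuth (hΛ : IsTurning F Λ) (hF : Function.Injective F) (hq : F (0, q) = (0, q))
    (hz : z ≠ (0, q)) : (liftedAzimuth Λ q z : Real.Angle) = azimuth q (F z) := by
  have hFz : F z ≠ (0, q) := hq ▸ hF.ne hz
  have h := hΛ.coe_bearing _ _ hz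
  rw [hq] at h
  rw [liftedAzimuth, Real.Angle.coe_add, coe_azimuth hz, coe_azimuth hFz, h, add_assoc]

lemma two_pi_mul_winding (hΛ : IsTurning F Λ) (hF : Function.Injective F) (hq : F (0, q) = (0, q))
    (hz : z ≠ (0, q)) :
    2 * Real.pi * winding Λ q z = liftedAzimuth Λ q z - azimuth q (F z) := by
  have h := congrArg Real.Angle.toReal (hΛ.coe_liftedAzimuth hF hq hz)
  rw [azimuth, Complex.arg_coe_angle_toReal_eq_arg, Real.Angle.toReal_coe,
    ← self_sub_toIocDiv_zsmul, zsmul_eq_mul] at h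
  rw [winding, azimuth, ← h]
  ring

lemma sign_mul_winding_mem (hΛ : IsTurning F Λ) (hF : Function.Injective F)
    (hq : F (0, q) = (0, q)) {σ : ℤ} (hσ : σ = 1 ∨ σ = -1) (hz : z ∈ slit q)
    (hL : |liftedAzimuth Λ q z - σ * Real.pi| < 2 * Real.pi) :
    0 ≤ σ * winding Λ q z ∧ σ * winding Λ q z ≤ 1 := by
  have hpi := pi_pos
  have hw := hΛ.two_pi_mul_winding hF hq (ne_of_mem_slit hz)
  have haz := abs_le.1 (abs_azimuth_le (q := q) (z := F z))
  rw [abs_lt] at hL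
  have hlower : (-1 : ℝ) < σ * winding Λ q z := by
    by_contra! hle
    rcases hσ with rfl | rfl <;> push_cast at * <;> nlinarith
  have hupper : σ * winding Λ q z < (2 : ℝ) := by
    by_contra! hle
    rcases hσ with rfl | rfl <;> push_cast at * <;> nlinarith
  norm_cast at hlower hupper
  lia

lemma one_le_sign_mul_winding (hΛ : IsTurning F Λ) (hF : Function.Injective F)
    (hq : F (0, q) = (0, q)) {σ : ℤ} (hσ : σ = 1 ∨ σ = -1) (hz : z ∈ slit q)
    (hL : 0 < σ * liftedAzimuth Λ q z) (hFz : 0 < σ * (F z).1) : 1 ≤ σ * winding Λ q z := by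
  have hpi := pi_pos
  have hw := hΛ.two_pi_mul_winding hF hq (ne_of_mem_slit hz)
  have hpos : (0 : ℝ) < σ * winding Λ q z := by
    by_contra! hle
    rcases hσ with rfl | rfl <;> push_cast at *
    · have := azimuth_neg_iff (q := q).2 (by simpa using hFz)
      nlinarith
    · have := azimuth_pos (q := q) (z := F z) (by simpa using hFz)
      nlinarith
  exact_mod_cast hpos

lemma winding_birkhoffSum (hΛ : IsTurning F Λ) (hF : Function.Injective F)
    (hq : F (0, q) = (0, q)) {n : ℕ} (hΛn : IsTurning F^[n] (birkhoffSum (Prod.map F F) Λ n))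
    (hz : z ≠ (0, q)) :
    winding (birkhoffSum (Prod.map F F) Λ n) q z = birkhoffSum F (winding Λ q) n z := by
  have hqn (n : ℕ) : F^[n] (0, q) = (0, q) := Function.iterate_fixed hq n
  have hsum (n : ℕ) : 2 * Real.pi * (birkhoffSum F (winding Λ q) n z : ℤ) =
      liftedAzimuth (birkhoffSum (Prod.map F F) Λ n) q z - azimuth q (F^[n] z) := by
    induction n with
    | zero => simp [liftedAzimuth]
    | succ n ih =>
      have hzn : F^[n] z ≠ (0, q) := hqn n ▸ (hF.iterate n).ne hz
      rw [birkhoffSum_succ, Int.cast_add, mul_add, ih, hΛ.two_pi_mul_winding hF hq hzn]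
      simp only [liftedAzimuth, birkhoffSum_succ, Prod.map_iterate, Prod.map_apply, hqn,
        Function.iterate_succ_apply']
      ring
  have h := (hΛn.two_pi_mul_winding (hF.iterate n) (hqn n) hz).trans (hsum n).symm
  exact_mod_cast mul_left_cancel₀ two_pi_pos.ne' h

lemma exists_abs_liftedAzimuth_lt (hΛ : IsTurning F Λ) (hFD : ∃ D, ∀ p, |(F p).1 - p.1| ≤ D)
    (hq : F (0, q) = (0, q)) : ∃ z ∈ slit q, |liftedAzimuth Λ q z| < Real.pi := by
  obtain ⟨⟨C, hC⟩, D, hD⟩ := hΛ.bearing_of_far, hFD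
  obtain ⟨x, hx⟩ := exists_gt (max C (max D 0))
  obtain ⟨hxC, hxD, hx0⟩ : C < x ∧ D < x ∧ 0 < x := by simpa only [max_lt_iff] using hx
  refine ⟨(x, q), .inl hx0.ne', ?_⟩
  have hturn := hC (x, q) (0, q) (by simpa)
  have hzero : bearing (x, q) (0, q) = 0 :=
    Complex.arg_eq_zero_iff.2 (by simpa [offset] using hx0.le)
  rw [hq, hzero, zero_add] at hturn
  have hright : 0 < (F (x, q)).1 := by linarith [(abs_le.1 (hD (x, q))).1]
  have hlt := abs_lt.1 (abs_bearing_lt (q := (0, q)) hright)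
  rw [liftedAzimuth, azimuth_of_pos hx0, ← hturn, abs_lt]
  constructor <;> linarith [hlt.1, hlt.2]

end IsTurning

/-- The heights of the fixed points of `F` on the open axis. -/
def axisFixed (F : Strip → Strip) : Set unitInterval := {c ∈ Ioo 0 1 | F (0, c) = (0, c)}

namespace IsRevLift

variable {f : annulus → annulus} {F : Strip → Strip} {Λ : Strip × Strip → ℝ} {q : unitInterval}

lemma mirror_axis_mem_slit (hF : IsRevLift f F) (hq : IsLeast (axisFixed F) q) {y : unitInterval}
    (hyq : y < q) (hy : F (0, y) ≠ (0, y)) : mirror F (0, y) ∈ slit q := by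
  by_contra hmem
  simp only [slit, mem_ofPred_eq, not_or, not_not, not_lt, mirror_apply, reflect_axis, reflect_fst,
    reflect_snd, neg_eq_zero] at hmem
  obtain ⟨Λ, hΛ⟩ := hF.exists_isTurning
  have hyb : F (0, y) = (0, (F (0, y)).2) := Prod.ext hmem.1 rfl
  obtain ⟨c, hc, hfix⟩ := exists_fixed_mem_uIoo hF.continuous hF.isReversible hΛ hyb
    fun h => hy (hyb.trans (by rw [← h]))
  have hcq : c < q := hc.2.trans_le (sup_le hyq.le hmem.2)
  exact hcq.not_ge (hq.2 ⟨⟨(le_inf bot_le bot_le).trans_lt hc.1, hcq.trans hq.1.1.2⟩, hfix⟩)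

lemma exists_mirror_axis_eq (hF : IsRevLift f F) {z : Strip} (hz : z ∈ slit q)
    (h : (azimuth q (F z) : Real.Angle) = Real.pi) :
    ∃ y < q, F (0, y) ≠ (0, y) ∧ mirror F (0, y) = z := by
  obtain ⟨hlt, h0⟩ := coe_azimuth_eq_pi_iff.1 h
  have hFz : F z = (0, (F z).2) := Prod.ext h0 rfl
  refine ⟨(F z).2, hlt, fun hfix => ?_, by rw [← hFz, hF.isReversible.mirror_apply_apply]⟩
  have hzy := hF.isReversible.injective (hFz.trans hfix.symm)
  rw [hzy] at hz
  exact hz.elim (· rfl) hlt.not_gt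

lemma exists_liftedAzimuth_eq (hF : IsRevLift f F) (hΛ : IsTurning F Λ)
    (hq : IsLeast (axisFixed F) q) : ∃ c : ℝ,
      (∃ z ∈ slit q, liftedAzimuth Λ q z = c ∧ (F z).1 = 0) ∧ (c : Real.Angle) = Real.pi ∧
      ∀ z ∈ slit q, (liftedAzimuth Λ q z : Real.Angle) = Real.pi → liftedAzimuth Λ q z = c := by
  have hcoe {z : Strip} (hz : z ∈ slit q) :=
    hΛ.coe_liftedAzimuth hF.isReversible.injective hq.1.2 (ne_of_mem_slit hz)
  let J : Set unitInterval := {y | y < q ∧ F (0, y) ≠ (0, y)}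
  have hslit : MapsTo (fun y => mirror F (0, y)) J (slit q) :=
    fun y hy => hF.mirror_axis_mem_slit hq hy.1 hy.2
  have hlow {y : unitInterval} (h0 : 0 < y) (hy : y < q) : y ∈ J :=
    ⟨hy, fun hfix => hy.not_ge (hq.2 ⟨⟨h0, hy.trans hq.1.1.2⟩, hfix⟩)⟩
  have hpi {y : unitInterval} (hy : y ∈ J) :
      (liftedAzimuth Λ q (mirror F (0, y)) : Real.Angle) = Real.pi := by
    rw [hcoe (hslit hy), hF.isReversible, coe_azimuth_eq_pi_iff.2 ⟨hy.1, rfl⟩]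
  have hJ : IsPreconnected J := by
    refine OrdConnected.isPreconnected ⟨fun x hx y hy z hz => ?_⟩
    rcases eq_or_lt_of_le hz.1 with rfl | hlt
    · exact hx
    · exact hlow (bot_le.trans_lt hlt) (hz.2.trans_lt hy.1)
  have hcont : ContinuousOn (fun y => liftedAzimuth Λ q (mirror F (0, y))) J := by
    have := hF.toIsLift.mirror.continuous
    exact hΛ.continuousOn_liftedAzimuth.comp (f := fun y => mirror F (0, y))
      (by fun_prop) hslit
  obtain ⟨m, hm0, hmq⟩ := exists_between hq.1.1.1
  have hm := hlow hm0 hmq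
  refine ⟨_, ⟨_, hslit hm, rfl, by rw [hF.isReversible]⟩, hpi hm, fun z hz h => ?_⟩
  obtain ⟨y, hy, hyF, rfl⟩ := hF.exists_mirror_axis_eq hz ((hcoe hz).symm.trans h)
  exact (AddCircle.isCoveringMap_coe (2 * Real.pi)).constOn_of_comp hJ hcont
    (fun x hx y hy => (hpi hx).trans (hpi hy).symm) ⟨hy, hyF⟩ hm

lemma exists_sign_liftedAzimuth (hF : IsRevLift f F) (hΛ : IsTurning F Λ)
    (hq : IsLeast (axisFixed F) q) : ∃ σ : ℤ, (σ = 1 ∨ σ = -1) ∧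
      (∀ z ∈ slit q, |liftedAzimuth Λ q z - σ * Real.pi| < 2 * Real.pi) ∧
      ∃ z ∈ slit q, liftedAzimuth Λ q z = σ * Real.pi ∧ (F z).1 = 0 := by
  have hpi := pi_pos
  obtain ⟨c, ⟨z₁, hz₁, hc, h0⟩, hcpi, honly⟩ := hF.exists_liftedAzimuth_eq hΛ hq
  have hpre := isPreconnected_slit hq.1.1.2
  have hcont := hΛ.continuousOn_liftedAzimuth (q := q)
  have hbound : ∀ z ∈ slit q, |liftedAzimuth Λ q z - c| < 2 * Real.pi := by
    intro z hz
    rw [abs_sub_lt_iff]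
    constructor
    · by_contra! hle
      obtain ⟨u, hu, hcu⟩ := hpre.intermediate_value hz₁ hz hcont
        (show c + 2 * Real.pi ∈ Icc _ _ by constructor <;> linarith)
      linarith [honly u hu (by simp [hcu, hcpi])]
    · by_contra! hle
      obtain ⟨u, hu, hcu⟩ := hpre.intermediate_value hz hz₁ hcont
        (show c - 2 * Real.pi ∈ Icc _ _ by constructor <;> linarith)
      linarith [honly u hu (by simp [hcu, hcpi])]
  suffices h : ∃ σ : ℤ, (σ = 1 ∨ σ = -1) ∧ c = σ * Real.pi by
    obtain ⟨σ, hσ, rfl⟩ := h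
    exact ⟨σ, hσ, hbound, z₁, hz₁, hc, h0⟩
  obtain ⟨z, hz, hsmall⟩ := hΛ.exists_abs_liftedAzimuth_lt hF.exists_displacement_bound hq.1.2
  obtain ⟨k, hk⟩ := Real.Angle.angle_eq_iff_two_pi_dvd_sub.1 hcpi
  have hkc := abs_sub_lt_iff.1 (hbound z hz)
  rw [abs_lt] at hsmall
  have hk1 : (k : ℝ) < 1 := by by_contra! hle; nlinarith
  have hk2 : (-2 : ℝ) < k := by by_contra! hle; nlinarith
  refine ⟨2 * k + 1, ?_, by push_cast; linarith⟩
  norm_cast at hk1 hk2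
  lia

lemma exists_isOpen_one_le_winding (hF : IsRevLift f F) (hΛ : IsTurning F Λ)
    (hq : F (0, q) = (0, q)) {σ : ℤ} (hσ : σ = 1 ∨ σ = -1) {z : Strip} (hz : z ∈ slit q)
    (hL : liftedAzimuth Λ q z = σ * Real.pi) (h0 : (F z).1 = 0) :
    ∃ U : Set Strip, IsOpen U ∧ U.Nonempty ∧ ∀ z ∈ U, 1 ≤ σ * winding Λ q z := by
  have hFc := hF.continuous
  have hmc := hF.toIsLift.mirror.continuous
  have hσσ : (σ : ℝ) * σ = 1 := by rcases hσ with rfl | rfl <;> norm_num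
  let V : Set Strip := slit q ∩ (fun w => σ * liftedAzimuth Λ q w) ⁻¹' Ioi 0
  have hV : IsOpen V :=
    (hΛ.continuousOn_liftedAzimuth.const_mul (σ : ℝ)).isOpen_inter_preimage isOpen_slit isOpen_Ioi
  have hzV : z ∈ V := ⟨hz, by rw [mem_preimage, hL, ← mul_assoc, hσσ, one_mul]; exact pi_pos⟩
  have hpre : mirror F (σ * 0, (F z).2) = z := by
    rw [mul_zero, show ((0, (F z).2) : Strip) = F z from Prod.ext h0.symm rfl,
      hF.isReversible.mirror_apply_apply]
  have hpath : IsOpen ((fun t : ℝ => mirror F (σ * t, (F z).2)) ⁻¹' V) :=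
    hV.preimage (by fun_prop)
  obtain ⟨t, htV, ht⟩ := mem_closure_iff.1 (show (0 : ℝ) ∈ closure (Ioi 0) by simp) _ hpath
    (by rwa [mem_preimage, hpre])
  refine ⟨V ∩ {w | 0 < σ * (F w).1}, hV.inter (isOpen_lt (by fun_prop) (by fun_prop)),
    ⟨_, htV, ?_⟩, fun w hw => hΛ.one_le_sign_mul_winding hF.isReversible.injective hq hσ
      hw.1.1 hw.1.2 hw.2⟩
  rw [mem_ofPred_eq, hF.isReversible, ← mul_assoc, hσσ, one_mul]
  exact ht

lemma exists_sign_winding (hF : IsRevLift f F) (hΛ : IsTurning F Λ)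
    (hq : IsLeast (axisFixed F) q) : ∃ σ : ℤ, (σ = 1 ∨ σ = -1) ∧
      (∀ z ∈ slit q, 0 ≤ σ * winding Λ q z ∧ σ * winding Λ q z ≤ 1) ∧
      ∃ U : Set Strip, IsOpen U ∧ U.Nonempty ∧ ∀ z ∈ U, 1 ≤ σ * winding Λ q z := by
  obtain ⟨σ, hσ, hbound, z, hz, hL, h0⟩ := hF.exists_sign_liftedAzimuth hΛ hq
  exact ⟨σ, hσ,
    fun z hz => hΛ.sign_mul_winding_mem hF.isReversible.injective hq.1.2 hσ hz (hbound z hz),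
    hF.exists_isOpen_one_le_winding hΛ hq.1.2 hσ hz hL h0⟩

end IsRevLift

/-! ### Recurrence -/

namespace IsLift

variable {f : annulus → annulus} {F : Strip → Strip}

lemma ae_forall_iterate_lift_fst_ne_zero (hF : IsLift f F)
    (hf : MeasurePreserving f area area) :
    ∀ᵐ z ∂area, ∀ (k : ℤ) (i : ℕ), (F^[i] (deck k (lift z))).1 ≠ 0 := by
  have haxis (i : ℕ) : ∀ᵐ z ∂area, ((f^[i] z : annulus) : ℝ × ℝ).1 ≠ 0 :=
    (hf.iterate i).quasiMeasurePreserving.ae (p := fun z : annulus => (z : ℝ × ℝ).1 ≠ 0)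
      (ae_iff.2 (by simpa using area_axis))
  filter_upwards [ae_all_iff.2 haxis] with z hz k i h0
  have hfz : f^[i] z = cover (F^[i] (deck k (lift z))) := by
    rw [(hF.iterate i).semiconj.eq, cover_deck, cover_lift]
  exact hz i (by simp [hfz, cover, polar, h0])

lemma exists_recurrent_orbit (hF : IsLift f F) (hf : MeasurePreserving f area area)
    (hB : ∃ B, ∀ n p, |(F^[n] p).1 - p.1| ≤ B) {U : Set Strip} (hU : IsOpen U)
    (hne : U.Nonempty) : ∃ z, (∀ i, (F^[i] z).1 ≠ 0) ∧ {i | F^[i] z ∈ U}.Infinite := by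
  obtain ⟨u₀, hu₀⟩ := hne
  obtain ⟨B, hB⟩ := hB
  let V : Set Strip := U ∩ {u | |u.1 - u₀.1| < 1}
  have hV : IsOpen (cover '' V) :=
    isOpenMap_cover _ (hU.inter (isOpen_lt (by fun_prop) continuous_const))
  have hVpos : area (cover '' V) ≠ 0 :=
    (hV.measure_pos area ⟨_, u₀, ⟨hu₀, by simp⟩, rfl⟩).ne'
  obtain ⟨z, ⟨-, hrec⟩, haxis⟩ :=
    ((hf.conservative.frequently_ae_mem_and_frequently_image_mem
      hV.measurableSet.nullMeasurableSet hVpos).and_eventually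
        (hF.ae_forall_iterate_lift_fst_ne_zero hf)).exists
  let M : ℤ := ⌈B + 1 + |u₀.1 - (lift z).1|⌉
  by_contra! hfin
  refine Nat.frequently_atTop_iff_infinite.1 hrec (((finite_Icc (-M) M).biUnion fun k _ =>
    hfin (deck k (lift z)) (haxis k)).subset fun i hi => ?_)
  obtain ⟨u, hu, hui⟩ := hi
  obtain ⟨k, rfl⟩ : ∃ k, u = deck k (F^[i] (lift z)) :=
    cover_eq_cover_iff.1 (by rw [hui, (hF.iterate i).semiconj.eq, cover_lift])
  have hk : |(k : ℝ)| ≤ M := by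
    have hdisp := abs_le.1 (hB i (lift z))
    have hnear : |(F^[i] (lift z)).1 + k - u₀.1| < 1 := hu.2
    have hdist := abs_le.1 (le_refl |u₀.1 - (lift z).1|)
    rw [abs_lt] at hnear
    refine le_trans (abs_le.2 ?_) (Int.le_ceil _)
    constructor <;> linarith
  refine mem_biUnion (x := k) (abs_le.1 (by exact_mod_cast hk)) ?_
  rw [mem_ofPred_eq, ((hF.iterate i).commute k).eq]
  exact hu.1

end IsLift

namespace IsRevLift

variable {f : annulus → annulus} {F : Strip → Strip}

lemma axisFixed_nonempty (hF : IsRevLift f F) (hflux : flux F = 0) : (axisFixed F).Nonempty := by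
  by_contra hempty
  rcases hF.sheet_le_and_flux_pos_or fun t ht h => hempty ⟨t, ht, h⟩ with h | h
  · exact h.2.ne' hflux
  · exact h.2.ne hflux

lemma abs_birkhoffSum_winding_le_one (hF : IsRevLift f F) {Λ : Strip × Strip → ℝ}
    (hΛ : IsTurning F Λ) {q : unitInterval} (hq : IsLeast (axisFixed F) q) {n : ℕ}
    (hn : axisFixed F^[n] ⊆ axisFixed F) {z : Strip} (hz : z ∈ slit q) :
    |birkhoffSum F (winding Λ q) n z| ≤ 1 := by
  have hΛn := hΛ.iterate hF.continuous hF.isReversible.injective hF.exists_displacement_bound n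
  have hqn : IsLeast (axisFixed F^[n]) q :=
    ⟨⟨hq.1.1, Function.iterate_fixed hq.1.2 n⟩, fun c hc => hq.2 (hn hc)⟩
  obtain ⟨σ, hσ, hw, -⟩ := (hF.iterate n).exists_sign_winding hΛn hqn
  rw [← hΛ.winding_birkhoffSum hF.isReversible.injective hq.1.2 hΛn (ne_of_mem_slit hz), abs_le]
  have := hw z hz
  rcases hσ with rfl | rfl <;> constructor <;> lia

/-- If the iterates had bounded displacement, the orbit of a point off the axis would return
infinitely often to an open set where the winding number around the lowest fixed point is nonzero.
As these numbers all have the same sign, they could not have bounded sums. -/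
lemma not_bounded_odd_iterate (hF : IsRevLift f F) (hflux : flux F = 0)
    (hfin : (axisFixed F).Finite) (hper : ∀ n, Odd n → axisFixed F^[n] ⊆ axisFixed F) :
    ¬∃ B, ∀ n, Odd n → ∀ p, |(F^[n] p).1 - p.1| ≤ B := by
  rintro ⟨B, hB⟩
  obtain ⟨q, hqmem, hqle⟩ := exists_min_image _ id hfin (hF.axisFixed_nonempty hflux)
  have hq : IsLeast (axisFixed F) q := ⟨hqmem, hqle⟩
  obtain ⟨Λ, hΛ⟩ := hF.exists_isTurning
  obtain ⟨D, hD⟩ := hF.exists_displacement_bound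
  have hall (n : ℕ) (p : Strip) : |(F^[n] p).1 - p.1| ≤ B + D := by
    rcases n.even_or_odd with hn | hn
    · have hodd := abs_le.1 (hB (n + 1) hn.add_one p)
      have hstep : |(F^[n + 1] p).1 - (F^[n] p).1| ≤ D := by
        simpa only [Function.iterate_succ_apply'] using hD (F^[n] p)
      rw [abs_le] at hstep
      exact abs_le.2 (by constructor <;> linarith)
    · linarith [hB n hn p, (abs_nonneg _).trans (hD p)]
  obtain ⟨σ, hσ, hw, U, hU, hne, hwU⟩ := hF.exists_sign_winding hΛ hq
  obtain ⟨z, hz, hinf⟩ := hF.exists_recurrent_orbit hF.measurePreserving ⟨_, hall⟩ hU hne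
  obtain ⟨s, hs, hcard⟩ := hinf.exists_subset_card_eq 2
  obtain ⟨N, hN⟩ := s.exists_nat_subset_range
  have hsub : s ⊆ Finset.range (2 * N + 1) :=
    hN.trans (Finset.range_subset_range.2 (by lia))
  have htwo : 2 ≤ σ * birkhoffSum F (winding Λ q) (2 * N + 1) z := by
    calc (2 : ℤ) = ∑ i ∈ s, 1 := by simp [hcard]
      _ ≤ ∑ i ∈ s, σ * winding Λ q (F^[i] z) := Finset.sum_le_sum fun i hi => hwU _ (hs hi)
      _ ≤ ∑ i ∈ Finset.range (2 * N + 1), σ * winding Λ q (F^[i] z) :=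
        Finset.sum_le_sum_of_subset_of_nonneg hsub fun i _ _ => (hw _ (.inl (hz i))).1
      _ = _ := (Finset.mul_sum ..).symm
  have hone := abs_le.1 <| hF.abs_birkhoffSum_winding_le_one hΛ hq
    (hper _ (odd_two_mul_add_one N)) (.inl (hz 0))
  rw [Function.iterate_zero, id] at hone
  rcases hσ with rfl | rfl <;> lia

end IsRevLift

/-! ### Odd iterates that move points of the axis by deck transformations -/

/-- The heights of the interior points of the axis `{0} × [0, 1]` that some odd iterate of `F` moves
by a deck transformation. They project to symmetric odd-periodic points. -/
def oddAxis (F : Strip → Strip) : Set unitInterval :=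
  {c ∈ Ioo 0 1 | ∃ n, Odd n ∧ ∃ k : ℤ, F^[n] (0, c) = deck k (0, c)}

lemma axisFixed_iterate_subset_oddAxis {F : Strip → Strip} {n : ℕ} (hn : Odd n) :
    axisFixed F^[n] ⊆ oddAxis F := fun _ hc => ⟨hc.1, n, hn, 0, by simpa using hc.2⟩

namespace IsLift

variable {f : annulus → annulus} {F : Strip → Strip}

lemma iterate_mul_eq_deck (hF : IsLift f F) {n : ℕ} {k : ℤ} {p : Strip} (hp : F^[n] p = deck k p)
    (m : ℕ) : F^[n * m] p = deck (m * k) p := by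
  induction m with
  | zero => simp
  | succ m ih =>
    rw [Nat.mul_succ, Function.iterate_add_apply, hp, ((hF.iterate _).commute k).eq, ih, deck_deck]
    congr 1
    push_cast
    ring

/-- The point that `F^[n]` moves by one turn has rotation number `1 / n`, so that different `n` give
different points. -/
lemma infinite_oddAxis_of_forall_gt (hF : IsLift f F) {N : ℕ}
    (hN : ∀ n, Odd n → N < n → ∃ c ∈ Ioo (0 : unitInterval) 1, F^[n] (0, c) = deck 1 (0, c)) :
    (oddAxis F).Infinite := by
  have hodd (i : ℕ) : Odd (2 * (N + i) + 1) := odd_two_mul_add_one _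
  choose c hc hFc using fun i => hN (2 * (N + i) + 1) (hodd i) (by lia)
  refine infinite_of_injective_forall_mem (f := c) (fun i j hij => ?_)
    fun i => ⟨hc i, _, hodd i, 1, hFc i⟩
  have hi := hF.iterate_mul_eq_deck (hFc i) (2 * (N + j) + 1)
  have hj := hF.iterate_mul_eq_deck (hFc j) (2 * (N + i) + 1)
  rw [← hij, mul_comm, hi] at hj
  have := deck_injective_left hj
  lia

lemma oddAxis_mirror_subset (hF : IsLift f F) (hrev : IsReversible F) :
    oddAxis (mirror F) ⊆ oddAxis F := by
  rintro c ⟨hc, n, hn, k, hk⟩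
  refine ⟨hc, n, hn, -k, deck_injective (k := k) ?_⟩
  have hinv : F^[n] ((mirror F)^[n] (0, c)) = (0, c) :=
    Function.LeftInverse.iterate (f := mirror F) hrev n _
  rw [← ((hF.iterate n).commute k).eq, ← hk, hinv]
  simp

end IsLift

namespace IsRevLift

variable {f : annulus → annulus} {F : Strip → Strip}

lemma add_one_le_sheet_iterate_or (hF : IsRevLift f F) {n : ℕ}
    (hno : ∀ c ∈ Ioo 0 1, F^[n] (0, c) ≠ deck 1 (0, c)) :
    ((∀ p, sheet p + 1 ≤ sheet (F^[n] p)) ∧ area.real univ < n * flux F) ∨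
      (∀ p, sheet (F^[n] p) ≤ sheet p + 1) ∧ n * flux F < area.real univ := by
  have hflux : flux (deck (-1) ∘ F^[n]) = n * flux F - area.real univ := by
    rw [(hF.iterate n).flux_deck_comp, hF.flux_iterate hF.measurePreserving]
    push_cast
    ring
  have h := ((hF.iterate n).deck_comp (-1)).sheet_le_and_flux_pos_or fun c hc h =>
    hno c hc (deck_injective (k := -1) (by simpa using h))
  simpa only [hflux, Function.comp_apply, sheet_deck, ← sub_eq_add_neg, le_sub_iff_add_le,
    sub_le_iff_le_add, sub_pos, sub_neg] using h

lemma infinite_oddAxis_of_flux_pos (hF : IsRevLift f F) {p : Strip} (hp : F p = p)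
    (hflux : 0 < flux F) : (oddAxis F).Infinite := by
  obtain ⟨N, hN⟩ := exists_nat_gt (area.real univ / flux F)
  rw [div_lt_iff₀ hflux] at hN
  refine hF.infinite_oddAxis_of_forall_gt (N := N) fun n _ hNn => ?_
  by_contra! hno
  rcases hF.add_one_le_sheet_iterate_or hno with ⟨hle, -⟩ | ⟨-, hlt⟩
  · have := hle p
    rw [Function.iterate_fixed hp] at this
    lia
  · have : N * flux F ≤ n * flux F := by gcongr
    linarith

lemma sheet_iterate_le_add_one (hF : IsRevLift f F) (hflux : flux F = 0) {n : ℕ}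
    (hno : ∀ c ∈ Ioo 0 1, F^[n] (0, c) ≠ deck 1 (0, c)) (p : Strip) :
    sheet (F^[n] p) ≤ sheet p + 1 := by
  rcases hF.add_one_le_sheet_iterate_or hno with ⟨-, hlt⟩ | ⟨hle, -⟩
  · rw [hflux, mul_zero] at hlt
    exact absurd hlt measureReal_nonneg.not_gt
  · exact hle p

lemma infinite_oddAxis_of_two_lt (hF : IsRevLift f F) (hflux : flux F = 0) {n : ℕ}
    {p : Strip} (hp : 2 < (F^[n] p).1 - p.1) : (oddAxis F).Infinite := by
  obtain ⟨c, -, hc⟩ : ∃ c ∈ Ioo (0 : unitInterval) 1, F^[n] (0, c) = deck 1 (0, c) := by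
    by_contra! hno
    have hle : (⌊(F^[n] p).1⌋ : ℝ) ≤ ⌊p.1⌋ + 1 := by
      exact_mod_cast hF.sheet_iterate_le_add_one hflux hno p
    linarith [Int.lt_floor_add_one (F^[n] p).1, Int.floor_le p.1]
  refine hF.infinite_oddAxis_of_forall_gt (N := n) fun m _ hnm => ?_
  by_contra! hno
  have hle (i : ℕ) : sheet (F^[m * i] (0, c)) ≤ sheet (0, c) + i := by
    induction i with
    | zero => simp
    | succ i ih =>
      have := hF.sheet_iterate_le_add_one hflux hno (F^[m * i] (0, c))
      rw [← Function.iterate_add_apply, add_comm, ← Nat.mul_succ] at this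
      push_cast
      lia
  have := hle n
  rw [mul_comm, hF.iterate_mul_eq_deck hc, sheet_deck] at this
  lia

lemma infinite_oddAxis_of_bounded (hF : IsRevLift f F) (hflux : flux F = 0)
    (hB : ∃ B, ∀ n, Odd n → ∀ p, |(F^[n] p).1 - p.1| ≤ B) : (oddAxis F).Infinite := by
  intro hfin
  let P : Set unitInterval := ⋃ n ∈ {n | Odd n}, axisFixed F^[n]
  have hP : P.Finite :=
    hfin.subset (iUnion₂_subset fun n hn => axisFixed_iterate_subset_oddAxis hn)
  have hperiod (c) (hc : c ∈ P) : ∃ n, Odd n ∧ c ∈ axisFixed F^[n] := by simpa [P] using hc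
  choose! ν hodd hfix using hperiod
  let N := ∏ c ∈ hP.toFinset, ν c
  have hN : Odd N :=
    Finset.prod_induction _ _ (fun _ _ => Odd.mul) odd_one fun c hc => hodd c (hP.mem_toFinset.1 hc)
  have hNfix : P ⊆ axisFixed F^[N] := fun c hc => by
    obtain ⟨d, hd⟩ := Finset.dvd_prod_of_mem ν (hP.mem_toFinset.2 hc)
    refine ⟨(hfix c hc).1, ?_⟩
    rw [show N = ν c * d from hd, Function.iterate_mul]
    exact Function.iterate_fixed (hfix c hc).2 d
  refine (hF.iterate N).not_bounded_odd_iterate ?_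
    (hfin.subset (axisFixed_iterate_subset_oddAxis hN)) (fun n hn => ?_)
    (hB.imp fun B hB n hn p => ?_)
  · rw [hF.flux_iterate hF.measurePreserving, hflux, mul_zero]
  · rw [← Function.iterate_mul]
    exact (subset_biUnion_of_mem (u := fun n => axisFixed F^[n]) (hN.mul hn)).trans hNfix
  · rw [← Function.iterate_mul]
    exact hB _ (hN.mul hn) p

theorem infinite_oddAxis (hF : IsRevLift f F) {p : Strip} (hp : F p = p) :
    (oddAxis F).Infinite := by
  have hsub := hF.oddAxis_mirror_subset hF.isReversible
  have hflux := hF.flux_mirror hF.isReversible hF.measurePreserving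
  rcases lt_trichotomy (flux F) 0 with hneg | hzero | hpos
  · refine (hF.mirror.infinite_oddAxis_of_flux_pos (p := reflect p) ?_ (by linarith)).mono hsub
    simp [mirror, hp]
  · by_cases! hB : ∀ n, Odd n → ∀ p, |(F^[n] p).1 - p.1| ≤ 2
    · exact hF.infinite_oddAxis_of_bounded hzero ⟨2, hB⟩
    obtain ⟨n, -, p, hp⟩ := hB
    rcases lt_abs.1 hp with hp | hp
    · exact hF.infinite_oddAxis_of_two_lt hzero hp
    · refine (hF.mirror.infinite_oddAxis_of_two_lt (n := n) (p := reflect p) (by linarith) ?_).mono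
        hsub
      rw [mirror_iterate]
      simp only [mirror, Function.comp_apply, reflect_reflect, reflect_fst]
      linarith
  · exact hF.infinite_oddAxis_of_flux_pos hp hpos

end IsRevLift

/-! ### Lifting an isotopy -/

lemma exists_angle_lift {X : Type*} [TopologicalSpace X] {R : unitInterval × X → Real.Angle}
    (hR : Continuous R) (hR0 : ∀ x, R (0, x) = 0) :
    ∃ a : unitInterval × X → ℝ, Continuous a ∧ (∀ x, a (0, x) = 0) ∧
      ∀ y, (a y : Real.Angle) = R y :=
  let cov : IsCoveringMap ((↑) : ℝ → Real.Angle) := AddCircle.isCoveringMap_coe _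
  ⟨_, (cov.liftHomotopy ⟨R, hR⟩ (.const X 0) hR0).continuous, cov.liftHomotopy_zero _ _ hR0,
    congrFun (cov.liftHomotopy_lifts _ _ hR0)⟩

lemma eq_of_coe_angle_eq {X : Type*} [TopologicalSpace X] [PreconnectedSpace X] {a b : X → ℝ}
    (ha : Continuous a) (hb : Continuous b) (h : ∀ x, (a x : Real.Angle) = b x) {x₀ : X}
    (h₀ : a x₀ = b x₀) : a = b :=
  (AddCircle.isCoveringMap_coe _).eq_of_comp_eq ha hb (funext h) x₀ h₀

lemma exists_lift_isotopy {H : unitInterval × annulus → annulus} (hH : Continuous H)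
    (hH0 : ∀ z, H (0, z) = z) : ∃ K : unitInterval × Strip → Strip, Continuous K ∧
      (∀ p, K (0, p) = p) ∧ (∀ s, IsLift (fun z => H (s, z)) fun p => K (s, p)) ∧
      ∃ A, ∀ s p, |(K (s, p)).1 - p.1| ≤ A := by
  obtain ⟨a, ha, ha0, haR⟩ := exists_angle_lift
    (R := fun y => (polar.symm (H y)).1 - (polar.symm y.2).1) (by fun_prop) (by simp [hH0])
  let K : unitInterval × Strip → Strip := fun y =>
    (y.2.1 + a (y.1, cover y.2) / (2 * Real.pi), (polar.symm (H (y.1, cover y.2))).2)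
  have hK : Continuous K := by fun_prop
  refine ⟨K, hK, fun p => ?_, fun s => ⟨by fun_prop, fun p => ?_, fun k p => ?_⟩, ?_⟩
  · simp [K, ha0, hH0, cover]
  · apply polar.symm.injective
    simp only [cover, Homeomorph.symm_apply_apply]
    refine Prod.ext ?_ rfl
    simp only [K, mul_add, mul_div_cancel₀ _ two_pi_pos.ne', Real.Angle.coe_add, haR]
    simp [cover]
  · ext <;> simp [K]
    ring
  · obtain ⟨A, hA⟩ := (isCompact_range (f := fun y => |a y / (2 * Real.pi)|) (by fun_prop)).bddAbove
    exact ⟨A, fun s p => by simpa [K] using hA (mem_range_self (s, cover p))⟩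

lemma IsLift.injective {f : annulus → annulus} {F : Strip → Strip} (hF : IsLift f F)
    (hf : Function.Injective f) : Function.Injective F := by
  intro p q hpq
  have hcover : f (cover p) = f (cover q) := by rw [← hF.semiconj.eq, hpq, hF.semiconj.eq]
  obtain ⟨k, rfl⟩ := cover_eq_cover_iff.1 (hf hcover)
  rw [(hF.commute k).eq] at hpq
  rw [deck_injective_left (hpq.trans (deck_zero _).symm), deck_zero]

section Turning

/-- The space of pairs of distinct points of the strip. -/
abbrev OffDiag : Type := ((diagonal Strip)ᶜ : Set (Strip × Strip))

variable {K : unitInterval × Strip → Strip}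

lemma exists_lift_bearing (hK : Continuous K) (hK0 : ∀ p, K (0, p) = p)
    (hinj : ∀ s, Function.Injective fun p => K (s, p)) :
    ∃ b : unitInterval × OffDiag → ℝ, Continuous b ∧ (∀ y, b (0, y) = 0) ∧
      ∀ s p q (h : p ≠ q), (bearing (K (s, p)) (K (s, q)) : Real.Angle) =
        bearing p q + (b (s, ⟨(p, q), h⟩) : Real.Angle) := by
  have hcont : Continuous fun u : unitInterval × OffDiag =>
      (bearing (K (u.1, u.2.1.1)) (K (u.1, u.2.1.2)) - bearing u.2.1.1 u.2.1.2 : Real.Angle) :=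
    .sub (continuousOn_coe_bearing.comp_continuous
        (f := fun u : unitInterval × OffDiag => (K (u.1, u.2.1.1), K (u.1, u.2.1.2)))
        (by fun_prop) fun u => (hinj u.1).ne u.2.2)
      (continuousOn_coe_bearing.comp_continuous (by fun_prop) fun u => u.2.2)
  obtain ⟨b, hb, hb0, hbR⟩ := exists_angle_lift hcont (by simp [hK0])
  exact ⟨b, hb, hb0, fun s p q h => by rw [hbR, add_sub_cancel]⟩

lemma continuous_bearing_path (hK : Continuous K) {p q : Strip}
    (h : ∀ s, (K (s, q)).1 < (K (s, p)).1) :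
    Continuous fun s => bearing (K (s, p)) (K (s, q)) :=
  continuous_iff_continuousAt.2 fun s =>
    (Complex.continuousAt_arg (.inl (sub_pos.2 (h s)))).comp
      (f := fun s => offset (K (s, p)) (K (s, q)))
      (continuous_offset.comp (f := fun s => (K (s, p), K (s, q))) (by fun_prop)).continuousAt

lemma exists_isTurning (hK : Continuous K) (hK0 : ∀ p, K (0, p) = p)
    (hinj : ∀ s, Function.Injective fun p => K (s, p))
    (hA : ∃ A, ∀ s p, |(K (s, p)).1 - p.1| ≤ A) : ∃ Λ, IsTurning (fun p => K (1, p)) Λ := by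
  obtain ⟨b, hb, hb0, hbK⟩ := exists_lift_bearing hK hK0 hinj
  obtain ⟨A, hA⟩ := hA
  let Λ : Strip × Strip → ℝ := Function.extend Subtype.val (fun y : OffDiag => b (1, y)) 0
  have hΛ (y : OffDiag) : Λ y = b (1, y) := Subtype.val_injective.extend_apply _ _ y
  have huniq {c : unitInterval → ℝ} (hc : Continuous c) (hc0 : c 0 = 0) {p q : Strip} (h : p ≠ q)
      (hcK : ∀ s, (bearing (K (s, p)) (K (s, q)) : Real.Angle) = bearing p q + (c s : Real.Angle)) :
      c 1 = Λ (p, q) := by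
    rw [hΛ ⟨(p, q), h⟩]
    refine congrFun (eq_of_coe_angle_eq (b := fun s => b (s, ⟨(p, q), h⟩)) hc (by fun_prop)
      (fun s => ?_) (x₀ := 0) (by rw [hc0, hb0])) 1
    exact add_left_cancel ((hcK s).symm.trans (hbK s p q h))
  refine ⟨Λ, ?_, fun p q => ?_, fun p q h => ?_, 2 * A, fun p q h => ?_⟩
  · rw [continuousOn_iff_continuous_domRestrict]
    exact (show Continuous fun y => b (1, y) by fun_prop).congr fun y => (hΛ y).symm
  · rcases eq_or_ne p q with rfl | h
    · rfl
    rw [hΛ ⟨(q, p), h.symm⟩]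
    refine huniq (c := fun s => b (s, ⟨(q, p), h.symm⟩)) (by fun_prop) (hb0 _) h fun s => ?_
    rw [coe_bearing_swap ((hinj s).ne h.symm), hbK s q p h.symm, coe_bearing_swap h.symm]
    abel
  · rw [hΛ ⟨(p, q), h⟩]
    exact hbK 1 p q h
  · have hlt (s) : (K (s, q)).1 < (K (s, p)).1 := by
      linarith [abs_le.1 (hA s p), abs_le.1 (hA s q)]
    have hne : p ≠ q := by
      rintro rfl
      exact (hlt 0).false
    rw [← huniq (c := fun s => bearing (K (s, p)) (K (s, q)) - bearing p q)
      ((continuous_bearing_path hK hlt).sub continuous_const) (by simp [hK0]) hne fun s => by simp]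
    ring

end Turning

/-- Since `F ∘ mirror F` lifts `f ∘ IA ∘ f ∘ IA = id`, it is a deck transformation. Conjugating by
the reflection shows that it is its own inverse. -/
lemma IsLift.isReversible {f : annulus → annulus} {F : Strip → Strip} (hF : IsLift f F)
    (hrev : ∀ z, f (IA (f (IA z))) = z) : IsReversible F := by
  have hid : IsLift id (F ∘ mirror F) := by
    have h := hF.comp hF.mirror
    rwa [show f ∘ IA ∘ f ∘ IA = id from funext hrev] at h
  obtain ⟨m, hm⟩ := hid.eq_deck
  have hmirror (p : Strip) : mirror F (F p) = deck (-m) p := by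
    have := congrArg reflect (hm (reflect p))
    simpa [reflect_deck] using this
  have hm0 : m = -m := by
    have h := hm (F 0)
    rw [Function.comp_apply, hmirror, (hF.commute _).eq] at h
    exact (deck_injective_left h).symm
  intro p
  rw [← Function.comp_apply (f := F), hm, show m = 0 by lia, deck_zero]

theorem exists_isRevLift (f : annulus ≃ₜ annulus) (hrev : ∀ z, f (IA z) = IA (f.symm z))
    (hf : MeasurePreserving f area area) (hiso : IsotopicToId f) : ∃ F, IsRevLift f F := by
  obtain ⟨H, hH, hhomeo, hH0, hH1⟩ := hiso
  obtain ⟨K, hK, hK0, hlift, hA⟩ := exists_lift_isotopy hH hH0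
  have hinj (s) : Function.Injective fun p => K (s, p) := (hlift s).injective <| by
    obtain ⟨e, he⟩ := hhomeo s
    simpa only [he] using e.injective
  have hF : IsLift f fun p => K (1, p) := by
    simpa only [show (fun z => H (1, z)) = f from funext hH1] using hlift 1
  exact ⟨_, hF, hf, hF.isReversible (by simp [hrev, IA_IA]), exists_isTurning hK hK0 hinj hA⟩

theorem IsRevLift.infinite_fixed_of_IA {f : annulus → annulus} {F : Strip → Strip}
    (hF : IsRevLift f F) {p : Strip} (hp : F p = p) :
    {z : annulus | (z : ℝ × ℝ) ∈ annulusInt ∧ IA z = z ∧ ∃ n, Odd n ∧ f^[n] z = z}.Infinite := by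
  have hinj : Function.Injective fun c : unitInterval => cover (0, c) := fun c d h =>
    (Prod.ext_iff.1 (polar.injective h)).2
  refine ((hF.infinite_oddAxis hp).image hinj.injOn).mono ?_
  rintro _ ⟨c, ⟨hc, n, hn, k, hk⟩, rfl⟩
  refine ⟨cover_mem_annulusInt hc, by rw [← cover_reflect, reflect_axis], n, hn, ?_⟩
  rw [← (hF.iterate n).semiconj.eq, hk, cover_deck]

end Strip

/-- **Theorem 1.3 (first part).** An area preserving reversible homeomorphism of
the closed annulus isotopic to the identity with an odd-periodic point has
infinitely many interior symmetric odd-periodic points. -/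
theorem infinitely_many_symmetric_odd_periodic_closed_annulus
    (f : annulus ≃ₜ annulus)
    (hrev : ∀ z : annulus, f (IA z) = IA (f.symm z))
    (harea : MeasurePreserving f
      ((volume : Measure (ℝ × ℝ)).comap (Subtype.val : annulus → ℝ × ℝ))
      ((volume : Measure (ℝ × ℝ)).comap (Subtype.val : annulus → ℝ × ℝ)))
    (hiso : IsotopicToId f)
    (hodd : ∃ (z : annulus) (k : ℕ), Odd k ∧ 1 ≤ k ∧ (⇑f)^[k] z = z) :
    {z : annulus | (z : ℝ × ℝ) ∈ annulusInt ∧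
        (∃ k : ℕ, Odd k ∧ 1 ≤ k ∧ (⇑f)^[k] z = z) ∧
        (∃ l : ℕ, 1 ≤ l ∧ (⇑f)^[l] z = IA z)}.Infinite := by
  obtain ⟨F, hF⟩ := Strip.exists_isRevLift f hrev harea hiso
  obtain ⟨z, k, hk, -, hz⟩ := hodd
  have hFk := hF.iterate k
  obtain ⟨m, hm⟩ : ∃ m : ℤ, F^[k] (Strip.lift z) = Strip.deck m (Strip.lift z) := by
    rw [← Strip.cover_eq_cover_iff, hFk.semiconj.eq, Strip.cover_lift, hz]
  have hinf := (hFk.deck_comp (-m)).infinite_fixed_of_IA (p := Strip.lift z) (by simp [hm])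
  refine hinf.mono ?_
  rintro w ⟨hint, hIA, n, hn, hw⟩
  rw [← Function.iterate_mul] at hw
  have hodd := hk.mul hn
  exact ⟨hint, ⟨_, hodd, hodd.pos, hw⟩, _, hodd.pos, hw.trans hIA.symm⟩
end
end

section
/- Let f : D → D be an area preserving reversible homeomorphism of the closed unit disk D which is isotopic to the identity (equivalently, orientation preserving). Then either (i) the set of odd-periodic points of f (points z with f^k(z) = z for some odd integer k ≥ 1) consists of exactly one point z, and this z lies in the open disk D̊ and satisfies f(z) = z and I(z) = z; or (ii) the set of interior symmetric odd-periodic points of f (points z ∈ D̊ with f^k(z) = z for some odd k ≥ 1 and f^ℓ(z) = I(z) for some integer ℓ ≥ 1) is infinite. -/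
open MeasureTheory Set

noncomputable section

/-- The closed unit disk `D = {z : |z| ≤ 1}`. -/
def disk : Set (ℝ × ℝ) := {p | enorm2 p ≤ 1}

/-- The open unit disk `D̊ = {z : |z| < 1}`, the interior of `D`. -/
def diskInt : Set (ℝ × ℝ) := {p | enorm2 p < 1}

lemma refl2_mem_disk {p : ℝ × ℝ} (h : p ∈ disk) : refl2 p ∈ disk := by
  simpa [disk, enorm2_refl2] using h

/-- The restriction `I_D` of the reflection to the closed disk. -/
def ID : disk → disk := fun z => ⟨refl2 z, refl2_mem_disk z.2⟩

/-!
An isotopy from the identity to `f` provides, for all pairs `x ≠ y`, a continuous real angle by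
which `f` turns the direction from `x` to `y`. If `f` maps a point `a` of the axis of `I` to an axis
point `b`, then `f` swaps `a` and `b` by reversibility, so the displacements of `f` at `a` and `b`
are opposite. At an axis point `x` with nonzero displacement, the angle of the pair `x`, `I (f x)`
is twice the argument of the displacement up to a constant, and being symmetric in the pair it takes
the same value at `a` and `b`. A displacement that does not vanish between `a` and `b` would thus
point in the same direction at both; so there is a fixed point on the axis between them.
Preservation of area forces `f` to map some interior axis point to the axis.

Suppose that the odd-periodic points on the open axis are finite in number, and let `σ` be the
highest one. Replacing `f` by an odd iterate, `σ` and any other odd-periodic point `w` are fixed.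
Normalise the angle `φ` by which points turn around `σ` to vanish at `w`. No odd iterate has a fixed
point on the axis above `σ`, hence the image of this part of the axis does not meet it, and
reversibility bounds the total turn of every odd iterate, uniformly in the iterate. Since `f`
preserves the measure, `φ` has integral zero. If `θ` is the angle of a point around `σ`, then
`θ + φ - θ ∘ f` also has integral zero; but it is a multiple of `2π` of constant sign, nonzero on an
open set, which is absurd.
-/

open scoped Real ComplexConjugate Topology

section ComplexLogarithm

variable {X : Type*} [TopologicalSpace X]

lemma eq_of_exp_eq_one_of_isPreconnected {s : Set X} (hs : IsPreconnected s) {g : X → ℂ}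
    (hg : ContinuousOn g s) (h1 : ∀ x ∈ s, Complex.exp (g x) = 1) {x y : X} (hx : x ∈ s)
    (hy : y ∈ s) : g x = g y := by
  have := isPreconnected_iff_preconnectedSpace.1 hs
  have cov := Complex.isCoveringMap_exp
  exact cov.isSeparatedMap.const_of_comp cov.isLocalHomeomorph.isLocallyInjective
    (continuousOn_iff_continuous_domRestrict.1 hg)
    (fun a b => Subtype.ext ((h1 a a.2).trans (h1 b b.2).symm)) ⟨x, hx⟩ ⟨y, hy⟩

lemma exists_continuous_log_of_homotopy (K : C(unitInterval × X, ℂ)) (hK : ∀ p, K p ≠ 0)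
    (h0 : ∀ x, K (0, x) = 1) :
    ∃ G : C(unitInterval × X, ℂ), (∀ p, Complex.exp (G p) = K p) ∧ ∀ x, G (0, x) = 0 := by
  let K' : C(unitInterval × X, {z : ℂ // z ≠ 0}) := ⟨fun p => ⟨K p, hK p⟩, by fun_prop⟩
  have hK' : ∀ x, K' (0, x) = ⟨Complex.exp ((0 : C(X, ℂ)) x), Complex.exp_ne_zero _⟩ := fun x =>
    Subtype.ext ((h0 x).trans Complex.exp_zero.symm)
  have cov := Complex.isCoveringMap_exp
  exact ⟨cov.liftHomotopy K' 0 hK',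
    fun p => congrArg Subtype.val (congrFun (cov.liftHomotopy_lifts K' 0 hK') p),
    cov.liftHomotopy_zero K' 0 hK'⟩

lemma exists_continuous_log_of_path (v : C(unitInterval, ℂ)) (hv : ∀ t, v t ≠ 0) :
    ∃ l : C(unitInterval, ℂ), ∀ t, Complex.exp (l t) = v t := by
  obtain ⟨l, hl, -⟩ := Complex.isCoveringMap_exp.exists_path_lifts
    ⟨fun t => ⟨v t, hv t⟩, by fun_prop⟩ (Complex.log (v 0))
    (Subtype.ext (Complex.exp_log (hv 0)).symm)
  exact ⟨l, fun t => congrArg Subtype.val (congrFun hl t)⟩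

-- `M` is twice the argument of `v` up to a constant, so `v` returns to the same oriented line.
lemma exists_pos_mul_eq_of_exp_mul_conj_eq {v : C(unitInterval, ℂ)} (hv : ∀ t, v t ≠ 0)
    {M : unitInterval → ℂ} (hM : Continuous M) (hMv : ∀ t, Complex.exp (M t) * conj (v t) = v t)
    (h01 : M 0 = M 1) : ∃ r : ℝ, 0 < r ∧ v 1 = r * v 0 := by
  obtain ⟨l, hl⟩ := exists_continuous_log_of_path v hv
  have hconst : M 0 - (l 0 - conj (l 0)) = M 1 - (l 1 - conj (l 1)) := by
    refine eq_of_exp_eq_one_of_isPreconnected isPreconnected_univ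
      (g := fun t => M t - (l t - conj (l t))) ?_ (fun t _ => ?_) (mem_univ 0) (mem_univ 1)
    · have := Complex.continuous_conj
      fun_prop
    · rw [Complex.exp_sub, Complex.exp_sub, Complex.exp_conj, hl, div_div_eq_mul_div, hMv,
        div_self (hv t)]
  have hreal : conj (l 1 - l 0) = l 1 - l 0 := by
    rw [map_sub]
    linear_combination h01 - hconst
  obtain ⟨r, hr⟩ := Complex.conj_eq_iff_real.1 hreal
  refine ⟨Real.exp r, Real.exp_pos r, ?_⟩
  rw [Complex.ofReal_exp, ← hr, ← hl, ← hl, ← Complex.exp_add, sub_add_cancel]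

end ComplexLogarithm

section Reversible

variable {α : Type*} {ρ f : α → α}

/-- `f` is reversible with respect to `ρ`. When `ρ` is an involution and `f` is invertible, this
is the usual condition `f ∘ ρ = ρ ∘ f⁻¹`, written without the inverse. -/
def IsReversibleBy (ρ f : α → α) : Prop := ∀ x, f (ρ (f x)) = ρ x

namespace IsReversibleBy

lemma iterate (h : IsReversibleBy ρ f) (n : ℕ) : IsReversibleBy ρ f^[n] := by
  induction n with
  | zero => exact fun _ => rfl
  | succ n ih =>
    intro x
    rw [Function.iterate_succ_apply, Function.iterate_succ_apply', h, ih]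

lemma leftInverse (h : IsReversibleBy ρ f) (hρ : Function.Involutive ρ) :
    Function.LeftInverse (ρ ∘ f ∘ ρ) f := fun x => by
  rw [Function.comp_apply, Function.comp_apply, h, hρ]

lemma rightInverse (h : IsReversibleBy ρ f) (hρ : Function.Involutive ρ) :
    Function.RightInverse (ρ ∘ f ∘ ρ) f := fun x => by
  rw [Function.comp_apply, Function.comp_apply, h, hρ]

lemma apply_apply_reflect_of_fixed (h : IsReversibleBy ρ f) {x : α} (hx : f x = x) :
    f (ρ x) = ρ x := by
  have := h x
  rwa [hx] at this

lemma measurePreserving_map [MeasurableSpace α] (h : IsReversibleBy ρ f) {μ : Measure α}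
    (hρ : Measurable ρ) (hf : MeasurePreserving f μ μ) :
    MeasurePreserving f (μ.map ρ) (μ.map ρ) := by
  refine ⟨hf.measurable, ?_⟩
  calc (μ.map ρ).map f = ((μ.map f).map ρ).map f := by rw [hf.map_eq]
    _ = μ.map (f ∘ ρ ∘ f) := by
      rw [Measure.map_map hρ hf.measurable, Measure.map_map hf.measurable (hρ.comp hf.measurable)]
    _ = μ.map ρ := congrArg μ.map (funext h)

end IsReversibleBy

end Reversible

section AngleLift

variable {X : Type*} [TopologicalSpace X] {c : X → ℂ} {f : X → X} {L : X → X → ℂ}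

/-- `L x y` is a branch of the logarithm of `(c (f y) - c (f x)) / (c y - c x)`, continuous on the
pairs of distinct points and symmetric in `(x, y)`. Here `X` is a planar space with complex
coordinate `c`, and the imaginary part of `L x y` is the angle by which the continuous map `f`
turns the direction from `x` to `y`. The values on the diagonal are irrelevant. -/
structure IsAngleLift (c : X → ℂ) (f : X → X) (L : X → X → ℂ) : Prop where
  continuous : Continuous f
  continuousOn : ContinuousOn (fun q : X × X => L q.1 q.2) (diagonal X)ᶜ
  symm : ∀ x y, L x y = L y x
  exp_mul : ∀ x y, x ≠ y → Complex.exp (L x y) * (c y - c x) = c (f y) - c (f x)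

/-- The slope in `(t, x, y)` of the `t`-th stage of the homotopy `H` along the pair `x ≠ y`. -/
def homotopySlope (c : X → ℂ) (H : C(unitInterval × X, X))
    (p : unitInterval × ↥(diagonal X)ᶜ) : ℂ :=
  (c (H (p.1, p.2.1.2)) - c (H (p.1, p.2.1.1))) / (c p.2.1.2 - c p.2.1.1)

lemma continuous_homotopySlope (hc : Continuous c) (hcinj : Function.Injective c)
    (H : C(unitInterval × X, X)) : Continuous (homotopySlope c H) := by
  unfold homotopySlope
  refine Continuous.div (by fun_prop) (by fun_prop) fun p => ?_
  exact sub_ne_zero.2 fun h => p.2.2 (hcinj h).symm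

lemma homotopySlope_swap (H : C(unitInterval × X, X)) (t : unitInterval)
    {x y : X} (h : (x, y) ∈ (diagonal X)ᶜ) (h' : (y, x) ∈ (diagonal X)ᶜ) :
    homotopySlope c H (t, ⟨(x, y), h⟩) = homotopySlope c H (t, ⟨(y, x), h'⟩) := by
  simp only [homotopySlope]
  rw [← neg_sub (c (H (t, x))), ← neg_sub (c x), neg_div_neg_eq]

open Classical in
theorem exists_isAngleLift_of_homotopy (hc : Continuous c) (hcinj : Function.Injective c)
    (H : C(unitInterval × X, X)) (hH : ∀ t, Function.Injective fun x => H (t, x))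
    (h0 : ∀ x, H (0, x) = x) : ∃ L, IsAngleLift c (fun x => H (1, x)) L := by
  have hdiff {x y : X} (h : x ≠ y) : c y - c x ≠ 0 := sub_ne_zero.2 fun e => h (hcinj e).symm
  have hne (p) : homotopySlope c H p ≠ 0 :=
    div_ne_zero (hdiff ((hH p.1).ne p.2.2)) (hdiff p.2.2)
  obtain ⟨G, hG, hG0⟩ := exists_continuous_log_of_homotopy
    ⟨homotopySlope c H, continuous_homotopySlope hc hcinj H⟩ hne
    (fun p => by simp only [ContinuousMap.coe_mk, homotopySlope, h0, div_self (hdiff p.2)])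
  replace hG : ∀ p, Complex.exp (G p) = homotopySlope c H p := hG
  have hsymm : ∀ {x y : X} (h : x ≠ y), G (1, ⟨(x, y), h⟩) = G (1, ⟨(y, x), h.symm⟩) := by
    intro x y h
    have := eq_of_exp_eq_one_of_isPreconnected isPreconnected_univ
      (g := fun t => G (t, ⟨(x, y), h⟩) - G (t, ⟨(y, x), h.symm⟩)) (by fun_prop)
      (fun t _ => by
        rw [Complex.exp_sub, hG, hG, homotopySlope_swap H t h h.symm, div_self (hne _)])
      (mem_univ 1) (mem_univ 0)
    simpa only [hG0, sub_zero, sub_eq_zero] using this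
  refine ⟨fun x y => if h : x ≠ y then G (1, ⟨(x, y), h⟩) else 0, by fun_prop, ?_, ?_, ?_⟩
  · rw [continuousOn_iff_continuous_domRestrict]
    have : Continuous fun q : ↥(diagonal X)ᶜ => G (1, q) := by fun_prop
    refine this.congr fun q => ?_
    rw [domRestrict_apply, dif_pos (show q.1.1 ≠ q.1.2 from q.2)]
  · intro x y
    rcases eq_or_ne x y with rfl | h
    · rfl
    · rw [dif_pos h, dif_pos h.symm, hsymm h]
  · intro x y h
    rw [dif_pos h, hG]
    exact div_mul_cancel₀ _ (hdiff h)

namespace IsAngleLift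

lemma injective (hL : IsAngleLift c f L) (hc : Function.Injective c) : Function.Injective f := by
  intro x y h
  by_contra hxy
  have := hL.exp_mul x y hxy
  rw [h, sub_self, mul_eq_zero, sub_eq_zero] at this
  exact this.elim (Complex.exp_ne_zero _) fun e => hxy (hc e).symm

lemma iterate (hL : IsAngleLift c f L) (hc : Function.Injective c) (n : ℕ) :
    IsAngleLift c f^[n] fun x y => ∑ i ∈ Finset.range n, L (f^[i] x) (f^[i] y) := by
  have hinj := hL.injective hc
  refine ⟨hL.continuous.iterate n, ?_, ?_, fun x y hxy => ?_⟩
  · refine continuousOn_finsetSum _ fun i _ => ?_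
    have := hL.continuous.iterate i
    exact hL.continuousOn.comp (this.prodMap this).continuousOn fun q hq e => hq (hinj.iterate i e)
  · exact fun x y => Finset.sum_congr rfl fun i _ => hL.symm _ _
  · induction n with
    | zero => simp
    | succ n ih =>
      rw [Finset.sum_range_succ, Complex.exp_add, mul_right_comm, ih, mul_comm,
        hL.exp_mul _ _ ((hinj.iterate n).ne hxy), Function.iterate_succ_apply',
        Function.iterate_succ_apply']

lemma sub_int_mul_two_pi_I (hL : IsAngleLift c f L) (n : ℤ) :
    IsAngleLift c f fun x y => L x y - n * (2 * π * Complex.I) := by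
  refine ⟨hL.continuous, hL.continuousOn.sub continuousOn_const,
    fun x y => by rw [hL.symm], fun x y h => ?_⟩
  rw [Complex.exp_sub, Complex.exp_int_mul_two_pi_mul_I, div_one, hL.exp_mul x y h]

lemma continuousOn_right (hL : IsAngleLift c f L) (x : X) : ContinuousOn (L x) {x}ᶜ :=
  hL.continuousOn.comp (by fun_prop : Continuous fun y => (x, y)).continuousOn fun _ hy e =>
    hy (Eq.symm e)

lemma exp_eq_one_of_fixed (hL : IsAngleLift c f L) (hc : Function.Injective c) {x y : X}
    (hxy : x ≠ y) (hx : f x = x) (hy : f y = y) : Complex.exp (L x y) = 1 := by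
  have := hL.exp_mul x y hxy
  rw [hx, hy] at this
  exact (mul_eq_right₀ (sub_ne_zero.2 fun e => hxy (hc e).symm)).1 this

end IsAngleLift

end AngleLift

section Reflection

variable {X : Type*} {c : X → ℂ} {ρ f : X → X} {L : X → X → ℂ}

lemma involutive_of_coord_reflect (hc : Function.Injective c) (hρ : ∀ x, c (ρ x) = -conj (c x)) :
    Function.Involutive ρ := fun x => hc <| by
  rw [hρ, hρ, map_neg, neg_neg, Complex.conj_conj]

variable [TopologicalSpace X]

lemma continuous_of_coord_reflect (hc : Topology.IsEmbedding c)
    (hρ : ∀ x, c (ρ x) = -conj (c x)) : Continuous ρ := by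
  rw [hc.continuous_iff, show c ∘ ρ = fun x => -conj (c x) from funext hρ]
  exact (Complex.continuous_conj.comp hc.continuous).neg

namespace IsAngleLift

-- If there were no fixed point, the displacement `f x - x` would rotate along the path by the same
-- angle as at the start; but it is reversed at the endpoint, because `f` swaps the two ends.
theorem exists_fixed_of_path (hL : IsAngleLift c f L) (hc : Topology.IsEmbedding c)
    (hρ : ∀ x, c (ρ x) = -conj (c x)) (hrev : IsReversibleBy ρ f) (γ : C(unitInterval, X))
    (hγ : ∀ t, ρ (γ t) = γ t) (h01 : f (γ 0) = γ 1) : ∃ t, f (γ t) = γ t := by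
  by_contra! hne
  have hinv := involutive_of_coord_reflect hc.injective hρ
  have hρc := continuous_of_coord_reflect hc hρ
  have hcc := hc.continuous
  have hfc := hL.continuous
  have h10 : f (γ 1) = γ 0 := by rw [← hγ 1, ← h01, hrev, hγ]
  have hv (t) : c (f (γ t)) - c (γ t) ≠ 0 := sub_ne_zero.2 (hc.injective.ne (hne t))
  have hdist (t) : γ t ≠ ρ (f (γ t)) := fun e => hne t (hinv.injective (by rw [← e, hγ]))
  have hM : Continuous fun t => L (γ t) (ρ (f (γ t))) := by
    have : Continuous fun t => (γ t, ρ (f (γ t))) := by fun_prop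
    exact hL.continuousOn.comp_continuous this hdist
  have hMv (t) : Complex.exp (L (γ t) (ρ (f (γ t)))) * conj (c (f (γ t)) - c (γ t)) =
      c (f (γ t)) - c (γ t) := by
    have hγc : c (γ t) = -conj (c (γ t)) := by rw [← hρ, hγ]
    have := hL.exp_mul _ _ (hdist t)
    rw [hrev, hγ, hρ] at this
    rw [map_sub]
    linear_combination -this - Complex.exp (L (γ t) (ρ (f (γ t)))) * hγc
  obtain ⟨r, hr, h⟩ := exists_pos_mul_eq_of_exp_mul_conj_eq
    (v := ⟨fun t => c (f (γ t)) - c (γ t), by fun_prop⟩) hv hM hMv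
    (by rw [h01, h10, hγ, hγ, hL.symm])
  rw [ContinuousMap.coe_mk, h10, h01] at h
  have hflip : ((1 + r : ℝ) : ℂ) * (c (γ 1) - c (γ 0)) = 0 := by
    push_cast
    linear_combination -h
  have hne01 : c (γ 1) - c (γ 0) ≠ 0 := h01 ▸ hv 0
  exact mul_ne_zero (by exact_mod_cast (by positivity : 1 + r ≠ 0)) hne01 hflip

-- `x ↦ ρ (f x)` is an involution reversing angles around `s`, so `L s (ρ (f x))` and `conj (L s x)`
-- are logarithms of inverse numbers.
lemma exp_reflect_apply_add_conj (hL : IsAngleLift c f L) (hc : Function.Injective c)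
    (hρ : ∀ x, c (ρ x) = -conj (c x)) (hrev : IsReversibleBy ρ f) {s x : X} (hfs : f s = s)
    (hρs : ρ s = s) (hx : x ≠ s) : Complex.exp (L s (ρ (f x)) + conj (L s x)) = 1 := by
  have hne : ρ (f x) ≠ s := fun e =>
    hx (hL.injective hc ((involutive_of_coord_reflect hc hρ).injective (by rw [e, hfs, hρs])))
  have hsub (y) : c (ρ y) - c s = -conj (c y - c s) := by
    conv_lhs => rw [← hρs]
    rw [hρ, hρ, map_sub]
    ring
  have h1 := congrArg conj (hL.exp_mul s x hx.symm)
  have h2 := hL.exp_mul s (ρ (f x)) hne.symm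
  rw [hfs, map_mul, ← Complex.exp_conj] at h1
  rw [hrev, hfs, hsub, hsub, ← h1] at h2
  have hx0 : conj (c x - c s) ≠ 0 := (map_ne_zero _).2 (sub_ne_zero.2 (hc.ne hx))
  rw [Complex.exp_add]
  apply mul_right_cancel₀ hx0
  linear_combination -h2

lemma reflect_apply_add_conj_eq (hL : IsAngleLift c f L) (hc : Topology.IsEmbedding c)
    (hρ : ∀ x, c (ρ x) = -conj (c x)) (hrev : IsReversibleBy ρ f) {s : X}
    (hpre : IsPreconnected {s}ᶜ) (hfs : f s = s) (hρs : ρ s = s) {x y : X} (hx : x ≠ s)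
    (hy : y ≠ s) : L s (ρ (f x)) + conj (L s x) = L s (ρ (f y)) + conj (L s y) := by
  have hinv := involutive_of_coord_reflect hc.injective hρ
  have hLs := hL.continuousOn_right s
  refine eq_of_exp_eq_one_of_isPreconnected hpre
    (g := fun x => L s (ρ (f x)) + conj (L s x)) (ContinuousOn.add ?_ ?_)
    (fun x hx => hL.exp_reflect_apply_add_conj hc.injective hρ hrev hfs hρs hx) hx hy
  · exact hLs.comp ((continuous_of_coord_reflect hc hρ).comp hL.continuous).continuousOn
      fun x hx e => hx (hL.injective hc.injective (hinv.injective (by rw [e, hfs, hρs])))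
  · exact Complex.continuous_conj.comp_continuousOn hLs

theorem im_reflect_apply (hL : IsAngleLift c f L) (hc : Topology.IsEmbedding c)
    (hρ : ∀ x, c (ρ x) = -conj (c x)) (hrev : IsReversibleBy ρ f) {s : X}
    (hpre : IsPreconnected {s}ᶜ) (hfs : f s = s) (hρs : ρ s = s) {w : X} (hw : w ≠ s)
    (hfw : f w = w) (hLw : L s w = 0) {x : X} (hx : x ≠ s) :
    (L s (ρ (f x))).im = (L s x).im := by
  have hinv := involutive_of_coord_reflect hc.injective hρ
  have hρw : ρ w ≠ s := fun e => hw (hinv.injective (e.trans hρs.symm))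
  have hxw := congrArg Complex.im (hL.reflect_apply_add_conj_eq hc hρ hrev hpre hfs hρs hx hw)
  have hww := congrArg Complex.im (hL.reflect_apply_add_conj_eq hc hρ hrev hpre hfs hρs hρw hw)
  rw [hrev.apply_apply_reflect_of_fixed hfw, hinv] at hww
  simp only [hfw, hLw, Complex.add_im, Complex.conj_im, Complex.zero_im] at hxw hww
  linarith

end IsAngleLift

end Reflection

section Disk

/-- The coordinate `x + i y` on the disk, in which the reflection `I` reads `ζ ↦ -conj ζ`. -/
def diskCoord (z : disk) : ℂ := ⟨z.1.1, z.1.2⟩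

/-- The point `(0, t)` of the axis of `I`, with `t` clamped to `[-1, 1]`. -/
def axisPoint (t : ℝ) : disk :=
  ⟨(0, projIcc (-1 : ℝ) 1 (by norm_num) t), by
    have := (projIcc (-1 : ℝ) 1 (by norm_num) t).2
    change √((0 : ℝ) ^ 2 + _ ^ 2) ≤ 1
    rwa [zero_pow two_ne_zero, zero_add, Real.sqrt_sq_eq_abs, abs_le]⟩

lemma isEmbedding_diskCoord : Topology.IsEmbedding diskCoord :=
  Complex.equivRealProdCLM.symm.toHomeomorph.isEmbedding.comp .subtypeVal

lemma diskCoord_ID (z : disk) : diskCoord (ID z) = -conj (diskCoord z) := by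
  apply Complex.ext <;> simp [diskCoord, ID, refl2]

lemma norm_equivRealProd_symm (p : ℝ × ℝ) : ‖Complex.equivRealProdCLM.symm p‖ = enorm2 p :=
  Complex.norm_eq_sqrt_sq_add_sq _

lemma norm_diskCoord (z : disk) : ‖diskCoord z‖ = enorm2 z := norm_equivRealProd_symm z

lemma disk_eq_preimage_closedBall :
    disk = Complex.equivRealProdCLM.symm ⁻¹' Metric.closedBall 0 1 := by
  ext p
  rw [mem_preimage, mem_closedBall_zero_iff, norm_equivRealProd_symm, disk, mem_ofPred_eq]

lemma convex_disk : Convex ℝ disk := by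
  rw [disk_eq_preimage_closedBall]
  exact (convex_closedBall 0 1).linear_preimage Complex.equivRealProdCLM.symm.toLinearMap

lemma isCompact_disk : IsCompact disk := by
  rw [disk_eq_preimage_closedBall]
  exact Complex.equivRealProdCLM.symm.toHomeomorph.isCompact_preimage.2 (isCompact_closedBall 0 1)

lemma exists_diskCoord_eq {v : ℂ} (hv : ‖v‖ ≤ 1) : ∃ z, diskCoord z = v :=
  ⟨⟨(v.re, v.im), (Complex.norm_eq_sqrt_sq_add_sq v).symm.trans_le hv⟩, rfl⟩

lemma involutive_ID : Function.Involutive ID :=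
  involutive_of_coord_reflect isEmbedding_diskCoord.injective diskCoord_ID

lemma continuous_ID : Continuous ID :=
  continuous_of_coord_reflect isEmbedding_diskCoord diskCoord_ID

lemma continuous_axisPoint : Continuous axisPoint := by
  unfold axisPoint
  fun_prop

lemma ID_axisPoint (t : ℝ) : ID (axisPoint t) = axisPoint t := by
  simp [ID, refl2, axisPoint]

lemma snd_axisPoint {t : ℝ} (ht : t ∈ Icc (-1) 1) : (axisPoint t).1.2 = t :=
  congrArg Subtype.val (projIcc_of_mem (by norm_num) ht)

lemma diskCoord_axisPoint {t : ℝ} (ht : t ∈ Icc (-1) 1) :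
    diskCoord (axisPoint t) = t * Complex.I := by
  apply Complex.ext
  · simp [diskCoord, axisPoint]
  · simp [diskCoord, snd_axisPoint ht]

lemma injOn_axisPoint : InjOn axisPoint (Icc (-1) 1) := fun s hs t ht h => by
  rw [← snd_axisPoint hs, h, snd_axisPoint ht]

lemma snd_mem_Icc (z : disk) : z.1.2 ∈ Icc (-1 : ℝ) 1 :=
  abs_le.1 ((Complex.abs_im_le_norm (diskCoord z)).trans ((norm_diskCoord z).trans_le z.2))

lemma eq_axisPoint_of_fst_eq_zero {z : disk} (h : z.1.1 = 0) : z = axisPoint z.1.2 :=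
  Subtype.ext (Prod.ext h (snd_axisPoint (snd_mem_Icc z)).symm)

lemma norm_diskCoord_axisPoint_lt_one {t : ℝ} (ht : t ∈ Ioo (-1) 1) :
    ‖diskCoord (axisPoint t)‖ < 1 := by
  rw [diskCoord_axisPoint (Ioo_subset_Icc_self ht)]
  simpa [abs_lt] using ht

lemma axisPoint_mem_diskInt {t : ℝ} (ht : t ∈ Ioo (-1) 1) : (axisPoint t : ℝ × ℝ) ∈ diskInt :=
  (norm_diskCoord _).symm.trans_lt (norm_diskCoord_axisPoint_lt_one ht)

end Disk

section Measure

variable {X : Type*} [TopologicalSpace X] [MeasurableSpace X]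

lemma isOpenPosMeasure_comap_subtype_val {μ : Measure X} [μ.IsOpenPosMeasure] {s : Set X}
    (hs : MeasurableSet s) (hsi : s ⊆ closure (interior s)) :
    (μ.comap (Subtype.val : s → X)).IsOpenPosMeasure where
  open_pos := by
    rintro _ ⟨V, hV, rfl⟩ ⟨z, hz⟩
    rw [(MeasurableEmbedding.subtype_coe hs).comap_apply, Subtype.image_preimage_coe]
    have hpos := (hV.inter isOpen_interior).measure_pos μ
      (mem_closure_iff.1 (hsi z.2) V hV hz)
    rw [inter_comm] at hpos
    exact (hpos.trans_le (measure_mono (inter_subset_inter_left V interior_subset))).ne'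

instance : ((volume : Measure (ℝ × ℝ)).comap (Subtype.val : disk → ℝ × ℝ)).IsOpenPosMeasure := by
  refine isOpenPosMeasure_comap_subtype_val isCompact_disk.measurableSet ?_
  rw [convex_disk.closure_interior_eq_closure_of_nonempty_interior]
  · exact subset_closure
  · refine ⟨0, mem_interior_iff_mem_nhds.2 ?_⟩
    rw [disk_eq_preimage_closedBall]
    refine Complex.equivRealProdCLM.symm.continuous.continuousAt.preimage_mem_nhds ?_
    rw [map_zero]
    exact Metric.closedBall_mem_nhds 0 one_pos

instance : IsFiniteMeasure ((volume : Measure (ℝ × ℝ)).comap (Subtype.val : disk → ℝ × ℝ)) where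
  measure_univ_lt_top := by
    rw [(MeasurableEmbedding.subtype_coe isCompact_disk.measurableSet).comap_apply, image_univ,
      Subtype.range_coe]
    exact isCompact_disk.measure_lt_top

-- If `f ⁻¹' B ⊆ A` then `μ (f ⁻¹' B) = μ B ≥ μ A`, so `f ⁻¹' B` fills `A` up to a null set.
lemma eq_empty_of_preimage_subset_of_measure_le {μ : Measure X} [IsFiniteMeasure μ]
    [μ.IsOpenPosMeasure] {f : X → X} (hf : MeasurePreserving f μ μ) {A B U : Set X}
    (hB : MeasurableSet B) (hBA : f ⁻¹' B ⊆ A) (hAB : μ A ≤ μ B) (hU : IsOpen U) (hUA : U ⊆ A)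
    (hUB : Disjoint U (f ⁻¹' B)) : U = ∅ := by
  refine (hU.measure_eq_zero_iff μ).1 (measure_mono_null (subset_sdiff.2 ⟨hUA, hUB⟩) ?_)
  have hpre := hf.measure_preimage hB.nullMeasurableSet
  rw [measure_sdiff hBA (hf.measurable hB).nullMeasurableSet (measure_ne_top _ _), hpre,
    tsub_eq_zero_of_le hAB]

end Measure

section AxisFixedPoint

variable {f : disk → disk} {L : disk → disk → ℂ}

lemma exists_fixed_axisPoint_of_apply_eq (hL : IsAngleLift diskCoord f L)
    (hrev : IsReversibleBy ID f) {α β : ℝ} (hα : -1 ≤ α) (hβ : β ≤ 1) {a b : ℝ}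
    (ha : a ∈ Ioo α β) (hb : b ∈ Icc α β) (h : f (axisPoint a) = axisPoint b) :
    ∃ t ∈ Ioo α β, f (axisPoint t) = axisPoint t := by
  rcases eq_or_ne a b with rfl | hab
  · exact ⟨a, ha, h⟩
  obtain ⟨τ, hτ⟩ := hL.exists_fixed_of_path isEmbedding_diskCoord diskCoord_ID hrev
    ⟨fun τ => axisPoint (AffineMap.lineMap a b (τ : ℝ)), continuous_axisPoint.comp (by fun_prop)⟩
    (fun _ => ID_axisPoint _) (by simpa using h)
  obtain ⟨t, ht, htfix⟩ : ∃ t ∈ uIcc a b, f (axisPoint t) = axisPoint t :=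
    ⟨_, segment_eq_uIcc a b ▸ lineMap_mem_segment ℝ a b τ.2, hτ⟩
  have htb : t ≠ b := by
    rintro rfl
    have := hL.injective isEmbedding_diskCoord.injective (htfix.trans h.symm)
    exact hab (injOn_axisPoint ⟨hα.trans hb.1, hb.2.trans hβ⟩
      ⟨hα.trans ha.1.le, ha.2.le.trans hβ⟩ this).symm
  refine ⟨t, ?_, htfix⟩
  rw [mem_uIcc] at ht
  grind

/-- The open left (`c < 0`) or right (`c > 0`) half of the disk. -/
def halfDisk (c : ℝ) : Set disk := {z | 0 < c * z.1.1}

lemma isOpen_halfDisk (c : ℝ) : IsOpen (halfDisk c) :=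
  isOpen_lt continuous_const (by fun_prop)

lemma isPreconnected_halfDisk (c : ℝ) : IsPreconnected (halfDisk c) := by
  have hlin : IsLinearMap ℝ fun p : ℝ × ℝ => c * p.1 := (c • LinearMap.fst ℝ ℝ ℝ).isLinear
  have himage : Subtype.val '' halfDisk c = disk ∩ {p | 0 < c * p.1} :=
    Subtype.image_preimage_coe disk {p | 0 < c * p.1}
  rw [← Topology.IsInducing.subtypeVal.isPreconnected_image, himage]
  exact (convex_disk.inter (convex_halfSpace_gt hlin 0)).isPreconnected

lemma preimage_ID_halfDisk (c : ℝ) : ID ⁻¹' halfDisk c = halfDisk (-c) := by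
  ext z
  simp [halfDisk, ID, refl2]

lemma disjoint_halfDisk_neg (c : ℝ) : Disjoint (halfDisk c) (halfDisk (-c)) := by
  rw [Set.disjoint_left]
  intro z (h : 0 < c * z.1.1) (h' : 0 < -c * z.1.1)
  linarith

lemma mem_halfDisk_or_neg {c : ℝ} (hc : c ≠ 0) {z : disk} (hz : z.1.1 ≠ 0) :
    z ∈ halfDisk c ∪ halfDisk (-c) := by
  simpa [halfDisk, or_comm] using (mul_ne_zero hc hz).lt_or_gt

lemma axisPoint_zero_mem_closure_halfDisk {c : ℝ} (hc : c ≠ 0) :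
    axisPoint 0 ∈ closure (halfDisk c) := by
  rw [isEmbedding_diskCoord.closure_eq_preimage_closure_image, mem_preimage,
    diskCoord_axisPoint (by norm_num), Complex.ofReal_zero, zero_mul]
  have hlim : Filter.Tendsto (fun e : ℝ => ((c * e : ℝ) : ℂ)) (𝓝[>] 0) (𝓝 0) := by
    have : Continuous fun e : ℝ => ((c * e : ℝ) : ℂ) := by fun_prop
    simpa using (this.tendsto 0).mono_left nhdsWithin_le_nhds
  refine mem_closure_of_tendsto hlim ?_
  filter_upwards [self_mem_nhdsWithin, hlim.norm.eventually_lt_const (norm_zero.trans_lt one_pos)]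
    with e (he : 0 < e) hlt
  obtain ⟨z, hz⟩ := exists_diskCoord_eq hlt.le
  have hfst : z.1.1 = c * e := congrArg Complex.re hz
  refine ⟨z, ?_, hz⟩
  rw [halfDisk, mem_ofPred_eq, hfst, ← mul_assoc]
  exact mul_pos (mul_self_pos.2 hc) he

lemma isPreconnected_preimage_halfDisk (hf : Continuous f) (hrev : IsReversibleBy ID f) (c : ℝ) :
    IsPreconnected (f ⁻¹' halfDisk c) := by
  rw [← image_eq_preimage_of_inverse (hrev.rightInverse involutive_ID)
    (hrev.leftInverse involutive_ID)]
  exact (isPreconnected_halfDisk c).image _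
    (continuous_ID.comp (hf.comp continuous_ID)).continuousOn

section Measure

variable {μ : Measure disk} [IsFiniteMeasure μ] [μ.IsOpenPosMeasure]

-- Otherwise the preimage would fill `halfDisk d`, while the points of `halfDisk d` close to
-- `axisPoint 0` are mapped to `halfDisk c`.
lemma not_preimage_halfDisk_subset (hf : MeasurePreserving f μ μ) (hfc : Continuous f) {c d : ℝ}
    (h0 : f (axisPoint 0) ∈ halfDisk c) (hd : d ≠ 0) (hμ : μ (halfDisk d) ≤ μ (halfDisk (-c))) :
    ¬f ⁻¹' halfDisk (-c) ⊆ halfDisk d := by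
  intro hsub
  have hopen := (isOpen_halfDisk c).preimage hfc
  refine (mem_closure_iff.1 (axisPoint_zero_mem_closure_halfDisk hd) _ hopen h0).ne_empty ?_
  exact eq_empty_of_preimage_subset_of_measure_le hf (isOpen_halfDisk _).measurableSet hsub hμ
    (hopen.inter (isOpen_halfDisk d)) inter_subset_right
    (((disjoint_halfDisk_neg c).preimage f).mono_left inter_subset_left)

lemma not_forall_apply_axisPoint_mem_halfDisk (hf : MeasurePreserving f μ μ) (hμ : μ.map ID = μ)
    (hfc : Continuous f) (hrev : IsReversibleBy ID f) {c : ℝ} (hc : c ≠ 0) :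
    ¬∀ t ∈ Ioo (-1 : ℝ) 1, f (axisPoint t) ∈ halfDisk c := by
  intro hside
  have hneg : μ (halfDisk (-c)) = μ (halfDisk c) := by
    conv_rhs => rw [← hμ]
    rw [Measure.map_apply continuous_ID.measurable (isOpen_halfDisk c).measurableSet,
      preimage_ID_halfDisk]
  have haxis : Icc (-1 : ℝ) 1 ⊆ {t | 0 ≤ c * (f (axisPoint t)).1.1} := by
    rw [← closure_Ioo (by norm_num)]
    have hcont : Continuous fun t => c * (f (axisPoint t)).1.1 := by
      have := continuous_axisPoint
      fun_prop
    exact closure_minimal (fun t ht => le_of_lt (α := ℝ) (hside t ht))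
      (isClosed_le continuous_const hcont)
  have hcov : f ⁻¹' halfDisk (-c) ⊆ halfDisk c ∪ halfDisk (-c) := by
    intro z (hz : 0 < -c * (f z).1.1)
    refine mem_halfDisk_or_neg hc fun h => ?_
    have := haxis (snd_mem_Icc z)
    rw [mem_ofPred_eq, ← eq_axisPoint_of_fst_eq_zero h] at this
    linarith
  have h0 := hside 0 (by norm_num)
  rcases (isPreconnected_preimage_halfDisk hfc hrev (-c)).subset_or_subset (isOpen_halfDisk c)
    (isOpen_halfDisk (-c)) (disjoint_halfDisk_neg c) hcov with h | h
  · exact not_preimage_halfDisk_subset hf hfc h0 hc hneg.ge h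
  · exact not_preimage_halfDisk_subset hf hfc h0 (neg_ne_zero.2 hc) le_rfl h

lemma exists_fixed_axisPoint_of_map_ID_eq (hL : IsAngleLift diskCoord f L)
    (hrev : IsReversibleBy ID f) (hf : MeasurePreserving f μ μ) (hμ : μ.map ID = μ) :
    ∃ t ∈ Ioo (-1 : ℝ) 1, f (axisPoint t) = axisPoint t := by
  have hfc := hL.continuous
  by_cases hoff : ∀ t ∈ Ioo (-1 : ℝ) 1, (f (axisPoint t)).1.1 ≠ 0
  · have hpre : IsPreconnected ((fun t => f (axisPoint t)) '' Ioo (-1) 1) :=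
      isPreconnected_Ioo.image _ (hfc.comp continuous_axisPoint).continuousOn
    rcases hpre.subset_or_subset (isOpen_halfDisk 1) (isOpen_halfDisk (-1))
      (disjoint_halfDisk_neg 1)
      (forall_mem_image.2 fun t ht => mem_halfDisk_or_neg one_ne_zero (hoff t ht)) with h | h
    · exact (not_forall_apply_axisPoint_mem_halfDisk hf hμ hfc hrev one_ne_zero
        fun t ht => h ⟨t, ht, rfl⟩).elim
    · exact (not_forall_apply_axisPoint_mem_halfDisk hf hμ hfc hrev (by norm_num : (-1 : ℝ) ≠ 0)
        fun t ht => h ⟨t, ht, rfl⟩).elim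
  · push Not at hoff
    obtain ⟨a, ha, h⟩ := hoff
    exact exists_fixed_axisPoint_of_apply_eq hL hrev le_rfl le_rfl ha (snd_mem_Icc _)
      (eq_axisPoint_of_fst_eq_zero h)

theorem exists_fixed_axisPoint_mem_Ioo (hL : IsAngleLift diskCoord f L) (hrev : IsReversibleBy ID f)
    (hf : MeasurePreserving f μ μ) : ∃ t ∈ Ioo (-1 : ℝ) 1, f (axisPoint t) = axisPoint t := by
  have hID := continuous_ID.measurable
  have : (μ + μ.map ID).IsOpenPosMeasure := (Measure.le_add_right le_rfl).isOpenPosMeasure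
  refine exists_fixed_axisPoint_of_map_ID_eq hL hrev
    (hf.add_measure (hrev.measurePreserving_map hID hf)) ?_
  rw [Measure.map_add _ _ hID, Measure.map_map hID hID, involutive_ID.comp_self, Measure.map_id,
    add_comm]

end Measure

end AxisFixedPoint

section PolarCoordinates

lemma exists_radial_retraction {E : Type*} [AddCommGroup E] [Module ℝ E] [TopologicalSpace E]
    [IsTopologicalAddGroup E] [ContinuousSMul ℝ E] {K : Set E} (hK : Convex ℝ K)
    (hKc : IsClosed K) (h0 : K ∈ 𝓝 0) :
    ∃ m : E → ℝ, Continuous m ∧ (∀ v, 0 < m v) ∧ (∀ v, m v • v ∈ K) ∧ ∀ v ∈ K, m v = 1 := by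
  have hmem (v) : gauge K v ≤ 1 ↔ v ∈ K := by
    rw [gauge_le_one_iff_mem_closure hK h0, hKc.closure_eq]
  have hpos (v) : 0 < max 1 (gauge K v) := one_pos.trans_le (le_max_left _ _)
  refine ⟨fun v => (max 1 (gauge K v))⁻¹,
    (continuous_const.max (continuous_gauge hK h0)).inv₀ fun v => (hpos v).ne',
    fun v => inv_pos.2 (hpos v), fun v => ?_, fun v hv => ?_⟩
  · rw [← hmem, gauge_smul_of_nonneg (inv_pos.2 (hpos v)).le, smul_eq_mul,
      inv_mul_le_one₀ (hpos v)]
    exact le_max_right _ _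
  · change (max 1 (gauge K v))⁻¹ = 1
    rw [max_eq_left ((hmem v).2 hv), inv_one]

lemma coe_arg_exp (z : ℂ) : (Complex.arg (Complex.exp z) : Real.Angle) = z.im := by
  rw [Complex.arg_exp, Real.Angle.coe_toIocMod]

/-- `pt` is a system of logarithmic polar coordinates on the disk around `s`: the point `pt ζ` lies
on the ray leaving `s` at the angle `ζ.im`, counted from the direction `-i`, and the radius is cut
off for `pt ζ` to stay in the disk. -/
structure IsLogPolar (s : disk) (pt : ℂ → disk) : Prop where
  continuous : Continuous pt
  exists_I_mul_sub (ζ : ℂ) : ∃ m : ℝ, 0 < m ∧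
    Complex.I * (diskCoord (pt ζ) - diskCoord s) = m * Complex.exp ζ
  apply_log (x : disk) : x ≠ s → pt (Complex.log (Complex.I * (diskCoord x - diskCoord s))) = x
  periodic : Function.Periodic pt (2 * π * Complex.I)

/-- The angle of `x` around `s` counted from the direction `-i`, so that the branch cut is the
vertical half line above `s`. -/
def angleAt (s x : disk) : ℝ := Complex.arg (Complex.I * (diskCoord x - diskCoord s))

theorem exists_isLogPolar {s : disk} (hs : ‖diskCoord s‖ < 1) : ∃ pt, IsLogPolar s pt := by
  obtain ⟨m, hmc, hm0, hmK, hm1⟩ := exists_radial_retraction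
    (convex_closedBall (-diskCoord s) 1) Metric.isClosed_closedBall
    (Metric.closedBall_mem_nhds_of_mem (by simpa using hs))
  have hray (v : ℂ) : ∃ z, diskCoord z = diskCoord s + m v * v := by
    refine exists_diskCoord_eq ?_
    have := hmK v
    rwa [mem_closedBall_iff_norm, sub_neg_eq_add, add_comm, Complex.real_smul] at this
  choose ray hray using hray
  have hrayc : Continuous ray := by
    rw [isEmbedding_diskCoord.continuous_iff, show diskCoord ∘ ray = _ from funext hray]
    fun_prop
  refine ⟨fun ζ => ray (-Complex.I * Complex.exp ζ), hrayc.comp (by fun_prop),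
    fun ζ => ⟨m (-Complex.I * Complex.exp ζ), hm0 _, ?_⟩, fun x hx => ?_, fun ζ => ?_⟩
  · rw [hray, add_sub_cancel_left, mul_left_comm, ← mul_assoc Complex.I, mul_neg, Complex.I_mul_I,
      neg_neg, one_mul]
  · apply isEmbedding_diskCoord.injective
    have hne : diskCoord x - diskCoord s ≠ 0 :=
      sub_ne_zero.2 (isEmbedding_diskCoord.injective.ne hx)
    have hmem : diskCoord x - diskCoord s ∈ Metric.closedBall (-diskCoord s) 1 := by
      rw [mem_closedBall_iff_norm, sub_neg_eq_add, sub_add_cancel, norm_diskCoord]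
      exact x.2
    rw [hray, Complex.exp_log (mul_ne_zero Complex.I_ne_zero hne), neg_mul, ← mul_assoc,
      Complex.I_mul_I, neg_one_mul, neg_neg, hm1 _ hmem, Complex.ofReal_one, one_mul,
      add_sub_cancel]
  · simp only [Complex.exp_periodic ζ]

namespace IsLogPolar

variable {s : disk} {pt : ℂ → disk}

lemma apply_ne (hp : IsLogPolar s pt) (ζ : ℂ) : pt ζ ≠ s := by
  intro h
  obtain ⟨m, hm, e⟩ := hp.exists_I_mul_sub ζ
  rw [h, sub_self, mul_zero] at e
  exact mul_ne_zero (by exact_mod_cast hm.ne') (Complex.exp_ne_zero ζ) e.symm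

lemma range_eq (hp : IsLogPolar s pt) : range pt = {s}ᶜ :=
  Subset.antisymm (range_subset_iff.2 hp.apply_ne) fun x hx => ⟨_, hp.apply_log x hx⟩

lemma isPreconnected_compl (hp : IsLogPolar s pt) : IsPreconnected ({s}ᶜ : Set disk) :=
  hp.range_eq ▸ isPreconnected_range hp.continuous

lemma coe_angleAt (hp : IsLogPolar s pt) (ζ : ℂ) : (angleAt s (pt ζ) : Real.Angle) = ζ.im := by
  obtain ⟨m, hm, e⟩ := hp.exists_I_mul_sub ζ
  rw [angleAt, e, Complex.arg_real_mul _ hm, coe_arg_exp]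

end IsLogPolar

end PolarCoordinates

section AngleAt

variable {f : disk → disk} {L : disk → disk → ℂ} {σ : ℝ}

lemma angleAt_mem_Ioc (s x : disk) : angleAt s x ∈ Ioc (-π) π :=
  Complex.arg_mem_Ioc _

lemma continuous_I_mul_sub (s : disk) :
    Continuous fun x => Complex.I * (diskCoord x - diskCoord s) := by
  have := isEmbedding_diskCoord.continuous
  fun_prop

lemma measurable_angleAt (s : disk) : Measurable (angleAt s) :=
  Complex.measurable_arg.comp (continuous_I_mul_sub s).measurable

/-- The disk slit along the vertical half line that leaves `s` upwards, where `angleAt s` is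
continuous. -/
def slitDisk (s : disk) : Set disk :=
  {x | Complex.I * (diskCoord x - diskCoord s) ∈ Complex.slitPlane}

lemma isOpen_slitDisk (s : disk) : IsOpen (slitDisk s) :=
  Complex.isOpen_slitPlane.preimage (continuous_I_mul_sub s)

lemma slitDisk_subset {s : disk} : slitDisk s ⊆ {s}ᶜ := by
  rintro _ hx rfl
  exact Complex.slitPlane_ne_zero hx (by rw [sub_self, mul_zero])

lemma continuousOn_angleAt (s : disk) : ContinuousOn (angleAt s) (slitDisk s) := fun _ hx =>
  ((Complex.continuousAt_arg hx).comp (f := fun x => Complex.I * (diskCoord x - diskCoord s))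
    (continuous_I_mul_sub s).continuousAt).continuousWithinAt

lemma coe_angleAt_apply (hL : IsAngleLift diskCoord f L) {s x : disk} (hfs : f s = s) (hx : x ≠ s) :
    (angleAt s (f x) : Real.Angle) = ↑(angleAt s x + (L s x).im) := by
  have hne : Complex.I * (diskCoord x - diskCoord s) ≠ 0 :=
    mul_ne_zero Complex.I_ne_zero (sub_ne_zero.2 (isEmbedding_diskCoord.injective.ne hx))
  have := hL.exp_mul s x hx.symm
  rw [hfs] at this
  rw [angleAt, ← this, mul_left_comm, Complex.arg_mul_coe_angle (Complex.exp_ne_zero _) hne,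
    coe_arg_exp, add_comm, Real.Angle.coe_add, angleAt]

lemma angleAt_axisPoint (hσ : -1 ≤ σ) {t : ℝ} (ht : t ∈ Ioc σ 1) :
    angleAt (axisPoint σ) (axisPoint t) = π := by
  rw [angleAt, diskCoord_axisPoint ⟨hσ, ht.1.le.trans ht.2⟩,
    diskCoord_axisPoint ⟨hσ.trans ht.1.le, ht.2⟩, ← sub_mul, mul_left_comm, Complex.I_mul_I,
    ← Complex.ofReal_sub, mul_neg_one, ← Complex.ofReal_neg,
    Complex.arg_ofReal_of_neg (neg_lt_zero.2 (sub_pos.2 ht.1))]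

lemma exists_axisPoint_of_angleAt_eq_pi (hσ : σ ∈ Icc (-1) 1) {x : disk}
    (hx : angleAt (axisPoint σ) x = π) : ∃ t ∈ Ioc σ 1, x = axisPoint t := by
  rw [angleAt, diskCoord_axisPoint hσ, Complex.arg_eq_pi_iff] at hx
  have hfst : x.1.1 = 0 := by simpa [diskCoord] using hx.2
  have hsnd : σ < x.1.2 := by simpa [diskCoord] using hx.1
  exact ⟨x.1.2, ⟨hsnd, (snd_mem_Icc x).2⟩, eq_axisPoint_of_fst_eq_zero hfst⟩

lemma exists_axisPoint_of_coe_angleAt_eq_pi (hσ : σ ∈ Icc (-1) 1) {x : disk}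
    (hx : (angleAt (axisPoint σ) x : Real.Angle) = π) : ∃ t ∈ Ioc σ 1, x = axisPoint t := by
  refine exists_axisPoint_of_angleAt_eq_pi hσ ?_
  rw [← Real.Angle.toReal_pi, ← hx, angleAt, Complex.arg_coe_angle_toReal_eq_arg]

end AngleAt

section AxisTurn

variable {f : disk → disk} {L : disk → disk → ℂ} {σ : ℝ}

lemma exists_int_mem_Ioo_of_coe_ne_zero {X : Type*} [TopologicalSpace X] {S : Set X}
    (hS : IsPreconnected S) {g : X → ℝ} (hg : ContinuousOn g S)
    (h0 : ∀ x ∈ S, (g x : Real.Angle) ≠ 0) :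
    ∃ j : ℤ, ∀ x ∈ S, g x ∈ Ioo (j * (2 * π)) ((j + 1) * (2 * π)) := by
  rcases S.eq_empty_or_nonempty with rfl | ⟨x₀, hx₀⟩
  · exact ⟨0, fun x hx => hx.elim⟩
  have hne (k : ℤ) (x) (hx : x ∈ S) : g x ≠ k * (2 * π) := fun h => h0 x hx <|
    Real.Angle.coe_eq_zero_iff.2 ⟨k, by rw [h, zsmul_eq_mul]⟩
  refine ⟨⌊g x₀ / (2 * π)⌋, fun x hx => ⟨?_, ?_⟩⟩
  · exact hS.lt_of_ne hg (hne _) ⟨x₀, hx₀, ((le_div_iff₀ Real.two_pi_pos).1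
      (Int.floor_le _)).lt_of_ne (hne _ _ hx₀).symm⟩ hx
  · have := hne (⌊g x₀ / (2 * π)⌋ + 1)
    push_cast at this
    exact hS.gt_of_ne hg this ⟨x₀, hx₀, (div_lt_iff₀ Real.two_pi_pos).1
      (Int.lt_floor_add_one _)⟩ hx
lemma coe_im_axisPoint_ne_zero (hL : IsAngleLift diskCoord f L) (hrev : IsReversibleBy ID f)
    (hσ : σ ∈ Icc (-1) 1) (hfs : f (axisPoint σ) = axisPoint σ)
    (hno : ∀ t ∈ Ioo σ 1, f (axisPoint t) ≠ axisPoint t) {t : ℝ} (ht : t ∈ Ioo σ 1) :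
    ((L (axisPoint σ) (axisPoint t)).im : Real.Angle) ≠ 0 := by
  intro h
  have hts : axisPoint t ≠ axisPoint σ := fun e =>
    ht.1.ne' (injOn_axisPoint ⟨hσ.1.trans ht.1.le, ht.2.le⟩ hσ e)
  have hfθ := coe_angleAt_apply hL hfs hts
  rw [angleAt_axisPoint hσ.1 (Ioo_subset_Ioc_self ht), Real.Angle.coe_add, h, add_zero] at hfθ
  obtain ⟨b, hb, e⟩ := exists_axisPoint_of_coe_angleAt_eq_pi hσ hfθ
  obtain ⟨r, hr, hfr⟩ := exists_fixed_axisPoint_of_apply_eq hL hrev hσ.1 le_rfl ht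
    (Ioc_subset_Icc_self hb) e
  exact hno r hr hfr

/-- The lift `L` turns the open axis segment above `axisPoint σ`, seen from `axisPoint σ`, by more
than `j` and less than `j + 1` full turns. -/
def IsAxisTurn (L : disk → disk → ℂ) (σ : ℝ) (j : ℤ) : Prop :=
  ∀ t ∈ Ioo σ 1, (L (axisPoint σ) (axisPoint t)).im ∈ Ioo (j * (2 * π)) ((j + 1) * (2 * π))

lemma continuousOn_im_axisPoint (hL : IsAngleLift diskCoord f L) (hσ : σ ∈ Icc (-1) 1) :
    ContinuousOn (fun t => (L (axisPoint σ) (axisPoint t)).im) (Ioc σ 1) :=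
  Complex.continuous_im.comp_continuousOn <| (hL.continuousOn_right _).comp
    continuous_axisPoint.continuousOn fun _ ht e =>
      ht.1.ne' (injOn_axisPoint ⟨hσ.1.trans ht.1.le, ht.2⟩ hσ e)

lemma exists_isAxisTurn (hL : IsAngleLift diskCoord f L) (hrev : IsReversibleBy ID f)
    (hσ : σ ∈ Icc (-1) 1) (hfs : f (axisPoint σ) = axisPoint σ)
    (hno : ∀ t ∈ Ioo σ 1, f (axisPoint t) ≠ axisPoint t) : ∃ j, IsAxisTurn L σ j :=
  exists_int_mem_Ioo_of_coe_ne_zero isPreconnected_Ioo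
    ((continuousOn_im_axisPoint hL hσ).mono Ioo_subset_Ioc_self)
    fun _ => coe_im_axisPoint_ne_zero hL hrev hσ hfs hno

lemma IsAxisTurn.mem_Icc {j : ℤ} (hj : IsAxisTurn L σ j) (hL : IsAngleLift diskCoord f L)
    (hσ : σ ∈ Ico (-1) 1) {t : ℝ} (ht : t ∈ Ioc σ 1) :
    (L (axisPoint σ) (axisPoint t)).im ∈ Icc (j * (2 * π)) ((j + 1) * (2 * π)) := by
  have hclos : Ioc σ 1 ⊆ closure (Ioo σ 1) := by
    rw [closure_Ioo hσ.2.ne]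
    exact Ioc_subset_Icc_self
  refine closure_minimal ?_ isClosed_Icc <|
    ((continuousOn_im_axisPoint hL (Ico_subset_Icc_self hσ)) t ht).mono Ioo_subset_Ioc_self
      |>.mem_closure_image (hclos ht)
  rintro _ ⟨r, hr, rfl⟩
  exact Ioo_subset_Icc_self (hj r hr)

end AxisTurn

section LiftedAngle

variable {f : disk → disk} {L : disk → disk → ℂ} {s : disk} {pt : ℂ → disk}

/-- A continuous determination, in the logarithmic polar coordinates `pt` around the fixed point
`s`, of the angle of the image point around `s`. -/
def liftedAngle (L : disk → disk → ℂ) (s : disk) (pt : ℂ → disk) (ζ : ℂ) : ℝ :=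
  ζ.im + (L s (pt ζ)).im

namespace IsLogPolar

lemma continuous_liftedAngle (hp : IsLogPolar s pt) (hL : IsAngleLift diskCoord f L) :
    Continuous (liftedAngle L s pt) :=
  Complex.continuous_im.add <| Complex.continuous_im.comp <|
    (hL.continuousOn_right s).comp_continuous hp.continuous hp.apply_ne

lemma liftedAngle_sub_two_pi_I (hp : IsLogPolar s pt) (L : disk → disk → ℂ) (ζ : ℂ) :
    liftedAngle L s pt (ζ - 2 * π * Complex.I) = liftedAngle L s pt ζ - 2 * π := by
  simp [liftedAngle, hp.periodic.sub_eq]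
  ring

lemma liftedAngle_log (hp : IsLogPolar s pt) (L : disk → disk → ℂ) {x : disk} (hx : x ≠ s) :
    liftedAngle L s pt (Complex.log (Complex.I * (diskCoord x - diskCoord s))) =
      angleAt s x + (L s x).im := by
  rw [liftedAngle, hp.apply_log x hx, Complex.log_im, angleAt]

lemma coe_liftedAngle (hp : IsLogPolar s pt) (hL : IsAngleLift diskCoord f L) (hfs : f s = s)
    (ζ : ℂ) : (liftedAngle L s pt ζ : Real.Angle) = angleAt s (f (pt ζ)) := by
  rw [coe_angleAt_apply hL hfs (hp.apply_ne ζ), Real.Angle.coe_add, hp.coe_angleAt, liftedAngle,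
    Real.Angle.coe_add]

lemma angleAt_apply (hp : IsLogPolar s pt) {ζ : ℂ} (hζ : ζ.im ∈ Ioc (-π) π) :
    angleAt s (pt ζ) = ζ.im := by
  have := congrArg Real.Angle.toReal (hp.coe_angleAt ζ)
  rwa [Real.Angle.toReal_coe_eq_self_iff.2 (angleAt_mem_Ioc _ _),
    Real.Angle.toReal_coe_eq_self_iff.2 hζ] at this

variable {σ : ℝ} {j : ℤ}

lemma exists_apply_eq_axisPoint (hp : IsLogPolar (axisPoint σ) pt) (hσ : -1 ≤ σ) {t : ℝ}
    (ht : t ∈ Ioc σ 1) : ∃ ζ : ℂ, ζ.im = π ∧ pt ζ = axisPoint t := by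
  refine ⟨_, ?_, hp.apply_log (axisPoint t) fun e => ht.1.ne' ?_⟩
  · rw [Complex.log_im]
    exact angleAt_axisPoint hσ ht
  · exact injOn_axisPoint ⟨hσ.trans ht.1.le, ht.2⟩ ⟨hσ, ht.1.le.trans ht.2⟩ e

-- If the image point lies on the axis, it is its own reflection and is turned by the same angle.
lemma sub_im_mem_Icc_of_liftedAngle_eq (hp : IsLogPolar (axisPoint σ) pt)
    (hL : IsAngleLift diskCoord f L) (hσ : σ ∈ Ico (-1) 1) (hfs : f (axisPoint σ) = axisPoint σ)
    (hrefl : ∀ x ≠ axisPoint σ, (L (axisPoint σ) (ID (f x))).im = (L (axisPoint σ) x).im)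
    (hj : IsAxisTurn L σ j) {k : ℤ} {ζ : ℂ}
    (hζ : liftedAngle L (axisPoint σ) pt ζ = k * (2 * π) + π) :
    k * (2 * π) + π - ζ.im ∈ Icc (j * (2 * π)) ((j + 1) * (2 * π)) := by
  have hcoe := hp.coe_liftedAngle hL hfs ζ
  rw [hζ, Real.Angle.coe_add, ← zsmul_eq_mul, Real.Angle.coe_zsmul, Real.Angle.coe_two_pi,
    smul_zero, zero_add] at hcoe
  obtain ⟨t, ht, e⟩ := exists_axisPoint_of_coe_angleAt_eq_pi (Ico_subset_Icc_self hσ) hcoe.symm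
  have := hj.mem_Icc hL hσ ht
  rwa [← ID_axisPoint t, ← e, hrefl _ (hp.apply_ne ζ), ← sub_eq_iff_eq_add'.2 hζ.symm] at this

lemma liftedAngle_lt (hp : IsLogPolar (axisPoint σ) pt)
    (hL : IsAngleLift diskCoord f L) (hσ : σ ∈ Ico (-1) 1) (hfs : f (axisPoint σ) = axisPoint σ)
    (hrefl : ∀ x ≠ axisPoint σ, (L (axisPoint σ) (ID (f x))).im = (L (axisPoint σ) x).im)
    (hj : IsAxisTurn L σ j) {ζ : ℂ} (hζ : ζ.im < π) :
    liftedAngle L (axisPoint σ) pt ζ < (j + 1) * (2 * π) + π := by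
  have hπ := Real.pi_pos
  obtain ⟨ζ₀, him, hζ₀⟩ := hp.exists_apply_eq_axisPoint hσ.1 (right_mem_Ioc.2 hσ.2)
  refine (convex_halfSpace_im_lt π).isPreconnected.gt_of_ne
    (hp.continuous_liftedAngle hL).continuousOn (fun ξ (hξ : ξ.im < π) e => ?_)
    ⟨ζ₀ - 2 * π * Complex.I, ?_, ?_⟩ hζ
  · have := hp.sub_im_mem_Icc_of_liftedAngle_eq hL hσ hfs hrefl hj (k := j + 1)
      (by exact_mod_cast e)
    push_cast at this
    linarith [this.2]
  · simp [him, hπ]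
  · rw [hp.liftedAngle_sub_two_pi_I, liftedAngle, him, hζ₀]
    linarith [(hj.mem_Icc hL hσ (right_mem_Ioc.2 hσ.2)).2]

lemma lt_liftedAngle (hp : IsLogPolar (axisPoint σ) pt)
    (hL : IsAngleLift diskCoord f L) (hσ : σ ∈ Ico (-1) 1) (hfs : f (axisPoint σ) = axisPoint σ)
    (hrefl : ∀ x ≠ axisPoint σ, (L (axisPoint σ) (ID (f x))).im = (L (axisPoint σ) x).im)
    (hj : IsAxisTurn L σ j) {ζ : ℂ} (hζ : -π < ζ.im) :
    j * (2 * π) - π < liftedAngle L (axisPoint σ) pt ζ := by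
  have hπ := Real.pi_pos
  obtain ⟨ζ₀, him, hζ₀⟩ := hp.exists_apply_eq_axisPoint hσ.1 (right_mem_Ioc.2 hσ.2)
  refine (convex_halfSpace_im_gt (-π)).isPreconnected.lt_of_ne
    (hp.continuous_liftedAngle hL).continuousOn (fun ξ (hξ : -π < ξ.im) e => ?_)
    ⟨ζ₀, ?_, ?_⟩ hζ
  · have := hp.sub_im_mem_Icc_of_liftedAngle_eq hL hσ hfs hrefl hj (k := j - 1) (ζ := ξ) (by
      rw [e]
      push_cast
      ring)
    push_cast at this
    linarith [this.1]
  · simp [him, hπ]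
  · rw [liftedAngle, him, hζ₀]
    linarith [(hj.mem_Icc hL hσ (right_mem_Ioc.2 hσ.2)).1]

lemma angleAt_add_im_mem_Ioc (hp : IsLogPolar (axisPoint σ) pt)
    (hL : IsAngleLift diskCoord f L) (hσ : σ ∈ Ico (-1) 1) (hfs : f (axisPoint σ) = axisPoint σ)
    (hrefl : ∀ x ≠ axisPoint σ, (L (axisPoint σ) (ID (f x))).im = (L (axisPoint σ) x).im)
    (hj : IsAxisTurn L σ j) {x : disk} (hx : x ≠ axisPoint σ) :
    angleAt (axisPoint σ) x + (L (axisPoint σ) x).im ∈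
      Ioc (j * (2 * π) - π) ((j + 1) * (2 * π) + π) := by
  have hθ : (Complex.log (Complex.I * (diskCoord x - diskCoord (axisPoint σ)))).im =
    angleAt (axisPoint σ) x := Complex.log_im _
  have hmem := angleAt_mem_Ioc (axisPoint σ) x
  refine ⟨?_, ?_⟩
  · rw [← hp.liftedAngle_log L hx]
    exact hp.lt_liftedAngle hL hσ hfs hrefl hj (hθ ▸ hmem.1)
  rcases hmem.2.lt_or_eq with h | h
  · rw [← hp.liftedAngle_log L hx]
    exact (hp.liftedAngle_lt hL hσ hfs hrefl hj (hθ ▸ h)).le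
  · obtain ⟨t, ht, rfl⟩ := exists_axisPoint_of_angleAt_eq_pi (Ico_subset_Icc_self hσ) h
    rw [h, add_comm π]
    exact add_le_add_left (hj.mem_Icc hL hσ ht).2 π

lemma exists_isOpen_angleAt_add_im_mem (hp : IsLogPolar s pt) (hL : IsAngleLift diskCoord f L)
    {V : Set ℝ} (hV : IsOpen V) {ζ : ℂ} (him : ζ.im ∈ Icc (-π) π)
    (hζ : liftedAngle L s pt ζ ∈ V) :
    ∃ O, IsOpen O ∧ O.Nonempty ∧ O ⊆ {s}ᶜ ∧ ∀ x ∈ O, angleAt s x + (L s x).im ∈ V := by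
  have hcont : ContinuousOn (fun x => angleAt s x + (L s x).im) (slitDisk s) :=
    (continuousOn_angleAt s).add (Complex.continuous_im.comp_continuousOn
      ((hL.continuousOn_right s).mono slitDisk_subset))
  refine ⟨_, hcont.isOpen_inter_preimage (isOpen_slitDisk s) hV, ?_,
    inter_subset_left.trans slitDisk_subset, fun x hx => hx.2⟩
  have hline : Continuous fun r : ℝ => liftedAngle L s pt ⟨ζ.re, r⟩ :=
    (hp.continuous_liftedAngle hL).comp <| Complex.equivRealProdCLM.symm.continuous.comp <|
      (by fun_prop : Continuous fun r : ℝ => (ζ.re, r))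
  rw [← closure_Ioo (neg_lt_self Real.pi_pos).ne] at him
  obtain ⟨r, hrV, hr⟩ := mem_closure_iff.1 him _ (hV.preimage hline) hζ
  have hθ := hp.angleAt_apply (ζ := ⟨ζ.re, r⟩) (Ioo_subset_Ioc_self hr)
  refine ⟨pt ⟨ζ.re, r⟩, Complex.mem_slitPlane_iff_arg.2 ⟨?_, ?_⟩, ?_⟩
  · exact hθ.trans_ne hr.2.ne
  · exact mul_ne_zero Complex.I_ne_zero
      (sub_ne_zero.2 (isEmbedding_diskCoord.injective.ne (hp.apply_ne _)))
  · change angleAt s (pt ⟨ζ.re, r⟩) + _ ∈ V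
    rw [hθ]
    exact hrV

end IsLogPolar

end LiftedAngle

section InvariantMeasure

variable {X : Type*} [MeasurableSpace X] {μ : Measure X} {f : X → X} {θ φ : X → ℝ}

lemma integral_comp_eq_of_measurePreserving (hf : MeasurePreserving f μ μ)
    (hφ : AEStronglyMeasurable φ μ) : ∫ x, φ (f x) ∂μ = ∫ x, φ x ∂μ := by
  conv_rhs => rw [← hf.map_eq]
  exact (integral_map hf.measurable.aemeasurable (hf.map_eq.symm ▸ hφ)).symm

lemma integral_birkhoffSum (hf : MeasurePreserving f μ μ) (hφ : Integrable φ μ) (m : ℕ) :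
    ∫ x, birkhoffSum f φ m x ∂μ = m * ∫ x, φ x ∂μ := by
  simp only [birkhoffSum]
  have hint (i : ℕ) : Integrable (fun x => φ (f^[i] x)) μ :=
    (hf.iterate i).integrable_comp_of_integrable hφ
  rw [integral_finsetSum _ fun i _ => hint i, Finset.sum_congr rfl fun i _ =>
      integral_comp_eq_of_measurePreserving (hf.iterate i) hφ.aestronglyMeasurable,
    Finset.sum_const, Finset.card_range, nsmul_eq_mul]

lemma integral_eq_zero_of_frequently_birkhoffSum_le [IsFiniteMeasure μ]
    (hf : MeasurePreserving f μ μ) (hφ : Integrable φ μ) {C : ℝ}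
    (hC : ∃ᶠ m in Filter.atTop, ∀ᵐ x ∂μ, |birkhoffSum f φ m x| ≤ C) : ∫ x, φ x ∂μ = 0 := by
  have hbound {m : ℕ} (h : ∀ᵐ x ∂μ, |birkhoffSum f φ m x| ≤ C) :
      m * |∫ x, φ x ∂μ| ≤ C * μ.real univ := by
    rw [← Nat.abs_cast m, ← abs_mul, ← integral_birkhoffSum hf hφ, ← Real.norm_eq_abs]
    exact norm_integral_le_of_norm_le_const h
  by_contra hne
  have hlarge := (tendsto_natCast_atTop_atTop.atTop_mul_const
    (abs_pos.2 hne)).eventually_gt_atTop (C * μ.real univ)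
  obtain ⟨m, h, hm⟩ := (hC.and_eventually hlarge).exists
  exact hm.not_ge (hbound h)

lemma ae_comp_eq_of_comp_le_add (hf : MeasurePreserving f μ μ) (hθ : Integrable θ μ)
    (hφ : Integrable φ μ) (h0 : ∫ x, φ x ∂μ = 0) (hle : ∀ᵐ x ∂μ, θ (f x) ≤ θ x + φ x) :
    ∀ᵐ x ∂μ, θ (f x) = θ x + φ x :=
  (integral_eq_iff_of_ae_le (hf.integrable_comp_of_integrable hθ) (hθ.add hφ) hle).1 <| by
    simp only [Function.comp_apply, Pi.add_apply]
    rw [integral_add hθ hφ, h0, add_zero,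
      integral_comp_eq_of_measurePreserving hf hθ.aestronglyMeasurable]

lemma not_ae_restrict_of_forall_not [TopologicalSpace X] [μ.IsOpenPosMeasure] {p : X → Prop}
    {S O : Set X} (hO : IsOpen O) (hne : O.Nonempty) (hOS : O ⊆ S) (hp : ∀ x ∈ O, ¬p x) :
    ¬∀ᵐ x ∂μ.restrict S, p x := by
  intro h
  refine hO.measure_ne_zero μ hne ?_
  rw [← Measure.restrict_apply_self]
  exact measure_mono_null hp (ae_restrict_of_ae_restrict_of_subset hOS h)

end InvariantMeasure

section Uniqueness

variable {f : disk → disk} {L : disk → disk → ℂ} {σ : ℝ}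

lemma exists_isAxisTurn_angleAt_add_im_mem_Ioc (hL : IsAngleLift diskCoord f L)
    (hrev : IsReversibleBy ID f) (hσ : σ ∈ Ioo (-1) 1) (hfs : f (axisPoint σ) = axisPoint σ)
    (hno : ∀ t ∈ Ioo σ 1, f (axisPoint t) ≠ axisPoint t) {w : disk} (hw : w ≠ axisPoint σ)
    (hfw : f w = w) (hLw : L (axisPoint σ) w = 0) :
    ∃ j : ℤ, (j = 0 ∨ j = -1) ∧ IsAxisTurn L σ j ∧ ∀ x ≠ axisPoint σ,
      angleAt (axisPoint σ) x + (L (axisPoint σ) x).im ∈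
        Ioc (j * (2 * π) - π) ((j + 1) * (2 * π) + π) := by
  obtain ⟨pt, hp⟩ := exists_isLogPolar (norm_diskCoord_axisPoint_lt_one hσ)
  obtain ⟨j, hj⟩ := exists_isAxisTurn hL hrev (Ioo_subset_Icc_self hσ) hfs hno
  have hbound (x) (hx : x ≠ axisPoint σ) :=
    hp.angleAt_add_im_mem_Ioc hL (Ioo_subset_Ico_self hσ) hfs
      (fun x hx => hL.im_reflect_apply isEmbedding_diskCoord diskCoord_ID hrev
        hp.isPreconnected_compl hfs (ID_axisPoint σ) hw hfw hLw hx) hj hx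
  refine ⟨j, ?_, hj, hbound⟩
  have hmem := hbound w hw
  have hθ := angleAt_mem_Ioc (axisPoint σ) w
  rw [hLw, Complex.zero_im, add_zero] at hmem
  have hlt : (j : ℝ) < 1 := by nlinarith [Real.pi_pos, hmem.1, hθ.2]
  have hgt : (-2 : ℝ) < j := by nlinarith [Real.pi_pos, hmem.2, hθ.1]
  have : j < 1 := by exact_mod_cast hlt
  have : -2 < j := by exact_mod_cast hgt
  lia

lemma abs_im_angleLift_le (hL : IsAngleLift diskCoord f L)
    (hrev : IsReversibleBy ID f) (hσ : σ ∈ Ioo (-1) 1) (hfs : f (axisPoint σ) = axisPoint σ)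
    (hno : ∀ t ∈ Ioo σ 1, f (axisPoint t) ≠ axisPoint t) {w : disk} (hw : w ≠ axisPoint σ)
    (hfw : f w = w) (hLw : L (axisPoint σ) w = 0) {x : disk} (hx : x ≠ axisPoint σ) :
    |(L (axisPoint σ) x).im| ≤ 4 * π := by
  obtain ⟨j, hj, -, hbound⟩ :=
    exists_isAxisTurn_angleAt_add_im_mem_Ioc hL hrev hσ hfs hno hw hfw hLw
  have hθ := angleAt_mem_Ioc (axisPoint σ) x
  have hmem := hbound x hx
  rw [abs_le]
  rcases hj with rfl | rfl <;> push_cast at hmem <;> constructor <;>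
    linarith [hmem.1, hmem.2, hθ.1, hθ.2]

lemma abs_birkhoffSum_im_angleLift_le (hL : IsAngleLift diskCoord f L) (hrev : IsReversibleBy ID f)
    (hσ : σ ∈ Ioo (-1) 1) (hfs : f (axisPoint σ) = axisPoint σ) {m : ℕ}
    (hno : ∀ t ∈ Ioo σ 1, f^[m] (axisPoint t) ≠ axisPoint t) {w : disk} (hw : w ≠ axisPoint σ)
    (hfw : f w = w) (hLw : L (axisPoint σ) w = 0) {x : disk} (hx : x ≠ axisPoint σ) :
    |birkhoffSum f (fun x => (L (axisPoint σ) x).im) m x| ≤ 4 * π := by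
  have hs (i : ℕ) : f^[i] (axisPoint σ) = axisPoint σ := Function.iterate_fixed hfs i
  have hfwi (i : ℕ) : f^[i] w = w := Function.iterate_fixed hfw i
  have := abs_im_angleLift_le (hL.iterate isEmbedding_diskCoord.injective m) (hrev.iterate m) hσ
    (hs m) hno hw (hfwi m) (Finset.sum_eq_zero fun i _ => by rw [hs, hfwi, hLw]) hx
  simpa only [hs, Complex.im_sum, birkhoffSum] using this

variable {μ : Measure disk}

lemma measurePreserving_restrict_compl (hf : MeasurePreserving f μ μ)
    (hinj : Function.Injective f) {s : disk} (hfs : f s = s) :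
    MeasurePreserving f (μ.restrict {s}ᶜ) (μ.restrict {s}ᶜ) := by
  have hpre : f ⁻¹' {s}ᶜ = {s}ᶜ :=
    ext fun _ => not_congr ⟨fun e => hinj (e.trans hfs.symm), fun e => (congrArg f e).trans hfs⟩
  have := hf.restrict_preimage (measurableSet_singleton s).compl
  rwa [hpre] at this

lemma not_ae_restrict_angleAt_apply_eq [μ.IsOpenPosMeasure] (hL : IsAngleLift diskCoord f L)
    {s : disk} {pt : ℂ → disk} (hp : IsLogPolar s pt) {ζ : ℂ} (him : ζ.im ∈ Icc (-π) π)
    (hζ : liftedAngle L s pt ζ ∉ Icc (-π) π) :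
    ¬∀ᵐ x ∂μ.restrict {s}ᶜ, angleAt s (f x) = angleAt s x + (L s x).im := by
  obtain ⟨O, hO, hne, hOs, h⟩ :=
    hp.exists_isOpen_angleAt_add_im_mem hL isClosed_Icc.isOpen_compl him hζ
  exact not_ae_restrict_of_forall_not hO hne hOs fun x hx e =>
    h x hx (e ▸ Ioc_subset_Icc_self (angleAt_mem_Ioc s (f x)))

variable [IsFiniteMeasure μ]

lemma integrable_angleAt (s : disk) : Integrable (angleAt s) μ :=
  .of_bound (measurable_angleAt s).aestronglyMeasurable π
    (.of_forall fun _ => Complex.abs_arg_le_pi _)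

lemma measurable_im_angleLift (hL : IsAngleLift diskCoord f L) (s : disk) :
    Measurable fun x => (L s x).im :=
  measurable_of_continuousOn_compl_singleton s
    (Complex.continuous_im.comp_continuousOn (hL.continuousOn_right s))

lemma integrable_im_angleLift (hL : IsAngleLift diskCoord f L) (hrev : IsReversibleBy ID f)
    (hσ : σ ∈ Ioo (-1) 1) (hfs : f (axisPoint σ) = axisPoint σ)
    (hno : ∀ t ∈ Ioo σ 1, f (axisPoint t) ≠ axisPoint t) {w : disk} (hw : w ≠ axisPoint σ)
    (hfw : f w = w) (hLw : L (axisPoint σ) w = 0) :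
    Integrable (fun x => (L (axisPoint σ) x).im) (μ.restrict {axisPoint σ}ᶜ) :=
  .of_bound (measurable_im_angleLift hL _).aestronglyMeasurable (4 * π)
    (ae_restrict_of_forall_mem (measurableSet_singleton _).compl fun _ hx =>
      abs_im_angleLift_le hL hrev hσ hfs hno hw hfw hLw hx)

lemma setIntegral_im_angleLift_eq_zero (hL : IsAngleLift diskCoord f L) (hrev : IsReversibleBy ID f)
    (hf : MeasurePreserving f μ μ) (hσ : σ ∈ Ioo (-1) 1) (hfs : f (axisPoint σ) = axisPoint σ)
    (hno : ∀ m, Odd m → ∀ t ∈ Ioo σ 1, f^[m] (axisPoint t) ≠ axisPoint t) {w : disk}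
    (hw : w ≠ axisPoint σ) (hfw : f w = w) (hLw : L (axisPoint σ) w = 0) :
    ∫ x in {axisPoint σ}ᶜ, (L (axisPoint σ) x).im ∂μ = 0 := by
  refine integral_eq_zero_of_frequently_birkhoffSum_le
    (measurePreserving_restrict_compl hf (hL.injective isEmbedding_diskCoord.injective) hfs)
    (integrable_im_angleLift hL hrev hσ hfs (hno 1 odd_one) hw hfw hLw) (C := 4 * π) ?_
  exact Nat.frequently_odd.mono fun m hm =>
    ae_restrict_of_forall_mem (measurableSet_singleton _).compl fun _ hx =>
      abs_birkhoffSum_im_angleLift_le hL hrev hσ hfs (hno m hm) hw hfw hLw hx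

lemma le_of_coe_angle_eq_of_lt {a b : ℝ} (h : (a : Real.Angle) = b) (hlt : a < b + 2 * π) :
    a ≤ b := by
  obtain ⟨k, hk⟩ := Real.Angle.angle_eq_iff_two_pi_dvd_sub.1 h
  have hk1 : (k : ℝ) < 1 := by nlinarith [Real.pi_pos]
  have hk0 : (k : ℝ) ≤ 0 := by exact_mod_cast Int.lt_add_one_iff.1 (by exact_mod_cast hk1)
  nlinarith [Real.pi_pos]

lemma ae_restrict_angleAt_apply_eq (hL : IsAngleLift diskCoord f L)
    (hf : MeasurePreserving f μ μ) {s : disk} (hfs : f s = s)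
    (hφ : Integrable (fun x => (L s x).im) (μ.restrict {s}ᶜ))
    (h0 : ∫ x in {s}ᶜ, (L s x).im ∂μ = 0)
    (hbound : (∀ x ≠ s, -π < angleAt s x + (L s x).im) ∨ ∀ x ≠ s, angleAt s x + (L s x).im ≤ π) :
    ∀ᵐ x ∂μ.restrict {s}ᶜ, angleAt s (f x) = angleAt s x + (L s x).im := by
  have hν := measurePreserving_restrict_compl hf (hL.injective isEmbedding_diskCoord.injective) hfs
  have hθ := integrable_angleAt (μ := μ.restrict {s}ᶜ) s
  have hmem := angleAt_mem_Ioc s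
  have hae {p : disk → Prop} (h : ∀ x ≠ s, p x) : ∀ᵐ x ∂μ.restrict {s}ᶜ, p x :=
    ae_restrict_of_forall_mem (measurableSet_singleton s).compl h
  rcases hbound with h | h
  · refine ae_comp_eq_of_comp_le_add hν hθ hφ h0 (hae fun x hx => ?_)
    exact le_of_coe_angle_eq_of_lt (coe_angleAt_apply hL hfs hx)
      (by linarith [h x hx, (hmem (f x)).2])
  · have hle : ∀ᵐ x ∂μ.restrict {s}ᶜ, -angleAt s (f x) ≤ -angleAt s x + -(L s x).im := by
      refine hae fun x hx => ?_
      rw [← neg_add, neg_le_neg_iff]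
      exact le_of_coe_angle_eq_of_lt (coe_angleAt_apply hL hfs hx).symm
        (by linarith [h x hx, (hmem (f x)).1])
    filter_upwards [ae_comp_eq_of_comp_le_add (θ := fun x => -angleAt s x) hν hθ.neg hφ.neg
      (by simp [integral_neg, h0]) hle] with x hx
    simpa only [Pi.neg_apply, ← neg_add, neg_inj] using hx

lemma IsAxisTurn.exists_liftedAngle_notMem_Icc {j : ℤ} (hturn : IsAxisTurn L σ j)
    (hj : j = 0 ∨ j = -1) (hσ : σ ∈ Ioo (-1) 1) {pt : ℂ → disk}
    (hp : IsLogPolar (axisPoint σ) pt) :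
    ∃ ζ : ℂ, ζ.im ∈ Icc (-π) π ∧ liftedAngle L (axisPoint σ) pt ζ ∉ Icc (-π) π := by
  have hπ := Real.pi_pos
  obtain ⟨t, ht⟩ := nonempty_Ioo.2 hσ.2
  obtain ⟨ζ, him, hζ⟩ := hp.exists_apply_eq_axisPoint hσ.1.le (Ioo_subset_Ioc_self ht)
  have hφ := hturn t ht
  have hlift : liftedAngle L (axisPoint σ) pt ζ = π + (L (axisPoint σ) (axisPoint t)).im := by
    rw [liftedAngle, him, hζ]
  rcases hj with rfl | rfl <;> push_cast at hφ
  · refine ⟨ζ, by simp [him, hπ.le], fun h => ?_⟩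
    linarith [h.2, hφ.1]
  · refine ⟨ζ - 2 * π * Complex.I, by simp [him, hπ.le, two_mul], fun h => ?_⟩
    rw [hp.liftedAngle_sub_two_pi_I] at h
    linarith [h.1, hφ.2]

variable [μ.IsOpenPosMeasure]

lemma eq_axisPoint_of_fixed_of_angleLift_eq_zero (hL : IsAngleLift diskCoord f L)
    (hrev : IsReversibleBy ID f) (hf : MeasurePreserving f μ μ) (hσ : σ ∈ Ioo (-1) 1)
    (hfs : f (axisPoint σ) = axisPoint σ)
    (hno : ∀ m, Odd m → ∀ t ∈ Ioo σ 1, f^[m] (axisPoint t) ≠ axisPoint t) {w : disk}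
    (hfw : f w = w) (hLw : L (axisPoint σ) w = 0) : w = axisPoint σ := by
  by_contra hw
  have hno1 := hno 1 odd_one
  obtain ⟨pt, hp⟩ := exists_isLogPolar (norm_diskCoord_axisPoint_lt_one hσ)
  obtain ⟨j, hj, hturn, hbound⟩ :=
    exists_isAxisTurn_angleAt_add_im_mem_Ioc hL hrev hσ hfs hno1 hw hfw hLw
  obtain ⟨ζ, him, hζ⟩ := hturn.exists_liftedAngle_notMem_Icc hj hσ hp
  refine not_ae_restrict_angleAt_apply_eq hL hp him hζ <|
    ae_restrict_angleAt_apply_eq hL hf hfs (integrable_im_angleLift hL hrev hσ hfs hno1 hw hfw hLw)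
      (setIntegral_im_angleLift_eq_zero hL hrev hf hσ hfs hno hw hfw hLw) ?_
  rcases hj with rfl | rfl
  · exact .inl fun x hx => by simpa using (hbound x hx).1
  · exact .inr fun x hx => by simpa using (hbound x hx).2

theorem eq_axisPoint_of_fixed (hL : IsAngleLift diskCoord f L) (hrev : IsReversibleBy ID f)
    (hf : MeasurePreserving f μ μ) (hσ : σ ∈ Ioo (-1) 1) (hfs : f (axisPoint σ) = axisPoint σ)
    (hno : ∀ m, Odd m → ∀ t ∈ Ioo σ 1, f^[m] (axisPoint t) ≠ axisPoint t) {w : disk}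
    (hfw : f w = w) : w = axisPoint σ := by
  by_contra hw
  obtain ⟨n, hn⟩ := Complex.exp_eq_one_iff.1
    (hL.exp_eq_one_of_fixed isEmbedding_diskCoord.injective (Ne.symm hw) hfs hfw)
  exact hw <| eq_axisPoint_of_fixed_of_angleLift_eq_zero (hL.sub_int_mul_two_pi_I n) hrev hf hσ hfs
    hno hfw (sub_eq_zero.2 hn)

end Uniqueness

section Dichotomy

theorem exists_isAngleLift_of_isotopicToId {f : disk ≃ₜ disk} (hiso : IsotopicToId f) :
    ∃ L, IsAngleLift diskCoord f L := by
  obtain ⟨H, hH, hhomeo, h0, h1⟩ := hiso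
  obtain ⟨L, hL⟩ := exists_isAngleLift_of_homotopy isEmbedding_diskCoord.continuous
    isEmbedding_diskCoord.injective ⟨H, hH⟩
    (fun t => by
      obtain ⟨e, he⟩ := hhomeo t
      rw [show (fun x => (⟨H, hH⟩ : C(unitInterval × disk, disk)) (t, x)) = e from funext he]
      exact e.injective) h0
  exact ⟨L, (funext h1 : (fun x => H (1, x)) = f) ▸ hL⟩

/-- The heights of the odd-periodic points of `f` on the open axis of `I`. -/
def oddPeriodicHeights (f : disk → disk) : Set ℝ :=
  {t ∈ Ioo (-1) 1 | ∃ k, Odd k ∧ f^[k] (axisPoint t) = axisPoint t}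

variable {f : disk → disk} {L : disk → disk → ℂ}

lemma infinite_symmetric_of_infinite_oddPeriodicHeights (h : (oddPeriodicHeights f).Infinite) :
    {z : disk | (z : ℝ × ℝ) ∈ diskInt ∧ (∃ k : ℕ, Odd k ∧ 1 ≤ k ∧ f^[k] z = z) ∧
      (∃ l : ℕ, 1 ≤ l ∧ f^[l] z = ID z)}.Infinite := by
  refine (h.image (injOn_axisPoint.mono fun t ht => Ioo_subset_Icc_self ht.1)).mono ?_
  rintro _ ⟨t, ⟨ht, k, hk, e⟩, rfl⟩
  exact ⟨axisPoint_mem_diskInt ht, ⟨k, hk, hk.pos, e⟩, k, hk.pos, e.trans (ID_axisPoint t).symm⟩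

variable {μ : Measure disk} [IsFiniteMeasure μ] [μ.IsOpenPosMeasure]

lemma eq_axisPoint_of_iterate_eq_of_isGreatest (hL : IsAngleLift diskCoord f L)
    (hrev : IsReversibleBy ID f) (hf : MeasurePreserving f μ μ) {σ : ℝ}
    (hσ : IsGreatest (oddPeriodicHeights f) σ) {k : ℕ} (hk : Odd k) {w : disk} (hw : f^[k] w = w) :
    w = axisPoint σ := by
  obtain ⟨⟨hmem, p, hp, hσp⟩, hmax⟩ := hσ
  refine eq_axisPoint_of_fixed (hL.iterate isEmbedding_diskCoord.injective (k * p)) (hrev.iterate _)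
    (hf.iterate _) hmem (Function.IsPeriodicPt.const_mul hσp k) (fun m hm t ht e => ?_)
    (Function.IsPeriodicPt.mul_const hw p)
  rw [← Function.iterate_mul] at e
  exact ht.1.not_ge (hmax ⟨⟨hmem.1.trans ht.1, ht.2⟩, _, (hk.mul hp).mul hm, e⟩)

lemma exists_oddPeriodic_eq_singleton (hL : IsAngleLift diskCoord f L) (hrev : IsReversibleBy ID f)
    (hf : MeasurePreserving f μ μ) (hfin : (oddPeriodicHeights f).Finite) :
    ∃ z : disk, {w : disk | ∃ k : ℕ, Odd k ∧ 1 ≤ k ∧ f^[k] w = w} = {z} ∧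
      (z : ℝ × ℝ) ∈ diskInt ∧ f z = z ∧ ID z = z := by
  obtain ⟨t, ht, hft⟩ := exists_fixed_axisPoint_mem_Ioo hL hrev hf
  obtain ⟨σ, hσ⟩ := hfin.isCompact.exists_isGreatest ⟨t, ht, 1, odd_one, hft⟩
  have heq {k : ℕ} (hk : Odd k) {w : disk} (hw : f^[k] w = w) :=
    eq_axisPoint_of_iterate_eq_of_isGreatest hL hrev hf hσ hk hw
  refine ⟨axisPoint t, eq_singleton_iff_unique_mem.2 ⟨⟨1, odd_one, le_rfl, hft⟩, ?_⟩,
    axisPoint_mem_diskInt ht, hft, ID_axisPoint t⟩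
  rintro w ⟨k, hk, -, hw⟩
  exact (heq hk hw).trans (heq odd_one hft).symm

theorem dichotomy_odd_disk_general (f : disk ≃ₜ disk) (hrev : ∀ z : disk, f (ID z) = ID (f.symm z))
    (hf : MeasurePreserving f μ μ) (hiso : IsotopicToId f) :
    (∃ z : disk,
        {w : disk | ∃ k : ℕ, Odd k ∧ 1 ≤ k ∧ (⇑f)^[k] w = w} = {z} ∧
        (z : ℝ × ℝ) ∈ diskInt ∧ f z = z ∧ ID z = z) ∨
    {z : disk | (z : ℝ × ℝ) ∈ diskInt ∧
        (∃ k : ℕ, Odd k ∧ 1 ≤ k ∧ (⇑f)^[k] z = z) ∧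
        (∃ l : ℕ, 1 ≤ l ∧ (⇑f)^[l] z = ID z)}.Infinite := by
  obtain ⟨L, hL⟩ := exists_isAngleLift_of_isotopicToId hiso
  have hrev' : IsReversibleBy ID f := fun z => by rw [hrev, f.symm_apply_apply]
  rcases (oddPeriodicHeights f).finite_or_infinite with h | h
  · exact .inl (exists_oddPeriodic_eq_singleton hL hrev' hf h)
  · exact .inr (infinite_symmetric_of_infinite_oddPeriodicHeights h)

end Dichotomy

/-- **Theorem 1.3 (second part).** Every area preserving reversible homeomorphism
of the closed disk isotopic to the identity (orientation preserving) has either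
precisely one interior symmetric fixed point with no other odd-periodic points,
or infinitely many interior symmetric odd-periodic points. -/
theorem dichotomy_odd_disk
    (f : disk ≃ₜ disk)
    (hrev : ∀ z : disk, f (ID z) = ID (f.symm z))
    (harea : MeasurePreserving f
      ((volume : Measure (ℝ × ℝ)).comap (Subtype.val : disk → ℝ × ℝ))
      ((volume : Measure (ℝ × ℝ)).comap (Subtype.val : disk → ℝ × ℝ)))
    (hiso : IsotopicToId f) :
    (∃ z : disk,
        {w : disk | ∃ k : ℕ, Odd k ∧ 1 ≤ k ∧ (⇑f)^[k] w = w} = {z} ∧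
        (z : ℝ × ℝ) ∈ diskInt ∧ f z = z ∧ ID z = z) ∨
    {z : disk | (z : ℝ × ℝ) ∈ diskInt ∧
        (∃ k : ℕ, Odd k ∧ 1 ≤ k ∧ (⇑f)^[k] z = z) ∧
        (∃ l : ℕ, 1 ≤ l ∧ (⇑f)^[l] z = ID z)}.Infinite :=
  dichotomy_odd_disk_general f hrev harea hiso
end
end

section
/- Let f : A → A be a reversible homeomorphism of the closed annulus A which is isotopic to the identity and satisfies the boundary twist condition. Then on each of the two connected components Y₊ = {0} × [1,2] and Y₋ = {0} × [−2,−1] of Fix I_A there is an interior symmetric fixed point of f, i.e., a point z ∈ Y₊ ∩ Å (respectively z ∈ Y₋ ∩ Å) with f(z) = z. (No area preservation is assumed.) -/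
open MeasureTheory Set

noncomputable section

/-- The strip `S = ℝ × [0,1]`. -/
def strip : Set (ℝ × ℝ) := {p | 0 ≤ p.2 ∧ p.2 ≤ 1}

/-- The component `Y₊ = {0} × [1,2]` of `Fix I_A`. -/
def Yplus : Set (ℝ × ℝ) := {p | p.1 = 0 ∧ 1 ≤ p.2 ∧ p.2 ≤ 2}

/-- The component `Y₋ = {0} × [−2,−1]` of `Fix I_A`. -/
def Yminus : Set (ℝ × ℝ) := {p | p.1 = 0 ∧ -2 ≤ p.2 ∧ p.2 ≤ -1}

lemma cover_mem_annulus {w : ℝ × ℝ} (hw : w ∈ strip) :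
    ((1 + w.2) * Real.sin w.1, (1 + w.2) * Real.cos w.1) ∈ annulus := by
  obtain ⟨h0, h1⟩ := hw
  have key : enorm2 ((1 + w.2) * Real.sin w.1, (1 + w.2) * Real.cos w.1) = 1 + w.2 := by
    have hsq : ((1 + w.2) * Real.sin w.1) ^ 2 + ((1 + w.2) * Real.cos w.1) ^ 2
        = (1 + w.2) ^ 2 := by
      nlinarith [Real.sin_sq_add_cos_sq w.1]
    simp only [enorm2]
    rw [hsq, Real.sqrt_sq (by linarith)]
  constructor <;> rw [key] <;> linarith

/-- The covering map `π : S → A`, `π(x,y) = ((1+y)·sin x, (1+y)·cos x)`. -/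
def covA : strip → annulus :=
  fun w => ⟨((1 + (w : ℝ × ℝ).2) * Real.sin (w : ℝ × ℝ).1,
             (1 + (w : ℝ × ℝ).2) * Real.cos (w : ℝ × ℝ).1), cover_mem_annulus w.2⟩

lemma mem_strip_bot (x : ℝ) : ((x, (0:ℝ)) : ℝ × ℝ) ∈ strip := by
  constructor <;> norm_num

lemma mem_strip_top (x : ℝ) : ((x, (1:ℝ)) : ℝ × ℝ) ∈ strip := by
  constructor <;> norm_num

/-!
Reversibility says that `f ∘ I_A` is an involution. For `c = 0` or `c = π` it lifts to `G = F ∘ R`,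
where `R` is the reflection of the strip about the line `x = c`. The map `G ∘ G` is a translation
commuting with `G`, and the twist makes it trivial, since `x + G₁(x, 0)` is bounded above. So `G` is
an involution, and a fixed point of `G` on the line `x = c` covers a fixed point of `f` on the
corresponding component of `Fix I_A`.

The involution preserves both boundary lines, because deleting a point of the strip leaves a
contractible set exactly when the point lies on the boundary. It therefore has a fixed point on each
of them, which by the twist lies to the left of `x = c` on the bottom and to the right on the top.
Suppose there is none on `x = c`. The displacement `w - G w`, viewed as a complex number and frozen
along horizontals to the right of `x = c`, is a function `a` with `a ∘ G = -a` near its zeros, and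
its zeros are the fixed points to the left of `x = c`. Then `E = (a ∘ G) / a`, extended by `-1` to
these zeros, is continuous with `E * (E ∘ G) = 1`. As the strip is contractible, `E = exp l` with
`l + l ∘ G` constant, so `E` takes the same value at all fixed points of `G`. But it is `-1` at
those on the left and `1` at those on the right.
-/

open Function Topology

/-! ## Logarithms on contractible spaces -/

section Contractible

lemma eq_of_exp_comp_eq {X : Type*} [TopologicalSpace X] [PreconnectedSpace X] {l : X → ℂ}
    (hl : Continuous l) (h : ∀ x y, Complex.exp (l x) = Complex.exp (l y)) (x y : X) :
    l x = l y :=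
  Complex.isCoveringMap_exp.const_of_comp hl (fun x y => Subtype.ext (h x y)) x y

variable {X : Type*} [TopologicalSpace X] [ContractibleSpace X]

theorem exists_continuous_exp_eq {f : X → ℂ} (hf : Continuous f) (hne : ∀ x, f x ≠ 0) :
    ∃ l : X → ℂ, Continuous l ∧ ∀ x, Complex.exp (l x) = f x := by
  obtain ⟨x₀, ⟨contr⟩⟩ := id_nullhomotopic X
  let H : C(unitInterval × X, {z : ℂ // z ≠ 0}) :=
    ContinuousMap.comp ⟨fun x => ⟨f x, hne x⟩, by fun_prop⟩ contr.symm.toContinuousMap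
  have hzero (x : X) : H (0, x) = ⟨Complex.exp (ContinuousMap.const X (Complex.log (f x₀)) x),
      Complex.exp_ne_zero _⟩ :=
    Subtype.ext (by simp [H, Complex.exp_log (hne x₀)])
  refine ⟨fun x => Complex.isCoveringMap_exp.liftHomotopy H _ hzero (1, x), by fun_prop,
    fun x => ?_⟩
  have hlift := congr_fun (Complex.isCoveringMap_exp.liftHomotopy_lifts H _ hzero) (1, x)
  simpa [H] using congrArg Subtype.val hlift

theorem ne_of_lifts_circleMap {f : X → ℂ} (hf : Continuous f) {c : ℂ} (hfc : ∀ x, f x ≠ c)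
    {R : ℝ} {γ : ℝ → X} (hγ : Continuous γ) (hlift : ∀ t, f (γ t) = circleMap c R t) :
    γ (2 * Real.pi) ≠ γ 0 := by
  intro hloop
  obtain ⟨l, hl, hexp⟩ := exists_continuous_exp_eq (f := fun x => f x - c) (by fun_prop)
    fun x => sub_ne_zero.2 (hfc x)
  have hconst (t : ℝ) : Complex.exp (l (γ t) - t * Complex.I) = R := by
    rw [Complex.exp_sub, hexp, hlift, circleMap_sub_center, circleMap_zero,
      mul_div_cancel_right₀ _ (Complex.exp_ne_zero _)]
  have hwind := eq_of_exp_comp_eq (l := fun t : ℝ => l (γ t) - t * Complex.I) (by fun_prop)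
    (fun s t => (hconst s).trans (hconst t).symm) (2 * Real.pi) 0
  simp [hloop, Real.pi_ne_zero] at hwind

theorem notMem_interior_of_contractibleSpace_diff {s t : Set (ℝ × ℝ)} (e : s ≃ₜ t) {p : s}
    [ContractibleSpace ↥(s \ {p.1})] : (e p).1 ∉ interior t := by
  intro hp
  let κ := Complex.equivRealProdCLM
  obtain ⟨r, hr, hball⟩ : ∃ r > 0, Metric.closedBall (κ.symm (e p)) r ⊆ κ ⁻¹' t :=
    Metric.nhds_basis_closedBall.mem_iff.1
      (κ.continuous.continuousAt.preimage_mem_nhds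
        (by simpa using mem_interior_iff_mem_nhds.1 hp))
  let circle (u : ℝ) : t :=
    ⟨κ (circleMap (κ.symm (e p)) r u), hball (circleMap_mem_closedBall _ hr.le u)⟩
  have hne (u : ℝ) : e.symm (circle u) ≠ p := by
    intro h
    have hcenter : circleMap (κ.symm (e p)) r u = κ.symm (e p) := by
      simpa [circle] using congrArg (fun q => κ.symm (e q)) h
    exact circleMap_ne_center hr.ne' hcenter
  refine ne_of_lifts_circleMap (X := ↥(s \ {p.1})) (c := κ.symm (e p)) (R := r)
    (f := fun q => κ.symm (e ⟨q, q.2.1⟩))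
    (γ := fun u => ⟨e.symm (circle u), (e.symm (circle u)).2, fun h => hne u (Subtype.ext h)⟩)
    (by fun_prop) (fun q h => ?_) (by fun_prop) (fun u => ?_) ?_
  · exact q.2.2 (congrArg Subtype.val (e.injective (Subtype.ext (κ.symm.injective h))))
  · simp [circle]
  · simp [circle, circleMap]

/-! ## Fixed points of involutions -/

lemma eq_of_isFixedPt_of_mul_comp_eq_one {G : X → X} (hG : Continuous G) {E : X → ℂ}
    (hE : Continuous E) (hmul : ∀ x, E x * E (G x) = 1) {p q : X} (hp : IsFixedPt G p)
    (hq : IsFixedPt G q) : E p = E q := by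
  obtain ⟨l, hl, hexp⟩ := exists_continuous_exp_eq hE fun x => left_ne_zero_of_mul_eq_one (hmul x)
  have hsum := eq_of_exp_comp_eq (l := fun x => l x + l (G x)) (by fun_prop)
    (fun x y => by simp only [Complex.exp_add, hexp, hmul]) p q
  simp only [hp.eq, hq.eq] at hsum
  rw [← hexp, ← hexp, show l p = l q by linear_combination hsum / 2]

open Classical in
theorem eq_zero_of_isFixedPt_of_odd_near_zeros {G : X → X} (hG : Continuous G)
    (hinv : Involutive G) {a : X → ℂ} (ha : Continuous a)
    (hodd : ∀ x, a x = 0 → ∀ᶠ y in 𝓝 x, a (G y) = -a y) {p q : X} (hp : IsFixedPt G p)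
    (hap : a p = 0) (hq : IsFixedPt G q) : a q = 0 := by
  by_contra haq
  -- Continuous because `a ∘ G / a` is `-1` near the zeros of `a`; it is `1` at `q`.
  let E (x : X) : ℂ := if a x = 0 then -1 else a (G x) / a x
  have hzero {x : X} (hx : a x = 0) : a (G x) = 0 := by
    rw [(hodd x hx).self_of_nhds, hx, neg_zero]
  have hzero_iff (x : X) : a (G x) = 0 ↔ a x = 0 := ⟨fun h => hinv x ▸ hzero h, hzero⟩
  have hmul (x : X) : E x * E (G x) = 1 := by
    by_cases hx : a x = 0
    · simp [E, hzero_iff, hx]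
    · have hGx := mt (hzero_iff x).1 hx
      simp only [E, hzero_iff, hx, if_false, hinv x]
      field_simp
  have hE : Continuous E := by
    refine continuous_iff_continuousAt.2 fun x => ?_
    by_cases hx : a x = 0
    · refine (continuousAt_const (y := (-1 : ℂ))).congr ?_
      filter_upwards [hodd x hx] with y hy
      by_cases hy0 : a y = 0
      · simp [E, hy0]
      · simp [E, hy0, hy]
    · refine ((ha.comp hG).continuousAt.div ha.continuousAt hx).congr ?_
      filter_upwards [ha.continuousAt.eventually_ne hx] with y hy
      simp [E, hy]
  have hpq := eq_of_isFixedPt_of_mul_comp_eq_one hG hE hmul hp hq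
  norm_num [E, hap, haq, hq.eq] at hpq

theorem isFixedPt_of_eventuallyEq_id {ι : X → ℂ} (hι : Continuous ι) (hinj : Injective ι)
    {G ρ : X → X} (hG : Continuous G) (hinv : Involutive G) (hρ : Continuous ρ)
    (hid : ∀ x, IsFixedPt G (ρ x) → ρ =ᶠ[𝓝 x] id) {p q : X} (hp : IsFixedPt G p)
    (hρp : IsFixedPt ρ p) (hq : IsFixedPt G q) : IsFixedPt ρ q := by
  let a (x : X) : ℂ := ι (ρ x) - ι (G (ρ x))
  have ha_iff (x : X) : a x = 0 ↔ IsFixedPt G (ρ x) := by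
    rw [sub_eq_zero, hinj.eq_iff, eq_comm, IsFixedPt]
  have hodd (x : X) (hx : a x = 0) : ∀ᶠ y in 𝓝 x, a (G y) = -a y := by
    have hρ_id := hid x ((ha_iff x).1 hx)
    have hGx : G x = x := by simpa [hρ_id.self_of_nhds, IsFixedPt] using (ha_iff x).1 hx
    have hGρ_id : ∀ᶠ y in 𝓝 x, ρ (G y) = G y := hG.continuousAt.eventually (hGx.symm ▸ hρ_id)
    filter_upwards [hρ_id, hGρ_id] with y hy hGy
    simp [a, hGy, hinv y, show ρ y = y from hy]
  have haq := eq_zero_of_isFixedPt_of_odd_near_zeros hG hinv (by fun_prop) hodd hp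
    ((ha_iff p).2 (hρp.symm ▸ hp)) hq
  exact (hid q ((ha_iff q).1 haq)).self_of_nhds

end Contractible

lemma exists_isFixedPt_of_involutive {α : Type*} [LinearOrder α] [TopologicalSpace α]
    [OrderClosedTopology α] [PreconnectedSpace α] [Nonempty α] {g : α → α} (hg : Continuous g)
    (hinv : Involutive g) : ∃ x, IsFixedPt g x := by
  obtain ⟨x⟩ := ‹Nonempty α›
  rcases le_total (g x) x with h | h
  · exact intermediate_value_univ₂ (b := g x) hg continuous_id h (by simpa [hinv x] using h)
  · exact intermediate_value_univ₂ (a := g x) hg continuous_id (by simpa [hinv x] using h) h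

/-! ## Involutions of the strip -/

lemma strip_eq_prod : strip = univ ×ˢ Icc 0 1 := by
  ext
  simp [strip]

lemma interior_strip : interior strip = univ ×ˢ Ioo 0 1 := by
  rw [strip_eq_prod, interior_prod_eq, interior_univ, interior_Icc]

lemma convex_strip : Convex ℝ strip := by
  rw [strip_eq_prod]
  exact convex_univ.prod (convex_Icc 0 1)

instance : ContractibleSpace strip := convex_strip.contractibleSpace ⟨_, mem_strip_bot 0⟩

lemma starConvex_strip_diff_singleton {p : ℝ × ℝ} (hp : p.2 = 0 ∨ p.2 = 1) :
    StarConvex ℝ (p.1, 1 - p.2) (strip \ {p}) := by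
  have hopp : (p.1, 1 - p.2) ∈ strip := by rcases hp with h | h <;> simp [strip, h]
  rintro q ⟨hq, hqp⟩ a b ha hb hab
  refine ⟨convex_strip hopp hq ha hb hab, fun heq => hqp ?_⟩
  obtain ⟨hfst, hsnd⟩ := Prod.ext_iff.1 (mem_singleton_iff.1 heq)
  simp only [Prod.fst_add, Prod.smul_fst, Prod.snd_add, Prod.smul_snd, smul_eq_mul] at hfst hsnd
  obtain rfl : a = 0 := by
    rcases hp with h | h <;> rw [h] at hsnd <;> nlinarith [hq.1, hq.2]
  obtain rfl : b = 1 := by linarith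
  exact Prod.ext (by simpa using hfst) (by simpa using hsnd)

theorem homeomorph_strip_snd_eq_zero_or_one (e : strip ≃ₜ strip) {w : strip}
    (hw : w.1.2 = 0 ∨ w.1.2 = 1) : (e w).1.2 = 0 ∨ (e w).1.2 = 1 := by
  have hopp : (w.1.1, 1 - w.1.2) ∈ strip \ {w.1} := by
    rcases hw with h | h <;> simp [strip, h, Prod.ext_iff]
  have := (starConvex_strip_diff_singleton hw).contractibleSpace ⟨_, hopp⟩
  have hint := notMem_interior_of_contractibleSpace_diff e (p := w)
  rw [interior_strip] at hint
  by_contra! h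
  exact hint ⟨mem_univ _, (e w).2.1.lt_of_ne' h.1, (e w).2.2.lt_of_ne h.2⟩

section Involution

variable {G : strip → strip} (hG : Continuous G) (hinv : Involutive G)

include hG hinv

lemma exists_isFixedPt_of_mapsTo_line {y : ℝ} (hy : y ∈ Icc 0 1)
    (hline : ∀ w : strip, w.1.2 = y → (G w).1.2 = y) : ∃ w : strip, w.1.2 = y ∧ IsFixedPt G w := by
  let line (x : ℝ) : strip := ⟨(x, y), hy⟩
  have hG_line (x : ℝ) : G (line x) = line (G (line x)).1.1 :=
    Subtype.ext (Prod.ext rfl (hline (line x) rfl))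
  have hinv_line : Involutive fun x => (G (line x)).1.1 := fun x => by
    simp only [← hG_line, hinv (line x), line]
  have hcont : Continuous fun x => (G (line x)).1.1 := by fun_prop
  obtain ⟨x, hx⟩ := exists_isFixedPt_of_involutive hcont hinv_line
  exact ⟨line x, rfl, (hG_line x).trans (congrArg line hx)⟩

lemma exists_isFixedPt_fst_eq {c : ℝ} {p q : strip} (hp : IsFixedPt G p) (hpc : p.1.1 < c)
    (hq : IsFixedPt G q) (hcq : c < q.1.1) : ∃ w : strip, w.1.1 = c ∧ IsFixedPt G w := by
  by_contra! hno
  let clamp (w : strip) : strip := ⟨(min w.1.1 c, w.1.2), w.2⟩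
  have hclamp {w : strip} (hw : w.1.1 ≤ c) : clamp w = w :=
    Subtype.ext (Prod.ext (min_eq_left hw) rfl)
  have hid (w : strip) (hw : IsFixedPt G (clamp w)) : clamp =ᶠ[𝓝 w] id := by
    have hwc : w.1.1 < c := by
      by_contra! h
      exact hno _ (min_eq_right h) hw
    filter_upwards [(by fun_prop : Continuous fun z : strip => z.1.1).continuousAt.eventually_lt
      continuousAt_const hwc] with z hz using hclamp hz.le
  have hq_clamp : IsFixedPt clamp q :=
    isFixedPt_of_eventuallyEq_id (ι := fun w => Complex.equivRealProdCLM.symm w.1) (by fun_prop)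
      (fun v w h => Subtype.ext (Complex.equivRealProdCLM.symm.injective h)) hG hinv (by fun_prop)
      hid hp (hclamp hpc.le) hq
  have hqc : min q.1.1 c = q.1.1 := congrArg (fun w : strip => w.1.1) hq_clamp
  exact hcq.not_ge (min_eq_left_iff.1 hqc)

theorem exists_isFixedPt_fst_eq_of_twist {c : ℝ}
    (hbot : ∀ w : strip, w.1.2 = 0 → w.1.1 + (G w).1.1 < 2 * c)
    (htop : ∀ w : strip, w.1.2 = 1 → 2 * c < w.1.1 + (G w).1.1) :
    ∃ w : strip, w.1.1 = c ∧ w.1.2 ∈ Ioo 0 1 ∧ IsFixedPt G w := by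
  let e : strip ≃ₜ strip := ⟨hinv.toPerm, hG, hG⟩
  have hline_bot (w : strip) (hw : w.1.2 = 0) : (G w).1.2 = 0 := by
    refine (homeomorph_strip_snd_eq_zero_or_one e (.inl hw)).resolve_right fun h => ?_
    linarith [hbot w hw, hinv w ▸ htop (G w) h]
  have hline_top (w : strip) (hw : w.1.2 = 1) : (G w).1.2 = 1 := by
    refine (homeomorph_strip_snd_eq_zero_or_one e (.inr hw)).resolve_left fun h => ?_
    linarith [htop w hw, hinv w ▸ hbot (G w) h]
  have hbot_fix {w : strip} (hw : IsFixedPt G w) (h : w.1.2 = 0) : w.1.1 < c := by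
    linarith [hw.eq ▸ hbot w h]
  have htop_fix {w : strip} (hw : IsFixedPt G w) (h : w.1.2 = 1) : c < w.1.1 := by
    linarith [hw.eq ▸ htop w h]
  obtain ⟨p, hp0, hp⟩ := exists_isFixedPt_of_mapsTo_line hG hinv (by simp) hline_bot
  obtain ⟨q, hq1, hq⟩ := exists_isFixedPt_of_mapsTo_line hG hinv (by simp) hline_top
  obtain ⟨w, hwc, hw⟩ := exists_isFixedPt_fst_eq hG hinv hp (hbot_fix hp hp0) hq (htop_fix hq hq1)
  exact ⟨w, hwc, ⟨w.2.1.lt_of_ne' fun h => (hbot_fix hw h).ne hwc,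
    w.2.2.lt_of_ne fun h => (htop_fix hw h).ne' hwc⟩, hw⟩

end Involution

/-! ## Lifts to the strip -/

lemma enorm2_covA (w : strip) : enorm2 (covA w) = 1 + w.1.2 := by
  have hsq : ((1 + w.1.2) * Real.sin w.1.1) ^ 2 + ((1 + w.1.2) * Real.cos w.1.1) ^ 2
      = (1 + w.1.2) ^ 2 := by
    linear_combination (1 + w.1.2) ^ 2 * Real.sin_sq_add_cos_sq w.1.1
  rw [enorm2, covA, hsq, Real.sqrt_sq (by linarith [w.2.1])]

lemma covA_mem_annulusInt {w : strip} (hw : w.1.2 ∈ Ioo 0 1) : (covA w).1 ∈ annulusInt := by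
  constructor <;> rw [enorm2_covA] <;> linarith [hw.1, hw.2]

lemma angle_eq_and_snd_eq_of_covA_eq {v w : strip} (h : covA v = covA w) :
    (v.1.1 : Real.Angle) = w.1.1 ∧ v.1.2 = w.1.2 := by
  have hsnd : v.1.2 = w.1.2 := by simpa [enorm2_covA] using congrArg (enorm2 ·.1) h
  have hpos : 1 + w.1.2 ≠ 0 := by linarith [w.2.1]
  obtain ⟨hsin, hcos⟩ := Prod.ext_iff.1 (congrArg Subtype.val h)
  simp only [covA, hsnd] at hsin hcos
  exact ⟨Real.Angle.cos_sin_inj (mul_left_cancel₀ hpos hcos) (mul_left_cancel₀ hpos hsin), hsnd⟩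

theorem exists_eq_add_of_covA_comp_eq {g : strip → strip} (hg : Continuous g)
    (h : ∀ w, covA (g w) = covA w) : ∃ a : ℝ, ∀ w, (g w).1 = (w.1.1 + a, w.1.2) := by
  have hangle (w : strip) : (((g w).1.1 - w.1.1 : ℝ) : Real.Angle) = 0 := by
    rw [Real.Angle.coe_sub, (angle_eq_and_snd_eq_of_covA_eq (h w)).1, sub_self]
  have hconst := (AddCircle.isCoveringMap_coe (2 * Real.pi)).const_of_comp
    (by fun_prop : Continuous fun w : strip => (g w).1.1 - w.1.1)
    fun v w => (hangle v).trans (hangle w).symm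
  let origin : strip := ⟨(0, 0), mem_strip_bot 0⟩
  refine ⟨(g origin).1.1 - origin.1.1, fun w =>
    Prod.ext ?_ (angle_eq_and_snd_eq_of_covA_eq (h w)).2⟩
  linarith [hconst w origin]

lemma eq_zero_of_add_map_lt {α : Type*} [AddCommGroup α] [LinearOrder α] [IsOrderedAddMonoid α]
    [Archimedean α] {a b : α} (g : AddConstMap α α a a) (hb : ∀ x, x + g x < b) : a = 0 := by
  by_contra ha
  obtain ⟨n, hn⟩ := Archimedean.arch (b - g 0) (abs_pos.2 ha)
  obtain ⟨m, hm⟩ : ∃ m : ℤ, m • a = n • |a| := by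
    rcases abs_choice a with h | h <;> rw [h]
    · exact ⟨n, natCast_zsmul a n⟩
    · exact ⟨-n, by rw [neg_zsmul, natCast_zsmul, smul_neg]⟩
  have hlt : n • |a| + (g 0 + n • |a|) < b := by
    rw [← hm, ← AddConstMapClass.map_zsmul_const g m]
    exact hb (m • a)
  have hle : b ≤ g 0 + n • |a| := sub_le_iff_le_add'.1 hn
  exact (hlt.trans_le hle).not_ge (le_add_of_nonneg_left (nsmul_nonneg (abs_nonneg a) n))

theorem involutive_of_lifts_involutive {g : annulus → annulus} (hg : Involutive g)
    {G : strip → strip} (hG : Continuous G) (hlift : ∀ w, covA (G w) = g (covA w)) {b : ℝ}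
    (hbot : ∀ w : strip, w.1.2 = 0 → w.1.1 + (G w).1.1 < b) : Involutive G := by
  obtain ⟨a, ha⟩ := exists_eq_add_of_covA_comp_eq (hG.comp hG) fun w => by
    simp only [comp_apply, hlift, hg (covA w)]
  let bottom (x : ℝ) : strip := ⟨(x, 0), mem_strip_bot x⟩
  -- `G` commutes with `G ∘ G`, which is the translation by `a`.
  have hcomm (x : ℝ) : (G (bottom (x + a))).1.1 = (G (bottom x)).1.1 + a := by
    have hGG : bottom (x + a) = G (G (bottom x)) := Subtype.ext (ha (bottom x)).symm
    rw [hGG]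
    exact congrArg Prod.fst (ha (G (bottom x)))
  obtain rfl : a = 0 := eq_zero_of_add_map_lt ⟨fun x => (G (bottom x)).1.1, hcomm⟩
    fun x => hbot (bottom x) rfl
  exact fun w => Subtype.ext ((ha w).trans (by simp))

/-- The reflection `(x, y) ↦ (2c - x, y)` of the strip about its cross-section `x = c`; for
`c = 0` and `c = π` it is a lift of `I_A`, whose axis covers `Y₊` and `Y₋` respectively. -/
def stripRefl (c : ℝ) (w : strip) : strip := ⟨(2 * c - w.1.1, w.1.2), w.2⟩

lemma continuous_stripRefl (c : ℝ) : Continuous (stripRefl c) :=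
  Continuous.subtype_mk (by fun_prop) _

lemma stripRefl_eq_self {c : ℝ} {w : strip} (hw : w.1.1 = c) : stripRefl c w = w :=
  Subtype.ext (Prod.ext (by simp only [stripRefl]; linarith) rfl)

lemma covA_stripRefl {c : ℝ} (hc : Real.sin c = 0) (w : strip) :
    covA (stripRefl c w) = IA (covA w) := by
  have hsin : Real.sin (2 * c) = 0 := by simp [Real.sin_two_mul, hc]
  have hcos : Real.cos (2 * c) = 1 := by simp [Real.cos_two_mul', hc, Real.cos_sq']
  apply Subtype.ext
  simp [covA, stripRefl, IA, refl2, Real.sin_sub, Real.cos_sub, hsin, hcos]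

theorem exists_isFixedPt_covA_of_reversible {f : annulus → annulus} (hrev : Involutive (f ∘ IA))
    {F : strip → strip} (hF : Continuous F) (hlift : ∀ w, covA (F w) = f (covA w))
    (htwist : ∀ x, (F ⟨(x, 0), mem_strip_bot x⟩).1.1 < x ∧ x < (F ⟨(x, 1), mem_strip_top x⟩).1.1)
    {c : ℝ} (hc : Real.sin c = 0) :
    ∃ w : strip, w.1.1 = c ∧ w.1.2 ∈ Ioo 0 1 ∧ IsFixedPt f (covA w) := by
  let G := F ∘ stripRefl c
  have hG : Continuous G := hF.comp (continuous_stripRefl c)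
  have hbot (w : strip) (hw : w.1.2 = 0) : w.1.1 + (G w).1.1 < 2 * c := by
    obtain ⟨⟨x, y⟩, hxy⟩ := w
    obtain rfl : y = 0 := hw
    have hlt : (G ⟨(x, 0), hxy⟩).1.1 < 2 * c - x := (htwist (2 * c - x)).1
    linarith
  have htop (w : strip) (hw : w.1.2 = 1) : 2 * c < w.1.1 + (G w).1.1 := by
    obtain ⟨⟨x, y⟩, hxy⟩ := w
    obtain rfl : y = 1 := hw
    have hlt : 2 * c - x < (G ⟨(x, 1), hxy⟩).1.1 := (htwist (2 * c - x)).2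
    linarith
  have hinv : Involutive G := involutive_of_lifts_involutive hrev hG
    (fun w => by simp only [G, comp_apply, hlift, covA_stripRefl hc]) hbot
  obtain ⟨w, hwc, hw, hfix⟩ := exists_isFixedPt_fst_eq_of_twist hG hinv hbot htop
  have hFw : F w = w := by simpa only [G, IsFixedPt, comp_apply, stripRefl_eq_self hwc] using hfix
  exact ⟨w, hwc, hw, (hlift w).symm.trans (congrArg covA hFw)⟩

lemma involutive_IA : Involutive IA := fun z => Subtype.ext (by simp [IA, refl2])

lemma involutive_comp_IA {f : annulus ≃ₜ annulus} (hrev : ∀ z, f (IA z) = IA (f.symm z)) :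
    Involutive (f ∘ IA) := fun z => by
  simp only [comp_apply]
  rw [hrev (f (IA z)), f.symm_apply_apply, involutive_IA z]

theorem poincare_birkhoff_reversible_general
    (f : annulus → annulus)
    (hrev : Involutive (f ∘ IA))
    (F : strip → strip)
    (hF : Continuous F)
    (hlift : ∀ w : strip, covA (F w) = f (covA w))
    (htwist : ∀ x : ℝ,
      (F ⟨(x, 0), mem_strip_bot x⟩).1.1 < x ∧ x < (F ⟨(x, 1), mem_strip_top x⟩).1.1) :
    (∃ z : annulus, z.1 ∈ Yplus ∧ z.1 ∈ annulusInt ∧ f z = z) ∧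
    (∃ z : annulus, z.1 ∈ Yminus ∧ z.1 ∈ annulusInt ∧ f z = z) := by
  constructor
  · obtain ⟨w, hx, hy, hw⟩ :=
      exists_isFixedPt_covA_of_reversible hrev hF hlift htwist Real.sin_zero
    refine ⟨covA w, ⟨?_, ?_, ?_⟩, covA_mem_annulusInt hy, hw⟩ <;>
      simp only [covA, hx, Real.sin_zero, Real.cos_zero] <;> linarith [hy.1, hy.2]
  · obtain ⟨w, hx, hy, hw⟩ :=
      exists_isFixedPt_covA_of_reversible hrev hF hlift htwist Real.sin_pi
    refine ⟨covA w, ⟨?_, ?_, ?_⟩, covA_mem_annulusInt hy, hw⟩ <;>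
      simp only [covA, hx, Real.sin_pi, Real.cos_pi] <;> linarith [hy.1, hy.2]

/-- **Theorem 1.4 (Poincaré–Birkhoff for reversible maps).** A reversible
homeomorphism of the closed annulus isotopic to the identity satisfying the
boundary twist condition has an interior symmetric fixed point on each of the
two connected components of `Fix I_A`. No area preservation is assumed. -/
theorem poincare_birkhoff_reversible
    (f : annulus ≃ₜ annulus)
    (hrev : ∀ z : annulus, f (IA z) = IA (f.symm z))
    (hiso : IsotopicToId f)
    (F : strip ≃ₜ strip)
    (hlift : ∀ w : strip, covA (F w) = f (covA w))
    (htwist : ∀ x : ℝ,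
      ((F ⟨(x, 0), mem_strip_bot x⟩ : strip) : ℝ × ℝ).1 < x ∧
      x < ((F ⟨(x, 1), mem_strip_top x⟩ : strip) : ℝ × ℝ).1) :
    (∃ z : annulus, (z : ℝ × ℝ) ∈ Yplus ∧ (z : ℝ × ℝ) ∈ annulusInt ∧ f z = z) ∧
    (∃ z : annulus, (z : ℝ × ℝ) ∈ Yminus ∧ (z : ℝ × ℝ) ∈ annulusInt ∧ f z = z) := by
  exact poincare_birkhoff_reversible_general f (involutive_comp_IA hrev) F F.continuous hlift htwist
end
end
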